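/- arXiv:1207.4105 — 4 statements merged into one kernel-verified Lean document; each statement's English description precedes it below -/
import Mathlib

section
/- Let (V,q) be a quadratic form of even rank n = 2m > 2 over a field k of characteristic ≠ 2. Then the following are equivalent: (a) the radical of q has dimension at most 1; (b) the center Z(q) of the even Clifford algebra C₀(q) is a k-algebra of dimension 2; (c) C₀(q) is an Azumaya algebra over Z(q) of degree 2^{m−1}. -/
/-!
STATEMENT 7: Let (V,q) be a quadratic form of even rank n = 2m > 2 over a field k of
characteristic ≠ 2. TFAE:
(a) the radical of q has dimension at most 1;
(b) the center Z(q) of the even Clifford algebra C₀(q) is a k-algebra of dimension 2;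
(c) C₀(q) is an Azumaya algebra over Z(q) of degree 2^{m−1}.
-/

open scoped TensorProduct

/-- The natural map `A ⊗[S] Aᵐᵒᵖ →ₗ[S] End_S A`, `a ⊗ bᵒᵖ ↦ (x ↦ a * x * b)`. -/
noncomputable def mulLeftRightMap (S A : Type*) [CommRing S] [Ring A] [Algebra S A] :
    A ⊗[S] Aᵐᵒᵖ →ₗ[S] Module.End S A :=
  TensorProduct.lift <| LinearMap.mk₂ S
    (fun a b => (LinearMap.mulLeft S a) ∘ₗ (LinearMap.mulRight S b.unop))
    (fun a a' b => by ext x; simp [add_mul])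
    (fun c a b => by ext x; simp [smul_mul_assoc])
    (fun a b b' => by ext x; simp [mul_add])
    (fun c a b => by ext x; simp [mul_smul_comm])

/-- `A` is an Azumaya algebra of degree `d` over `S`: it is a faithful finitely generated
projective `S`-module of rank `d ^ 2` such that the enveloping map
`A ⊗[S] Aᵐᵒᵖ → End_S A` is an isomorphism. -/
def IsAzumayaOfDegree (S A : Type*) [CommRing S] [Ring A] [Algebra S A] (d : ℕ) : Prop :=
  Module.Finite S A ∧ Module.Projective S A ∧ FaithfulSMul S A ∧
    Function.Bijective (mulLeftRightMap S A) ∧ Module.rank S A = (d ^ 2 : ℕ)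

/-- The center of a (possibly noncommutative) algebra acts on it, making it an algebra
over the center. -/
noncomputable instance centerAlgebra (k A : Type*) [CommRing k] [Ring A] [Algebra k A] :
    Algebra (Subalgebra.center k A) A :=
  RingHom.toAlgebra' (Subalgebra.center k A).val.toRingHom
    (fun c x => ((Subalgebra.mem_center_iff.mp c.2) x).symm)

section Stage1

variable {k C : Type*} [Field k] [Ring C] [Algebra k C] {n : ℕ}

/-- ordered monomials -/
noncomputable def cliffE (g : Fin n → C) (S : Finset (Fin n)) : C :=
  ((List.finRange n).map (fun i => if i ∈ S then g i else 1)).prod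

theorem cliffE_empty (g : Fin n → C) : cliffE g ∅ = 1 := by
  simp [cliffE]

theorem cliff_list (g : Fin n → C) (a : Fin n → k)
    (hsq : ∀ i, g i * g i = a i • (1 : C)) (hanti : ∀ i j, i ≠ j → g i * g j = -(g j * g i))
    (S : Finset (Fin n)) (i : Fin n) (l : List (Fin n)) (hl : l.Nodup) (hi : i ∈ l) :
    ∃ u : k, (u = 1 ∨ u = -1) ∧
      g i * (l.map (fun i => if i ∈ S then g i else 1)).prod =
        (u * if i ∈ S then a i else 1) •
          (l.map (fun j => if j ∈ symmDiff S {i} then g j else 1)).prod := by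
  induction l with
  | nil => simp at hi
  | cons j l ih =>
    rw [List.nodup_cons] at hl
    by_cases hij : i = j
    · subst hij
      refine ⟨1, Or.inl rfl, ?_⟩
      have : (l.map (fun i => if i ∈ S then g i else 1)) =
          (l.map (fun j => if j ∈ symmDiff S {i} then g j else 1)) := by
        apply List.map_congr_left
        intro x hx
        have : x ≠ i := by rintro rfl; exact hl.1 hx
        simp [Finset.mem_symmDiff, this]
      rw [List.map_cons, List.prod_cons, List.map_cons, List.prod_cons, this, ← mul_assoc]
      by_cases h : i ∈ S
      · simp [h, Finset.mem_symmDiff, hsq]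
      · simp [h, Finset.mem_symmDiff]
    · obtain ⟨u, hu, h⟩ := ih hl.2 (by simpa [hij] using hi)
      have hji : j ≠ i := fun h => hij h.symm
      rw [List.map_cons, List.prod_cons, List.map_cons, List.prod_cons, ← mul_assoc]
      by_cases hj : j ∈ S
      · refine ⟨-u, by rcases hu with rfl | rfl <;> simp, ?_⟩
        have : j ∈ symmDiff S {i} := by simp [Finset.mem_symmDiff, hj, hji]
        rw [if_pos hj, if_pos this, hanti i j hij, neg_mul, mul_assoc, h, mul_smul_comm,
          neg_mul, neg_smul]
      · refine ⟨u, hu, ?_⟩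
        have : j ∉ symmDiff S {i} := by simp [Finset.mem_symmDiff, hj, hji]
        rw [if_neg hj, if_neg this, mul_one, one_mul, h]

theorem cliffE_gen_mul (g : Fin n → C) (a : Fin n → k)
    (hsq : ∀ i, g i * g i = a i • (1 : C)) (hanti : ∀ i j, i ≠ j → g i * g j = -(g j * g i))
    (S : Finset (Fin n)) (i : Fin n) :
    ∃ u : k, (u = 1 ∨ u = -1) ∧
      g i * cliffE g S = (u * if i ∈ S then a i else 1) • cliffE g (symmDiff S {i}) :=
  cliff_list g a hsq hanti S i _ (List.nodup_finRange n) (List.mem_finRange i)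

theorem cliffE_insert (g : Fin n → C) (a : Fin n → k)
    (hsq : ∀ i, g i * g i = a i • (1 : C)) (hanti : ∀ i j, i ≠ j → g i * g j = -(g j * g i))
    (S : Finset (Fin n)) (i : Fin n) (hi : i ∉ S) :
    ∃ u : k, u ≠ 0 ∧ cliffE g (insert i S) = u • (g i * cliffE g S) := by
  obtain ⟨u, hu, h⟩ := cliffE_gen_mul g a hsq hanti S i
  have h2 : symmDiff S {i} = insert i S := by
    ext x; simp only [Finset.mem_symmDiff, Finset.mem_singleton, Finset.mem_insert]
    grind
  rw [if_neg hi, h2, mul_one] at h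
  refine ⟨u, by rcases hu with rfl | rfl <;> simp, ?_⟩
  rw [h, smul_smul]
  rcases hu with rfl | rfl <;> simp

theorem cliffE_mul (g : Fin n → C) (a : Fin n → k)
    (hsq : ∀ i, g i * g i = a i • (1 : C)) (hanti : ∀ i j, i ≠ j → g i * g j = -(g j * g i))
    (S T : Finset (Fin n)) :
    ∃ c : k, (c ≠ 0 ↔ ∀ i ∈ S ∩ T, a i ≠ 0) ∧
      cliffE g S * cliffE g T = c • cliffE g (symmDiff S T) := by
  induction S using Finset.induction_on with
  | empty =>
    have h : symmDiff ∅ T = T := by ext x; simp [Finset.mem_symmDiff]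
    exact ⟨1, by simp, by simp [cliffE_empty, h]⟩
  | insert i S hi ih =>
    obtain ⟨c, hc, h⟩ := ih
    obtain ⟨u, hu, h1⟩ := cliffE_insert g a hsq hanti S i hi
    obtain ⟨v, hv, h2⟩ := cliffE_gen_mul g a hsq hanti (symmDiff S T) i
    have hv0 : v ≠ 0 := by rcases hv with rfl | rfl <;> simp
    refine ⟨u * c * (v * if i ∈ symmDiff S T then a i else 1), ?_, ?_⟩
    · have : i ∈ symmDiff S T ↔ i ∈ T := by simp [Finset.mem_symmDiff, hi]
      simp only [this]
      by_cases hT : i ∈ T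
      · rw [Finset.insert_inter_of_mem hT]
        simp [hT, hu, hv0] at *
        grind
      · rw [Finset.insert_inter_of_notMem hT]
        simp [hT, hu, hv0] at *
        grind
    · have : symmDiff (symmDiff S T) {i} = symmDiff (insert i S) T := by
        ext x; simp only [Finset.mem_symmDiff, Finset.mem_singleton, Finset.mem_insert]
        grind
      rw [h1, smul_mul_assoc, mul_assoc, h, mul_smul_comm, h2, this, smul_smul, smul_smul]

theorem cliffE_comm_gen (g : Fin n → C) (a : Fin n → k)
    (hsq : ∀ i, g i * g i = a i • (1 : C)) (hanti : ∀ i j, i ≠ j → g i * g j = -(g j * g i))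
    (S : Finset (Fin n)) (i : Fin n) :
    cliffE g S * g i = (∏ j ∈ S, if j = i then (1 : k) else -1) • (g i * cliffE g S) := by
  induction S using Finset.induction_on with
  | empty => simp [cliffE_empty]
  | insert j S hj ih =>
    obtain ⟨u, hu, h1⟩ := cliffE_insert g a hsq hanti S j hj
    rw [Finset.prod_insert hj, h1, smul_mul_assoc, mul_assoc, ih, mul_smul_comm, mul_smul_comm]
    by_cases h : j = i
    · subst h
      simp [smul_smul, mul_comm]
    · rw [if_neg h, ← mul_assoc, hanti j i h, neg_mul, mul_assoc, neg_mul, one_mul, smul_neg,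
        smul_smul, smul_neg, smul_smul, neg_mul, neg_smul, mul_comm]

theorem cliffE_comm (g : Fin n → C) (a : Fin n → k)
    (hsq : ∀ i, g i * g i = a i • (1 : C)) (hanti : ∀ i j, i ≠ j → g i * g j = -(g j * g i))
    (S T : Finset (Fin n)) :
    cliffE g S * cliffE g T =
      (∏ i ∈ T, ∏ j ∈ S, if j = i then (1 : k) else -1) • (cliffE g T * cliffE g S) := by
  induction T using Finset.induction_on with
  | empty => simp [cliffE_empty]
  | insert i T hi ih =>
    obtain ⟨u, hu, h1⟩ := cliffE_insert g a hsq hanti T i hi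
    rw [Finset.prod_insert hi, h1, mul_smul_comm, ← mul_assoc, cliffE_comm_gen g a hsq hanti,
      smul_mul_assoc, mul_assoc, ih]
    simp only [mul_smul_comm, smul_mul_assoc, smul_smul, mul_assoc]
    congr 1
    ring

theorem prod_sign_even (S : Finset (Fin n)) (hS : Even S.card) (i : Fin n) :
    (∏ j ∈ S, if j = i then (1 : k) else -1) = if i ∈ S then -1 else 1 := by
  by_cases h : i ∈ S
  · rw [if_pos h, ← Finset.mul_prod_erase S _ h, if_pos rfl, one_mul]
    rw [Finset.prod_congr rfl (g := fun _ => (-1 : k))]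
    · rw [Finset.prod_const, Finset.card_erase_of_mem h]
      apply Odd.neg_one_pow
      have : 0 < S.card := Finset.card_pos.mpr ⟨i, h⟩
      exact Nat.Even.sub_odd this hS odd_one
    · intro x hx
      rw [if_neg (Finset.ne_of_mem_erase hx)]
  · rw [if_neg h, Finset.prod_congr rfl (g := fun _ => (-1 : k))]
    · rw [Finset.prod_const, hS.neg_one_pow]
    · intro x hx
      rw [if_neg]; rintro rfl; exact h hx

theorem cliffE_comm_even (g : Fin n → C) (a : Fin n → k)
    (hsq : ∀ i, g i * g i = a i • (1 : C)) (hanti : ∀ i j, i ≠ j → g i * g j = -(g j * g i))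
    (S T : Finset (Fin n)) (hS : Even S.card) :
    cliffE g S * cliffE g T =
      (∏ i ∈ T, if i ∈ S then (-1 : k) else 1) • (cliffE g T * cliffE g S) := by
  rw [cliffE_comm g a hsq hanti]
  simp only [prod_sign_even S hS]

end Stage1

theorem even_card_symmDiff {n : ℕ} (S T : Finset (Fin n)) :
    ((symmDiff S T).card : ZMod 2) = S.card + T.card := by
  have h1 := Finset.card_sdiff_add_card_inter S T
  have h2 := Finset.card_sdiff_add_card_inter T S
  have h3 : (symmDiff S T).card = (S \ T).card + (T \ S).card := by
    rw [symmDiff, Finset.sup_eq_union, Finset.card_union_of_disjoint]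
    exact disjoint_sdiff_sdiff
  rw [Finset.inter_comm] at h2
  rw [h3, ← h1, ← h2]
  push_cast
  have : (((S ∩ T).card : ZMod 2)) + (S ∩ T).card = 0 := CharTwo.add_self_eq_zero _
  linear_combination -this

section StageOneB
variable {k V : Type*} [Field k] [Invertible (2 : k)]
    [AddCommGroup V] [Module k V] {n : ℕ}

theorem cliff_gen_mem (q : QuadraticForm k V) (v : Module.Basis (Fin n) k V)
    (hv : ∀ i j, i ≠ j → QuadraticMap.polar q (v i) (v j) = 0)
    (p : ZMod 2) (w : V) (x : CliffordAlgebra q)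
    (hx : x ∈ Submodule.span k
      (cliffE (fun i => CliffordAlgebra.ι q (v i)) '' {S | (S.card : ZMod 2) = p})) :
    CliffordAlgebra.ι q w * x ∈ Submodule.span k
      (cliffE (fun i => CliffordAlgebra.ι q (v i)) '' {S | (S.card : ZMod 2) = p + 1}) := by
  set g := fun i => CliffordAlgebra.ι q (v i) with hg
  have hsq : ∀ i, g i * g i = q (v i) • (1 : CliffordAlgebra q) := by
    intro i; rw [hg]; simp only [CliffordAlgebra.ι_sq_scalar]; rw [Algebra.algebraMap_eq_smul_one]
  have hanti : ∀ i j, i ≠ j → g i * g j = -(g j * g i) := by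
    intro i j hij
    have := CliffordAlgebra.ι_mul_ι_comm (Q := q) (v i) (v j)
    rw [hv i j hij, map_zero, zero_sub] at this
    exact this
  induction hx using Submodule.span_induction with
  | mem x hx =>
    obtain ⟨S, hS, rfl⟩ := hx
    rw [← v.sum_repr w, map_sum, Finset.sum_mul]
    refine Submodule.sum_mem _ fun i _ => ?_
    rw [map_smul, smul_mul_assoc]
    apply Submodule.smul_mem
    obtain ⟨u, _, h⟩ := cliffE_gen_mul g (fun i => q (v i)) hsq hanti S i
    change g i * _ ∈ _
    rw [h]
    apply Submodule.smul_mem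
    apply Submodule.subset_span
    refine ⟨_, ?_, rfl⟩
    simp only [Set.mem_ofPred_eq] at hS ⊢
    rw [even_card_symmDiff, hS]; simp
  | zero => simp
  | add x y _ _ hx hy => rw [mul_add]; exact Submodule.add_mem _ hx hy
  | smul c x _ hx => rw [mul_smul_comm]; exact Submodule.smul_mem _ _ hx

theorem cliff_span_top (q : QuadraticForm k V) (v : Module.Basis (Fin n) k V)
    (hv : ∀ i j, i ≠ j → QuadraticMap.polar q (v i) (v j) = 0) :
    ⊤ ≤ Submodule.span k (Set.range (cliffE (fun i => CliffordAlgebra.ι q (v i)))) := by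
  set g := fun i => CliffordAlgebra.ι q (v i) with hg
  rintro x -
  have hle : ∀ p, Submodule.span k (cliffE g '' {S | (S.card : ZMod 2) = p}) ≤
      Submodule.span k (Set.range (cliffE g)) :=
    fun p => Submodule.span_mono (Set.image_subset_range _ _)
  induction x using CliffordAlgebra.left_induction with
  | algebraMap r =>
    rw [Algebra.algebraMap_eq_smul_one, ← cliffE_empty g]
    exact Submodule.smul_mem _ _ (Submodule.subset_span ⟨_, rfl⟩)
  | add x y hx hy => exact Submodule.add_mem _ hx hy
  | ι_mul x w hx =>
    induction hx using Submodule.span_induction with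
    | mem x hx =>
      obtain ⟨S, rfl⟩ := hx
      exact hle _ (cliff_gen_mem q v hv (S.card : ZMod 2) w _
        (Submodule.subset_span ⟨S, rfl, rfl⟩))
    | zero => simp
    | add x y _ _ hx hy => rw [mul_add]; exact Submodule.add_mem _ hx hy
    | smul c x _ hx => rw [mul_smul_comm]; exact Submodule.smul_mem _ _ hx

theorem cliff_li (q : QuadraticForm k V) (v : Module.Basis (Fin n) k V)
    (hv : ∀ i j, i ≠ j → QuadraticMap.polar q (v i) (v j) = 0) :
    LinearIndependent k (cliffE (fun i => CliffordAlgebra.ι q (v i))) := by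
  apply linearIndependent_of_top_le_span_of_card_eq_finrank (cliff_span_top q v hv)
  rw [(CliffordAlgebra.equivExterior q).finrank_eq,
    Module.finrank_eq_card_basis (v.ExteriorAlgebra)]

theorem cliff_even_span (q : QuadraticForm k V) (v : Module.Basis (Fin n) k V)
    (hv : ∀ i j, i ≠ j → QuadraticMap.polar q (v i) (v j) = 0)
    (x : CliffordAlgebra q) (hx : x ∈ CliffordAlgebra.evenOdd q 0) :
    x ∈ Submodule.span k
      (cliffE (fun i => CliffordAlgebra.ι q (v i)) '' {S | (S.card : ZMod 2) = 0}) := by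
  induction x, hx using CliffordAlgebra.even_induction with
  | algebraMap r =>
    rw [Algebra.algebraMap_eq_smul_one, ← cliffE_empty (fun i => CliffordAlgebra.ι q (v i))]
    exact Submodule.smul_mem _ _ (Submodule.subset_span ⟨_, by simp, rfl⟩)
  | add x y _ _ hx hy => exact Submodule.add_mem _ hx hy
  | ι_mul_ι_mul m₁ m₂ x hx ih =>
    rw [mul_assoc]
    have := cliff_gen_mem q v hv _ m₁ _ (cliff_gen_mem q v hv _ m₂ _ ih)
    have h2 : (0 + 1 + 1 : ZMod 2) = 0 := by decide
    rwa [h2] at this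

theorem cliffE_mem (q : QuadraticForm k V) (v : Module.Basis (Fin n) k V)
    (hv : ∀ i j, i ≠ j → QuadraticMap.polar q (v i) (v j) = 0) (S : Finset (Fin n)) :
    cliffE (fun i => CliffordAlgebra.ι q (v i)) S ∈ CliffordAlgebra.evenOdd q S.card := by
  set g := fun i => CliffordAlgebra.ι q (v i) with hg
  have hsq : ∀ i, g i * g i = q (v i) • (1 : CliffordAlgebra q) := by
    intro i; rw [hg]; simp only [CliffordAlgebra.ι_sq_scalar]; rw [Algebra.algebraMap_eq_smul_one]
  have hanti : ∀ i j, i ≠ j → g i * g j = -(g j * g i) := by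
    intro i j hij
    have := CliffordAlgebra.ι_mul_ι_comm (Q := q) (v i) (v j)
    rw [hv i j hij, map_zero, zero_sub] at this
    exact this
  induction S using Finset.induction_on with
  | empty =>
    rw [cliffE_empty]
    simpa using SetLike.GradedOne.one_mem (A := CliffordAlgebra.evenOdd q)
  | insert i S hi ih =>
    obtain ⟨u, hu, h1⟩ := cliffE_insert g _ hsq hanti S i hi
    rw [h1, Finset.card_insert_of_notMem hi, Nat.cast_add, add_comm]
    apply Submodule.smul_mem
    apply SetLike.mul_mem_graded _ ih
    simpa using CliffordAlgebra.ι_mem_evenOdd_one q (v i)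

/-- Data extracted: a nice basis of the even Clifford algebra. -/
theorem cliff_even_basis (q : QuadraticForm k V) (v : Module.Basis (Fin n) k V)
    (hv : ∀ i j, i ≠ j → QuadraticMap.polar q (v i) (v j) = 0) :
    ∃ b : Module.Basis {S : Finset (Fin n) // Even S.card} k (CliffordAlgebra.even q),
      (∀ S T U : {S : Finset (Fin n) // Even S.card}, U.1 = symmDiff S.1 T.1 →
        ∃ c : k, (c ≠ 0 ↔ ∀ i ∈ S.1 ∩ T.1, q (v i) ≠ 0) ∧ b S * b T = c • b U) ∧
      (∀ S T : {S : Finset (Fin n) // Even S.card}, b S * b T =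
        (∏ i ∈ T.1, if i ∈ S.1 then (-1 : k) else 1) • (b T * b S)) ∧
      b ⟨∅, by simp⟩ = 1 := by
  set g := fun i => CliffordAlgebra.ι q (v i) with hg
  have hsq : ∀ i, g i * g i = q (v i) • (1 : CliffordAlgebra q) := by
    intro i; rw [hg]; simp only [CliffordAlgebra.ι_sq_scalar]; rw [Algebra.algebraMap_eq_smul_one]
  have hanti : ∀ i j, i ≠ j → g i * g j = -(g j * g i) := by
    intro i j hij
    have := CliffordAlgebra.ι_mul_ι_comm (Q := q) (v i) (v j)
    rw [hv i j hij, map_zero, zero_sub] at this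
    exact this
  have hev : ∀ S : Finset (Fin n), Even S.card ↔ (S.card : ZMod 2) = 0 := fun S =>
    (ZMod.natCast_eq_zero_iff_even).symm
  let f : {S : Finset (Fin n) // Even S.card} → CliffordAlgebra.even q := fun S =>
    ⟨cliffE g S.1, by
      have := cliffE_mem q v hv S.1
      rw [(hev _).1 S.2] at this
      exact this⟩
  have hli : LinearIndependent k f := by
    apply LinearIndependent.of_comp (CliffordAlgebra.even q).val.toLinearMap
    exact (cliff_li q v hv).comp (fun S : {S : Finset (Fin n) // Even S.card} => S.1)
      Subtype.val_injective
  have hsp : ⊤ ≤ Submodule.span k (Set.range f) := by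
    rintro ⟨x, hx⟩ -
    have h1 := cliff_even_span q v hv x hx
    have h2 : cliffE g '' {S | (S.card : ZMod 2) = 0} =
        (CliffordAlgebra.even q).val.toLinearMap '' (Set.range f) := by
      ext y; constructor
      · rintro ⟨S, hS, rfl⟩
        exact ⟨f ⟨S, (hev S).2 hS⟩, ⟨_, rfl⟩, rfl⟩
      · rintro ⟨_, ⟨S, rfl⟩, rfl⟩
        exact ⟨S.1, (hev _).1 S.2, rfl⟩
    rw [h2, ← Submodule.map_span] at h1
    obtain ⟨y, hy, hyx⟩ := h1
    have : y = ⟨x, hx⟩ := Subtype.ext hyx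
    rwa [← this]
  refine ⟨Module.Basis.mk hli hsp, ?_, ?_, ?_⟩
  · intro S T U hU
    obtain ⟨c, hc, h⟩ := cliffE_mul g _ hsq hanti S.1 T.1
    refine ⟨c, hc, ?_⟩
    simp only [Module.Basis.mk_apply]
    apply Subtype.ext
    rw [← hU] at h
    exact h
  · intro S T
    simp only [Module.Basis.mk_apply]
    apply Subtype.ext
    exact cliffE_comm_even g _ hsq hanti S.1 T.1 S.2
  · rw [Module.Basis.mk_apply]
    apply Subtype.ext
    exact cliffE_empty g

end StageOneB

section Stage2

theorem card_even_subsets {n : ℕ} (s : Finset (Fin n)) (hs : s.Nonempty) :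
    2 * (s.powerset.filter (fun S => Even S.card)).card = 2 ^ s.card := by
  have h1 := Finset.sum_powerset_neg_one_pow_card_of_nonempty hs
  have h2 : ∑ S ∈ s.powerset, (1 + (-1 : ℤ) ^ S.card) =
      ∑ S ∈ s.powerset, if Even S.card then (2 : ℤ) else 0 := by
    apply Finset.sum_congr rfl
    intro S _
    by_cases h : Even S.card
    · rw [if_pos h, h.neg_one_pow]; norm_num
    · rw [if_neg h, (Nat.not_even_iff_odd.1 h).neg_one_pow]; norm_num
  rw [Finset.sum_add_distrib, h1, ← Finset.sum_filter, Finset.sum_const, Finset.sum_const,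
    Finset.card_powerset] at h2
  simp only [nsmul_eq_mul, mul_one, add_zero] at h2
  have : (2 * (s.powerset.filter (fun S => Even S.card)).card : ℤ) = 2 ^ s.card := by
    push_cast at h2; linarith
  exact_mod_cast this

variable {k : Type*} [Field k] {n : ℕ}

/-- sign character -/
def eps (k : Type*) [Field k] {n : ℕ} (W U : Finset (Fin n)) : k :=
  ∏ i ∈ U, if i ∈ W then (-1 : k) else 1

theorem eps_symm (W U : Finset (Fin n)) : eps k W U = eps k U W := by
  unfold eps
  rw [Finset.prod_ite_mem, Finset.prod_ite_mem, Finset.inter_comm]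

theorem eps_mul (W W' U : Finset (Fin n)) :
    eps k (symmDiff W W') U = eps k W U * eps k W' U := by
  unfold eps
  rw [← Finset.prod_mul_distrib]
  apply Finset.prod_congr rfl
  intro i _
  by_cases h : i ∈ W <;> by_cases h' : i ∈ W' <;> simp [Finset.mem_symmDiff, h, h']

theorem eps_pair {x y : Fin n} (hxy : x ≠ y) (U : Finset (Fin n)) :
    eps k {x, y} U = (if x ∈ U then -1 else 1) * (if y ∈ U then -1 else 1) := by
  rw [eps_symm, eps, Finset.prod_pair hxy]

theorem eps_sq (W U : Finset (Fin n)) : eps k W U * eps k W U = 1 := by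
  unfold eps
  rw [← Finset.prod_mul_distrib]
  apply Finset.prod_eq_one
  intro i _
  split_ifs <;> simp

/-- symmetric difference on even sets -/
def gAdd (S T : {S : Finset (Fin n) // Even S.card}) : {S : Finset (Fin n) // Even S.card} :=
  ⟨symmDiff S.1 T.1, by
    have h1 := ZMod.natCast_eq_zero_iff_even.2 S.2
    have h2 := ZMod.natCast_eq_zero_iff_even.2 T.2
    have h3 := even_card_symmDiff S.1 T.1
    rw [h1, h2, add_zero] at h3
    exact ZMod.natCast_eq_zero_iff_even.1 h3⟩

theorem gAdd_inj (S S' T : {S : Finset (Fin n) // Even S.card}) (h : gAdd S T = gAdd S' T) :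
    S = S' := by
  have := congrArg Subtype.val h
  exact Subtype.ext (symmDiff_left_injective T.1 this)

theorem eps_orth (h2 : (2 : k) ≠ 0) (hn : Even n) (i₀ : Fin n)
    (U T : {S : {S : Finset (Fin n) // Even S.card} // i₀ ∉ S.1}) (hUT : U ≠ T) :
    ∑ W : {S : {S : Finset (Fin n) // Even S.card} // i₀ ∉ S.1},
      eps k W.1.1 U.1.1 * eps k W.1.1 T.1.1 = 0 := by
  set D := gAdd U.1 T.1 with hD
  have hne : D.1.Nonempty := by
    rw [Finset.nonempty_iff_ne_empty]
    intro h
    apply hUT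
    have : symmDiff U.1.1 T.1.1 = ∅ := h
    rw [← Finset.bot_eq_empty, symmDiff_eq_bot] at this
    exact Subtype.ext (Subtype.ext this)
  obtain ⟨x, hx⟩ := hne
  have hi0 : i₀ ∉ D.1 := by
    simp [hD, gAdd, Finset.mem_symmDiff, U.2, T.2]
  have hy : ∃ y, y ≠ i₀ ∧ y ∉ D.1 := by
    by_contra hcon
    push Not at hcon
    have : D.1 = Finset.univ.erase i₀ := by
      ext y
      simp only [Finset.mem_erase, Finset.mem_univ, and_true]
      exact ⟨fun h => by rintro rfl; exact hi0 h, hcon y⟩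
    have h3 := D.2
    rw [this, Finset.card_erase_of_mem (Finset.mem_univ _), Finset.card_univ, Fintype.card_fin]
      at h3
    have hpos : 0 < n := i₀.pos
    grind
  obtain ⟨y, hy0, hyD⟩ := hy
  have hxy : x ≠ y := by rintro rfl; exact hyD hx
  have hx0 : x ≠ i₀ := by rintro rfl; exact hi0 hx
  let W₀ : {S : Finset (Fin n) // Even S.card} := ⟨{x, y}, by rw [Finset.card_pair hxy]; exact even_two⟩
  let σ : {S : {S : Finset (Fin n) // Even S.card} // i₀ ∉ S.1} →
      {S : {S : Finset (Fin n) // Even S.card} // i₀ ∉ S.1} := fun W =>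
    ⟨gAdd W.1 W₀, by
      have := W.2
      simp [gAdd, W₀, Finset.mem_symmDiff, this, hx0.symm, hy0.symm]⟩
  have hσ : Function.Involutive σ := by
    intro W
    apply Subtype.ext; apply Subtype.ext
    simp [σ, gAdd]
  have key : ∀ W, eps k (σ W).1.1 U.1.1 * eps k (σ W).1.1 T.1.1 =
      - (eps k W.1.1 U.1.1 * eps k W.1.1 T.1.1) := by
    intro W
    have e1 : (σ W).1.1 = symmDiff W.1.1 {x, y} := rfl
    rw [e1, eps_mul, eps_mul, eps_pair hxy, eps_pair hxy]
    have hx' : x ∈ symmDiff U.1.1 T.1.1 := hx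
    have hy' : y ∉ symmDiff U.1.1 T.1.1 := hyD
    rw [Finset.mem_symmDiff] at hx' hy'
    by_cases a1 : x ∈ U.1.1 <;> by_cases a2 : x ∈ T.1.1 <;> by_cases a3 : y ∈ U.1.1 <;>
      by_cases a4 : y ∈ T.1.1 <;> simp [a1, a2, a3, a4] at hx' hy' ⊢
  have hs := Equiv.sum_comp (hσ.toPerm σ)
    (fun W => eps k W.1.1 U.1.1 * eps k W.1.1 T.1.1)
  simp only [Function.Involutive.coe_toPerm, key, Finset.sum_neg_distrib] at hs
  have : (2 : k) * ∑ W : {S : {S : Finset (Fin n) // Even S.card} // i₀ ∉ S.1},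
      eps k W.1.1 U.1.1 * eps k W.1.1 T.1.1 = 0 := by linear_combination -hs
  exact (mul_eq_zero.1 this).resolve_left h2

variable {A : Type*} [Ring A] [Algebra k A]

theorem center_iff (b : Module.Basis {S : Finset (Fin n) // Even S.card} k A) (z : A)
    (hmul : ∀ S T, ∃ c : k, b S * b T = c • b (gAdd S T))
    (hcomm : ∀ S T, b S * b T = eps k S.1 T.1 • (b T * b S)) :
    z ∈ Subalgebra.center k A ↔
      z ∈ Submodule.span k (b '' {S | ∀ T, b S * b T = b T * b S}) := by
  constructor
  · intro hz
    rw [Subalgebra.mem_center_iff] at hz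
    rw [← b.sum_repr z]
    refine Submodule.sum_mem _ fun S _ => ?_
    by_cases h0 : b.repr z S = 0
    · rw [h0, zero_smul]; exact Submodule.zero_mem _
    apply Submodule.smul_mem
    apply Submodule.subset_span
    refine ⟨S, ?_, rfl⟩
    intro T
    choose c hc using hmul
    have e1 : ∑ S', (b.repr z S' * (c S' T - eps k T.1 S'.1 * c S' T)) • b (gAdd S' T) = 0 := by
      have e2 : ∑ S', b.repr z S' • (b S' * b T) - ∑ S', b.repr z S' • (b T * b S') = 0 := by
        have e5 : ∑ S', b.repr z S' • (b S' * b T) = ∑ S', (b.repr z S' • b S') * b T :=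
          Finset.sum_congr rfl fun S' _ => (smul_mul_assoc _ _ _).symm
        have e6 : ∑ S', b.repr z S' • (b T * b S') = ∑ S', b T * (b.repr z S' • b S') :=
          Finset.sum_congr rfl fun S' _ => (mul_smul_comm _ _ _).symm
        rw [e5, e6, ← Finset.sum_mul, ← Finset.mul_sum, b.sum_repr, hz, sub_self]
      rw [← e2, ← Finset.sum_sub_distrib]
      apply Finset.sum_congr rfl
      intro S' _
      rw [hcomm T S', hc S' T, ← smul_sub, smul_smul, ← sub_smul, smul_smul]
    have hli : LinearIndependent k (fun S' => b (gAdd S' T)) :=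
      b.linearIndependent.comp (fun S' => gAdd S' T) (fun S' S'' h => gAdd_inj _ _ _ h)
    have e3 := Fintype.linearIndependent_iff.1 hli _ e1 S
    have e4 := (mul_eq_zero.1 e3).resolve_left h0
    rw [hcomm T S, hc S T, smul_smul]
    rw [sub_eq_zero.1 e4]
    congr 1
    rw [← sub_eq_zero.1 e4]
    exact sub_eq_zero.1 e4
  · intro hz
    induction hz using Submodule.span_induction with
    | mem x hx =>
      obtain ⟨S, hS, rfl⟩ := hx
      rw [Subalgebra.mem_center_iff]
      intro y
      rw [← b.sum_repr y, Finset.sum_mul, Finset.mul_sum]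
      apply Finset.sum_congr rfl
      intro T _
      rw [smul_mul_assoc, mul_smul_comm, hS T]
    | zero => exact Subalgebra.zero_mem _
    | add x y _ _ hx hy => exact Subalgebra.add_mem _ hx hy
    | smul c x _ hx => exact Subalgebra.smul_mem _ hx c

open scoped Classical in
theorem center_rank (b : Module.Basis {S : Finset (Fin n) // Even S.card} k A)
    (hmul : ∀ S T, ∃ c : k, b S * b T = c • b (gAdd S T))
    (hcomm : ∀ S T, b S * b T = eps k S.1 T.1 • (b T * b S)) :
    Module.rank k (Subalgebra.toSubmodule (Subalgebra.center k A)) =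
      ((Finset.univ.filter (fun S => ∀ T, b S * b T = b T * b S)).card : ℕ) := by
  have h : Subalgebra.toSubmodule (Subalgebra.center k A) =
      Submodule.span k (b '' {S | ∀ T, b S * b T = b T * b S}) := by
    ext z
    exact center_iff b z hmul hcomm
  have hli : LinearIndependent k (fun S : {S // ∀ T, b S * b T = b T * b S} => b S.1) :=
    b.linearIndependent.comp _ Subtype.val_injective
  have h' : b '' {S | ∀ T, b S * b T = b T * b S} =
      Set.range (fun S : {S // ∀ T, b S * b T = b T * b S} => b S.1) := by
    ext x; simp
  rw [h, h', rank_span hli, Cardinal.mk_fintype, Set.card_range_of_injective hli.injective,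
    Fintype.card_subtype]

open scoped Classical in
theorem center_card (b : Module.Basis {S : Finset (Fin n) // Even S.card} k A)
    (a : Fin n → k) (h2 : (2 : k) ≠ 0) (hn : Even n) (hn4 : 4 ≤ n)
    (hmul : ∀ S T, ∃ c : k, (c ≠ 0 ↔ ∀ i ∈ S.1 ∩ T.1, a i ≠ 0) ∧ b S * b T = c • b (gAdd S T))
    (hcomm : ∀ S T, b S * b T = eps k S.1 T.1 • (b T * b S)) :
    2 ≤ (Finset.univ.filter (fun S => ∀ T, b S * b T = b T * b S)).card ∧
    ((Finset.univ.filter (fun S => ∀ T, b S * b T = b T * b S)).card = 2 ↔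
      ∀ i j, a i = 0 → a j = 0 → i = j) ∧
    (∀ T, b ⟨Finset.univ, by simpa using hn⟩ * b T = b T * b ⟨Finset.univ, by simpa using hn⟩) := by
  let O : {S : Finset (Fin n) // Even S.card} := ⟨∅, by simp⟩
  let I : {S : Finset (Fin n) // Even S.card} := ⟨Finset.univ, by simpa using hn⟩
  let i0 : Fin n := ⟨0, by omega⟩
  have hOI : O ≠ I := by
    intro h
    have := congrArg Subtype.val h
    have h3 : i0 ∈ (∅ : Finset (Fin n)) := by
      change ∅ = Finset.univ at this
      rw [this]; exact Finset.mem_univ _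
    simp at h3
  have hO : ∀ T, b O * b T = b T * b O := by
    intro T
    rw [hcomm, eps_symm]; simp [O, eps]
  have hI : ∀ T, b I * b T = b T * b I := by
    intro T
    rw [hcomm]
    have : eps k I.1 T.1 = 1 := by
      simp only [I, eps, Finset.mem_univ, if_true, Finset.prod_const]
      exact T.2.neg_one_pow
    rw [this, one_smul]
  have hsub : ({O, I} : Finset _) ⊆
      (Finset.univ.filter (fun S => ∀ T, b S * b T = b T * b S)) := by
    intro S hS
    simp only [Finset.mem_insert, Finset.mem_singleton] at hS
    rw [Finset.mem_filter]
    rcases hS with rfl | rfl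
    · exact ⟨Finset.mem_univ _, hO⟩
    · exact ⟨Finset.mem_univ _, hI⟩
  refine ⟨?_, ⟨?_, ?_⟩, hI⟩
  · rw [← Finset.card_pair hOI]; exact Finset.card_le_card hsub
  · intro hc i j hi hj
    by_contra hij
    have heq := Finset.eq_of_subset_of_card_le hsub (by rw [hc, Finset.card_pair hOI])
    let P : {S : Finset (Fin n) // Even S.card} :=
      ⟨{i, j}, by rw [Finset.card_pair hij]; exact even_two⟩
    have hP : P ∈ (Finset.univ.filter (fun S => ∀ T, b S * b T = b T * b S)) := by
      rw [Finset.mem_filter]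
      refine ⟨Finset.mem_univ _, fun T => ?_⟩
      by_cases hT : i ∈ T.1 ∨ j ∈ T.1
      · obtain ⟨c, hc, h⟩ := hmul P T
        have hc0 : c = 0 := by
          by_contra hne
          have := hc.1 hne
          rcases hT with hT | hT
          · exact this i (by simp [P, hT]) hi
          · exact this j (by simp [P, hT]) hj
        rw [hcomm T P, h, hc0]; simp
      · push Not at hT
        rw [hcomm P T]
        have : eps k P.1 T.1 = 1 := by
          rw [show P.1 = {i, j} from rfl, eps_pair hij]
          simp [hT]
        rw [this, one_smul]
    rw [← heq] at hP
    simp only [Finset.mem_insert, Finset.mem_singleton] at hP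
    have hc2 : P.1.card = 2 := Finset.card_pair hij
    rcases hP with hP | hP
    · rw [hP] at hc2; simp [O] at hc2
    · rw [hP] at hc2; simp [I] at hc2; omega
  · intro h
    have : ({O, I} : Finset _) =
      (Finset.univ.filter (fun S => ∀ T, b S * b T = b T * b S)) := by
      apply Finset.Subset.antisymm hsub
      intro S hS
      rw [Finset.mem_filter] at hS
      simp only [Finset.mem_insert, Finset.mem_singleton]
      by_contra hcon
      push Not at hcon
      have hne : S.1.Nonempty := by
        rw [Finset.nonempty_iff_ne_empty]
        intro h; exact hcon.1 (Subtype.ext h)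
      have hcard : 1 < S.1.card := by
        have h1 := hne.card_pos
        have h3 := S.2
        by_contra h4
        have : S.1.card = 1 := by omega
        rw [this] at h3; exact absurd h3 (by decide)
      obtain ⟨x, hx, y, hy, hxy⟩ := Finset.one_lt_card.1 hcard
      have hi : ∃ i ∈ S.1, a i ≠ 0 := by
        by_contra hall
        push Not at hall
        exact hxy (h x y (hall x hx) (hall y hy))
      obtain ⟨i, hiS, hai⟩ := hi
      have hj : ∃ j, j ∉ S.1 := by
        by_contra hall
        push Not at hall
        exact hcon.2 (Subtype.ext (by ext x; simp [I, hall x]))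
      obtain ⟨j, hjS⟩ := hj
      have hij : i ≠ j := by rintro rfl; exact hjS hiS
      let P : {S : Finset (Fin n) // Even S.card} :=
        ⟨{i, j}, by rw [Finset.card_pair hij]; exact even_two⟩
      obtain ⟨c, hc, hSP⟩ := hmul S P
      have hc0 : c ≠ 0 := by
        rw [hc]
        intro l hl
        simp only [P, Finset.mem_inter, Finset.mem_insert, Finset.mem_singleton] at hl
        rcases hl with ⟨h1, rfl | rfl⟩
        · exact hai
        · exact absurd h1 hjS
      have e1 := hS.2 P
      rw [hcomm P S, hSP, show P.1 = {i, j} from rfl, eps_pair hij, smul_smul] at e1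
      simp only [hiS, hjS, if_true, if_false] at e1
      have e2 : (2 * c) • b (gAdd S P) = 0 := by
        rw [two_mul, add_smul]
        nth_rewrite 1 [e1]
        rw [← add_smul]; simp
      rcases smul_eq_zero.1 e2 with e3 | e3
      · exact mul_ne_zero h2 hc0 e3
      · exact b.ne_zero _ e3
    rw [← this, Finset.card_pair hOI]

end Stage2

section Stage3

theorem mulLeftRightMap_tmul (S A : Type*) [CommRing S] [Ring A] [Algebra S A] (a x : A)
    (b : Aᵐᵒᵖ) : mulLeftRightMap S A (a ⊗ₜ[S] b) x = a * (x * b.unop) := by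
  simp [mulLeftRightMap]

theorem azumaya_surj {k Z A J : Type*} [Field k] [CommRing Z] [Ring A] [Algebra k Z] [Algebra k A]
    [Algebra Z A] [IsScalarTower k Z A] [Fintype J] [DecidableEq J] (e : J → A) (e' : J → A)
    (hsp : ⊤ ≤ Submodule.span Z (Set.range e)) (he : ∀ U, e' U * e U = 1)
    (ε : J → J → k) (hconj : ∀ W U, e W * (e U * e' W) = ε W U • e U)
    (N : k) (hN : N ≠ 0)
    (horth : ∀ U T, ∑ W, ε W U * ε W T = if U = T then N else 0) :
    Function.Surjective (mulLeftRightMap Z A) := by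
  intro f
  refine ⟨∑ T, ∑ W, (f (e T) * e' T * ((N⁻¹ * ε W T) • e W)) ⊗ₜ[Z] MulOpposite.op (e' W), ?_⟩
  apply LinearMap.ext_on_range (v := e) (top_le_iff.1 hsp)
  intro U
  simp only [map_sum, LinearMap.sum_apply, mulLeftRightMap_tmul, MulOpposite.unop_op]
  have h1 : ∀ T W, f (e T) * e' T * ((N⁻¹ * ε W T) • e W) * (e U * e' W) =
      (N⁻¹ * (ε W U * ε W T)) • (f (e T) * e' T * e U) := by
    intro T W
    rw [mul_assoc (f (e T) * e' T), smul_mul_assoc, hconj, smul_smul, mul_smul_comm]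
    congr 1; ring
  simp only [h1, ← Finset.sum_smul, ← Finset.mul_sum, horth]
  rw [Finset.sum_eq_single U]
  · rw [if_pos rfl, inv_mul_cancel₀ hN, one_smul, mul_assoc, he, mul_one]
  · intro T _ hT
    rw [if_neg (Ne.symm hT), mul_zero, zero_smul]
  · simp

theorem azumaya_bij {Z A J : Type*} [CommRing Z] [Nontrivial Z] [Ring A] [Algebra Z A] [Fintype J]
    (β : Module.Basis J Z A) (hs : Function.Surjective (mulLeftRightMap Z A)) :
    Function.Bijective (mulLeftRightMap Z A) := by
  classical
  refine ⟨?_, hs⟩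
  let β' : Module.Basis J Z Aᵐᵒᵖ := β.map (MulOpposite.opLinearEquiv Z)
  let b1 : Module.Basis (J × J) Z (A ⊗[Z] Aᵐᵒᵖ) := β.tensorProduct β'
  let b2 : Module.Basis (J × J) Z (Module.End Z A) := β.end
  let φ : A ⊗[Z] Aᵐᵒᵖ ≃ₗ[Z] Module.End Z A := b1.equiv b2 (Equiv.refl _)
  haveI : Module.Finite Z (A ⊗[Z] Aᵐᵒᵖ) := Module.Finite.of_basis b1
  have h := OrzechProperty.injective_of_surjective_endomorphism
    (φ.symm.toLinearMap ∘ₗ mulLeftRightMap Z A) (by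
      simpa using φ.symm.surjective.comp hs)
  have h' : Function.Injective (φ.symm ∘ mulLeftRightMap Z A) := h
  exact h'.of_comp

theorem basis_of_span {k Z A J : Type*} [Field k] [CommRing Z] [Ring A] [Algebra k Z] [Algebra k A]
    [Algebra Z A] [IsScalarTower k Z A] [Fintype J] [FiniteDimensional k Z]
    [FiniteDimensional k A] (e : J → A)
    (hsp : ⊤ ≤ Submodule.span Z (Set.range e))
    (hd : Module.finrank k A = Fintype.card J * Module.finrank k Z) :
    LinearIndependent Z e := by
  let φ : (J → Z) →ₗ[Z] A := Fintype.linearCombination Z e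
  have hφ : Function.Surjective φ := by
    rw [← LinearMap.range_eq_top, Fintype.range_linearCombination]
    exact top_le_iff.1 hsp
  have hinj : Function.Injective (φ.restrictScalars k) := by
    rw [LinearMap.injective_iff_surjective_of_finrank_eq_finrank]
    · exact hφ
    · rw [hd, Module.finrank_pi_fintype]; simp
  rw [linearIndependent_iff_injective_fintypeLinearCombination]
  exact hinj

theorem finrank_le_of_rank {k Z A : Type*} [Field k] [CommRing Z] [Ring A] [Algebra k Z]
    [Algebra k A] [Algebra Z A] [IsScalarTower k Z A] [FiniteDimensional k Z] [Nontrivial Z]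
    [FiniteDimensional k A] (N : ℕ) (h : Module.rank Z A = N) :
    N * Module.finrank k Z ≤ Module.finrank k A := by
  obtain ⟨f, hf⟩ := Module.le_rank_iff_exists_linearMap.1 h.ge
  have := LinearMap.finrank_le_finrank_of_injective (f := f.restrictScalars k) hf
  rw [Module.finrank_pi_fintype] at this
  simpa using this

variable {k : Type*} [Field k] {n : ℕ} {A : Type*} [Ring A] [Algebra k A]

theorem centerTower : @IsScalarTower k (Subalgebra.center k A) A _
    (@Algebra.toSMul _ _ _ _ (centerAlgebra k A)) _ :=
  letI := centerAlgebra k A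
  IsScalarTower.of_algebraMap_eq fun _ => rfl

theorem card_J (i₀ : Fin n) (hn : 4 ≤ n) :
    Fintype.card {S : {S : Finset (Fin n) // Even S.card} // i₀ ∉ S.1} = 2 ^ (n - 2) := by
  have h1 := card_even_subsets (Finset.univ.erase i₀) (by
    rw [← Finset.card_pos, Finset.card_erase_of_mem (Finset.mem_univ _)]; simp; omega)
  rw [Finset.card_erase_of_mem (Finset.mem_univ _), Finset.card_univ, Fintype.card_fin] at h1
  have h2 : Fintype.card {S : {S : Finset (Fin n) // Even S.card} // i₀ ∉ S.1} =
      ((Finset.univ.erase i₀).powerset.filter (fun S => Even S.card)).card := by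
    rw [← Fintype.card_coe]
    refine Fintype.card_congr
      ⟨fun S => ⟨S.1.1, ?_⟩, fun S => ⟨⟨S.1, (Finset.mem_filter.1 S.2).2⟩, ?_⟩,
        fun _ => rfl, fun _ => rfl⟩
    · rw [Finset.mem_filter, Finset.mem_powerset]
      refine ⟨fun x hx => ?_, S.1.2⟩
      rw [Finset.mem_erase]
      exact ⟨by rintro rfl; exact S.2 hx, Finset.mem_univ _⟩
    · intro h
      have := Finset.mem_powerset.1 (Finset.mem_filter.1 S.2).1 h
      simp at this
  rw [h2]
  have h3 : 2 ^ (n - 1) = 2 * 2 ^ (n - 2) := by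
    rw [← pow_succ']; congr 1; omega
  omega

theorem card_G (hn : 4 ≤ n) :
    Fintype.card {S : Finset (Fin n) // Even S.card} = 2 * 2 ^ (n - 2) := by
  have h1 := card_even_subsets (Finset.univ : Finset (Fin n)) (by
    rw [← Finset.card_pos]; simp; omega)
  rw [Finset.card_univ, Fintype.card_fin] at h1
  rw [Fintype.card_subtype]
  have h3 : 2 ^ n = 2 * (2 * 2 ^ (n - 2)) := by
    rw [← pow_succ', ← pow_succ']; congr 1; omega
  rw [Finset.powerset_univ] at h1
  omega

theorem azumaya_of {Z : Type*} [CommRing Z] [Algebra k Z] [Algebra Z A] [IsScalarTower k Z A]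
    (b : Module.Basis {S : Finset (Fin n) // Even S.card} k A)
    (a : Fin n → k) (h2 : (2 : k) ≠ 0) (hn : Even n) (hn4 : 4 ≤ n)
    (hmul : ∀ S T, ∃ c : k, (c ≠ 0 ↔ ∀ i ∈ S.1 ∩ T.1, a i ≠ 0) ∧ b S * b T = c • b (gAdd S T))
    (hcomm : ∀ S T, b S * b T = eps k S.1 T.1 • (b T * b S))
    (hone : b ⟨∅, by simp⟩ = 1)
    (ha : ∀ i j, a i = 0 → a j = 0 → i = j)
    (hZ : Module.finrank k Z = 2) (hZinj : Function.Injective (algebraMap Z A))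
    (hZI : ∃ z : Z, algebraMap Z A z = b ⟨Finset.univ, by simpa using hn⟩) (d : ℕ) (hd : d ^ 2 = 2 ^ (n - 2)) :
    IsAzumayaOfDegree Z A d := by
  classical
  haveI : FiniteDimensional k A := Module.Finite.of_basis b
  haveI : FiniteDimensional k Z := Module.finite_of_finrank_eq_succ hZ
  haveI : Nontrivial A := ⟨⟨b ⟨∅, by simp⟩, 0, b.ne_zero _⟩⟩
  obtain ⟨i₀, hi₀⟩ : ∃ i₀ : Fin n, ∀ i, i ≠ i₀ → a i ≠ 0 := by
    by_cases h : ∃ i, a i = 0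
    · obtain ⟨i, hi⟩ := h
      exact ⟨i, fun j hj h => hj (ha _ _ h hi)⟩
    · push Not at h
      exact ⟨⟨0, by omega⟩, fun i _ => h i⟩
  let I : {S : Finset (Fin n) // Even S.card} := ⟨Finset.univ, by simpa using hn⟩
  obtain ⟨z, hz⟩ : ∃ z : Z, algebraMap Z A z = b I := hZI
  haveI : Nontrivial Z := Module.nontrivial_of_finrank_pos (R := k) (by omega)
  let e : {S : {S : Finset (Fin n) // Even S.card} // i₀ ∉ S.1} → A := fun S => b S.1
  have hsp : ⊤ ≤ Submodule.span Z (Set.range e) := by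
    have hle : Submodule.span k (Set.range b) ≤
        (Submodule.span Z (Set.range e)).restrictScalars k := by
      rw [Submodule.span_le]
      rintro _ ⟨S, rfl⟩
      change b S ∈ Submodule.span Z (Set.range e)
      by_cases hS : i₀ ∈ S.1
      · have hT : i₀ ∉ (gAdd I S).1 := by simp [gAdd, I, Finset.mem_symmDiff, hS]
        obtain ⟨c, hc, h⟩ := hmul I (gAdd I S)
        have hc0 : c ≠ 0 := by
          rw [hc]; intro i hi
          apply hi₀
          rintro rfl
          exact hT (Finset.mem_inter.1 hi).2
        have hg : gAdd I (gAdd I S) = S := by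
          apply Subtype.ext; simp [gAdd]
        rw [hg] at h
        have h5 : b S = z • (c⁻¹ • b (gAdd I S)) := by
          rw [Algebra.smul_def, hz, mul_smul_comm, h, smul_smul, inv_mul_cancel₀ hc0, one_smul]
        rw [h5]
        rw [← algebraMap_smul Z c⁻¹ (b (gAdd I S))]
        exact Submodule.smul_mem _ _ (Submodule.smul_mem _ _
          (Submodule.subset_span ⟨⟨_, hT⟩, rfl⟩))
      · exact Submodule.subset_span ⟨⟨S, hS⟩, rfl⟩
    rw [b.span_eq] at hle
    exact fun x hx => hle hx
  have hdim : Module.finrank k A =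
      Fintype.card {S : {S : Finset (Fin n) // Even S.card} // i₀ ∉ S.1} *
        Module.finrank k Z := by
    rw [Module.finrank_eq_card_basis b, card_G hn4, card_J i₀ hn4, hZ, mul_comm]
  have hli := basis_of_span (k := k) e hsp hdim
  let β := Module.Basis.mk hli hsp
  have hsq : ∀ S : {S : {S : Finset (Fin n) // Even S.card} // i₀ ∉ S.1}, ∃ c : k, c ≠ 0 ∧
      e S * e S = c • (1 : A) := by
    intro S
    obtain ⟨c, hc, h⟩ := hmul S.1 S.1
    refine ⟨c, ?_, ?_⟩
    · rw [hc]; intro i hi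
      apply hi₀
      rintro rfl
      exact S.2 (Finset.mem_inter.1 hi).2
    · have hg : gAdd S.1 S.1 = ⟨∅, by simp⟩ := by apply Subtype.ext; simp [gAdd]
      rw [hg, hone] at h
      exact h
  choose c hc0 hc using hsq
  have hsurj : Function.Surjective (mulLeftRightMap Z A) := by
    refine azumaya_surj (k := k) e (fun S => (c S)⁻¹ • e S) hsp ?_
      (fun W U => eps k W.1.1 U.1.1) ?_
      ((2 ^ (n - 2) : ℕ) : k) ?_ ?_
    · intro U
      rw [smul_mul_assoc, hc, smul_smul, inv_mul_cancel₀ (hc0 U), one_smul]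
    · intro W U
      have h6 : e W * e U = eps k W.1.1 U.1.1 • (e U * e W) := hcomm W.1 U.1
      rw [← mul_assoc, h6, mul_smul_comm, smul_mul_assoc, mul_assoc, hc, mul_smul_comm, mul_one,
        smul_comm (eps k W.1.1 U.1.1), smul_smul, inv_mul_cancel₀ (hc0 W), one_smul]
    · push_cast; exact pow_ne_zero _ h2
    · intro U T
      by_cases hUT : U = T
      · subst hUT
        simp only [eps_sq, if_true, Finset.sum_const, Finset.card_univ, card_J i₀ hn4, nsmul_eq_mul,
          mul_one]
      · rw [if_neg hUT]
        exact eps_orth h2 hn i₀ U T hUT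
  refine ⟨Module.Finite.of_basis β, Module.Projective.of_basis β, ?_,
    azumaya_bij β hsurj, ?_⟩
  · refine ⟨fun {z z'} h => ?_⟩
    have := h 1
    rw [Algebra.smul_def, Algebra.smul_def, mul_one, mul_one] at this
    exact hZinj this
  · rw [rank_eq_card_basis β, card_J i₀ hn4, hd]

theorem radical_iff {V : Type*} [AddCommGroup V] [Module k V] (h2 : (2 : k) ≠ 0)
    (q : QuadraticForm k V) (v : Module.Basis (Fin n) k V)
    (hv : ∀ i j, i ≠ j → QuadraticMap.polar q (v i) (v j) = 0) :
    Module.rank k ↥(LinearMap.ker (QuadraticMap.polarBilin q)) ≤ 1 ↔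
      ∀ i j, q (v i) = 0 → q (v j) = 0 → i = j := by
  have hself : ∀ i, QuadraticMap.polar q (v i) (v i) = 2 * q (v i) := by
    intro i; rw [QuadraticMap.polar_self]; simp
  have hmem : ∀ i, q (v i) = 0 → v i ∈ LinearMap.ker (QuadraticMap.polarBilin q) := by
    intro i hi
    rw [LinearMap.mem_ker]
    apply v.ext
    intro j
    rw [QuadraticMap.polarBilin_apply_apply, LinearMap.zero_apply]
    by_cases h : i = j
    · subst h; rw [hself, hi, mul_zero]
    · exact hv i j h
  have hcoord : ∀ x ∈ LinearMap.ker (QuadraticMap.polarBilin q), ∀ i, q (v i) ≠ 0 →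
      v.repr x i = 0 := by
    intro x hx i hi
    rw [LinearMap.mem_ker] at hx
    have h1 := LinearMap.congr_fun hx (v i)
    rw [← v.sum_repr x, map_sum, LinearMap.sum_apply, Finset.sum_eq_single i] at h1
    · rw [map_smul, LinearMap.smul_apply, QuadraticMap.polarBilin_apply_apply, hself,
        smul_eq_mul, LinearMap.zero_apply] at h1
      exact (mul_eq_zero.1 h1).resolve_right (mul_ne_zero h2 hi)
    · intro j _ hj
      rw [map_smul, LinearMap.smul_apply, QuadraticMap.polarBilin_apply_apply, hv j i hj, smul_zero]
    · simp
  rw [rank_submodule_le_one_iff']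
  constructor
  · rintro ⟨v₀, h⟩ i j hi hj
    by_contra hij
    obtain ⟨r, hr⟩ := Submodule.mem_span_singleton.1 (h (hmem i hi))
    obtain ⟨s, hs⟩ := Submodule.mem_span_singleton.1 (h (hmem j hj))
    have hr0 : r ≠ 0 := by
      rintro rfl; rw [zero_smul] at hr; exact v.ne_zero i hr.symm
    have h3 : v j = (s * r⁻¹) • v i := by
      rw [← hr, smul_smul, mul_assoc, inv_mul_cancel₀ hr0, mul_one, hs]
    have h4 := congrArg (fun x => v.repr x j) h3
    simp [Finsupp.single_apply, hij] at h4
  · intro h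
    by_cases hz : ∃ i, q (v i) = 0
    · obtain ⟨i, hi⟩ := hz
      refine ⟨v i, fun x hx => ?_⟩
      rw [Submodule.mem_span_singleton]
      refine ⟨v.repr x i, ?_⟩
      nth_rewrite 2 [← v.sum_repr x]
      rw [Finset.sum_eq_single i]
      · intro j _ hj
        rw [hcoord x hx j (fun h0 => hj (h _ _ h0 hi)), zero_smul]
      · simp
    · push Not at hz
      refine ⟨0, fun x hx => ?_⟩
      rw [← v.sum_repr x]
      refine Submodule.sum_mem _ fun j _ => ?_
      rw [hcoord x hx j (hz j), zero_smul]
      exact Submodule.zero_mem _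

open scoped Classical in
theorem center_abstract (b : Module.Basis {S : Finset (Fin n) // Even S.card} k A)
    (a : Fin n → k) (h2 : (2 : k) ≠ 0) (hn : Even n) (hn4 : 4 ≤ n)
    (hmul : ∀ S T, ∃ c : k, (c ≠ 0 ↔ ∀ i ∈ S.1 ∩ T.1, a i ≠ 0) ∧ b S * b T = c • b (gAdd S T))
    (hcomm : ∀ S T, b S * b T = eps k S.1 T.1 • (b T * b S)) :
    ∃ N : ℕ, Module.rank k ↥(Subalgebra.toSubmodule (Subalgebra.center k A)) = N ∧ 2 ≤ N ∧
      (N = 2 ↔ ∀ i j, a i = 0 → a j = 0 → i = j) ∧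
      b ⟨Finset.univ, by simpa using hn⟩ ∈ Subalgebra.center k A := by
  have hm : ∀ S T, ∃ c : k, b S * b T = c • b (gAdd S T) := fun S T => by
    obtain ⟨c, _, h⟩ := hmul S T; exact ⟨c, h⟩
  obtain ⟨hge, hiff, hI⟩ := center_card b a h2 hn hn4 hmul hcomm
  refine ⟨_, center_rank b hm hcomm, ?_, ?_, ?_⟩
  · convert hge
  · rw [← hiff]
  · rw [center_iff b _ hm hcomm]
    exact Submodule.subset_span ⟨_, hI, rfl⟩

theorem main_abstract (b : Module.Basis {S : Finset (Fin n) // Even S.card} k A)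
    (a : Fin n → k) (h2 : (2 : k) ≠ 0) (hn : Even n) (hn4 : 4 ≤ n)
    (hmul : ∀ S T, ∃ c : k, (c ≠ 0 ↔ ∀ i ∈ S.1 ∩ T.1, a i ≠ 0) ∧ b S * b T = c • b (gAdd S T))
    (hcomm : ∀ S T, b S * b T = eps k S.1 T.1 • (b T * b S))
    (hone : b ⟨∅, by simp⟩ = 1) (d : ℕ) (hd : d ^ 2 = 2 ^ (n - 2)) :
    (Module.rank k ↥(Subalgebra.toSubmodule (Subalgebra.center k A)) = 2 ↔
      ∀ i j, a i = 0 → a j = 0 → i = j) ∧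
    (Module.rank k ↥(Subalgebra.toSubmodule (Subalgebra.center k A)) = 2 ↔
      IsAzumayaOfDegree (Subalgebra.center k A) A d) := by
  obtain ⟨N, hcr, hge, hiff, hIc⟩ := center_abstract b a h2 hn hn4 hmul hcomm
  have hab : Module.rank k ↥(Subalgebra.toSubmodule (Subalgebra.center k A)) = 2 ↔
      ∀ i j, a i = 0 → a j = 0 → i = j := by
    rw [hcr, ← hiff]; norm_cast
  have : FiniteDimensional k A := Module.Finite.of_basis b
  have hfr : Module.finrank k (Subalgebra.center k A) = N :=
    Module.finrank_eq_of_rank_eq hcr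
  have : FiniteDimensional k (Subalgebra.center k A) :=
    Module.finite_of_finrank_pos (by omega)
  have tower := centerTower (k := k) (A := A)
  have : Nontrivial (Subalgebra.center k A) :=
    Module.nontrivial_of_finrank_pos (R := k) (by omega)
  refine ⟨hab, ?_, ?_⟩
  · intro h
    refine azumaya_of b a h2 hn hn4 hmul hcomm hone (hab.1 h) ?_ ?_ ?_ _ hd
    · exact Module.finrank_eq_of_rank_eq (n := 2) (by exact_mod_cast h)
    · exact Subtype.val_injective
    · exact ⟨⟨_, hIc⟩, rfl⟩
  · rintro ⟨-, -, -, -, hr⟩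
    have hle := finrank_le_of_rank (k := k) _ hr
    rw [Module.finrank_eq_card_basis b, card_G hn4, hd, mul_comm,
      Nat.mul_le_mul_right_iff (by positivity), hfr] at hle
    rw [hcr]
    have h5 : N = 2 := by omega
    rw [h5]; rfl

end Stage3

set_option maxHeartbeats 1000000 in
theorem simple_degeneration_iff_center_rank_two_iff_azumaya
    {k V : Type*} [Field k] [Invertible (2 : k)]
    [AddCommGroup V] [Module k V] [FiniteDimensional k V]
    (m : ℕ) (hm : 1 < m) (q : QuadraticForm k V)
    (hrank : Module.finrank k V = 2 * m) :
    (Module.rank k ↥(LinearMap.ker (QuadraticMap.polarBilin q)) ≤ 1 ↔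
      Module.rank k
        ↥(Subalgebra.toSubmodule (Subalgebra.center k ↥(CliffordAlgebra.even q))) = 2) ∧
    (Module.rank k
        ↥(Subalgebra.toSubmodule (Subalgebra.center k ↥(CliffordAlgebra.even q))) = 2 ↔
      IsAzumayaOfDegree (Subalgebra.center k ↥(CliffordAlgebra.even q))
        ↥(CliffordAlgebra.even q) (2 ^ (m - 1))) := by
  classical
  have h2 : (2 : k) ≠ 0 := Invertible.ne_zero 2
  obtain ⟨v, hv⟩ : ∃ v : Module.Basis (Fin (2 * m)) k V,
      ∀ i j, i ≠ j → QuadraticMap.polar q (v i) (v j) = 0 := by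
    obtain ⟨v, hv⟩ := LinearMap.BilinForm.exists_orthogonal_basis
      (B := QuadraticMap.associated q) ⟨QuadraticMap.associated_isSymm k q⟩
    refine ⟨v.reindex (finCongr hrank), fun i j hij => ?_⟩
    rw [Module.Basis.reindex_apply, Module.Basis.reindex_apply]
    have h3 : (finCongr hrank).symm i ≠ (finCongr hrank).symm j := fun h =>
      hij ((finCongr hrank).symm.injective h)
    have h4 : QuadraticMap.associated q (v ((finCongr hrank).symm i))
        (v ((finCongr hrank).symm j)) = 0 := hv h3
    exact (QuadraticMap.associated_isOrtho.1 h4).polar_eq_zero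
  obtain ⟨b, hmul', hcomm', hone⟩ := cliff_even_basis q v hv
  have hn : Even (2 * m) := even_two_mul m
  have hn4 : 4 ≤ 2 * m := by omega
  have hmul : ∀ S T, ∃ c : k, (c ≠ 0 ↔ ∀ i ∈ S.1 ∩ T.1, q (v i) ≠ 0) ∧
      b S * b T = c • b (gAdd S T) := fun S T => hmul' S T _ rfl
  have hcomm : ∀ S T, b S * b T = eps k S.1 T.1 • (b T * b S) := hcomm'
  have hd : (2 ^ (m - 1)) ^ 2 = 2 ^ (2 * m - 2) := by
    rw [← pow_mul]; congr 1; omega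
  obtain ⟨hab, hbc⟩ := main_abstract b (fun i => q (v i)) h2 hn hn4 hmul hcomm hone _ hd
  exact ⟨(radical_iff h2 q v hv).trans hab.symm, hbc⟩
end

section
/- Let R be a semilocal principal ideal domain with 2 invertible, K its fraction field, R̂ the completion of R at its Jacobson radical and K̂ the total ring of fractions of R̂. Let (V,q) be a quadratic form over R that is nondegenerate over K, and h the hyperbolic plane. Then every element φ ∈ O(q ⊥ h)(K̂) factors as φ = φ₁φ₂ with φ₁ ∈ O(q ⊥ h)(K) and φ₂ ∈ O(q ⊥ h)(R̂). -/
/-!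
STATEMENT 12: Let R be a semilocal principal ideal domain with 2 invertible, K its
fraction field, R̂ the completion of R at its Jacobson radical and K̂ the total ring of
fractions of R̂. Let (V,q) be a quadratic form over R that is nondegenerate over K, and
h the hyperbolic plane. Then every element φ ∈ O(q ⊥ h)(K̂) factors as φ = φ₁φ₂ with
φ₁ ∈ O(q ⊥ h)(K) and φ₂ ∈ O(q ⊥ h)(R̂).

Since 2 is invertible, the form q ⊥ h is encoded by its Gram matrix
G' = G ⊕ (½)·[[0,1],[1,0]] (G the Gram matrix of q on a free module, nondegenerate over K
meaning det G ≠ 0), and orthogonal-group elements over an R-algebra A are matrices M with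
Mᵀ G' M = G'.  The canonical map K → K̂ is the localization lift along R → K̂, for which
nonzero elements of R must be units in K̂ (they are nonzerodivisors in R̂).
-/

open Matrix

noncomputable section

/-- The completion `R̂` of `R` at its Jacobson radical. -/
abbrev jacobsonCompletion (R : Type*) [CommRing R] : Type _ :=
  AdicCompletion ((⊥ : Ideal R).jacobson) R

/-- The total ring of fractions `K̂` of the completion `R̂`. -/
abbrev jacobsonCompletionFractions (R : Type*) [CommRing R] : Type _ :=
  FractionRing (jacobsonCompletion R)

instance (R : Type*) [CommRing R] : Algebra R (jacobsonCompletionFractions R) :=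
  ((algebraMap (jacobsonCompletion R) (jacobsonCompletionFractions R)).comp
    (algebraMap R (jacobsonCompletion R))).toAlgebra

/-- `M` is an orthogonal matrix for the Gram matrix `H`. -/
def IsOrthogonalFor {A ι : Type*} [CommRing A] [Fintype ι] (H M : Matrix ι ι A) : Prop :=
  Mᵀ * H * M = H

end


theorem adic_facts {R : Type*} [CommRing R] (J : Ideal R) (π : R) (hJ : J = Ideal.span {π}) :
    (∀ (k : ℕ) (a : AdicCompletion J R), ∃ (a0 : R) (b : AdicCompletion J R),
      a = algebraMap R _ a0 + algebraMap R _ (π ^ k) * b) ∧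
    (∀ a : AdicCompletion J R, (∀ k : ℕ, algebraMap R (AdicCompletion J R) (π ^ k) ∣ a) → a = 0) ∧
    (∀ e : ℕ → R, (∀ k, π ^ k ∣ e (k + 1) - e k) → ∃ x : AdicCompletion J R,
      ∀ k, algebraMap R (AdicCompletion J R) (π ^ k) ∣ x - algebraMap R _ (e k)) ∧
    (∀ y : AdicCompletion J R, IsUnit (1 + algebraMap R _ π * y)) ∧
    (∀ x : R, algebraMap R (AdicCompletion J R) π ∣ algebraMap R _ x → π ∣ x) := by
  have hfg : J.FG := ⟨{π}, by simp [hJ]⟩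
  have hpow : ∀ k, J ^ k = Ideal.span {π ^ k} := fun k => by
    rw [hJ, Ideal.span_singleton_pow]
  have key : ∀ (k : ℕ) (x : AdicCompletion J R),
      AdicCompletion.eval J R k x = 0 ↔ algebraMap R (AdicCompletion J R) (π ^ k) ∣ x := by
    intro k x
    rw [← LinearMap.mem_ker, ← AdicCompletion.pow_smul_top_eq_ker_eval hfg, hpow k,
      Submodule.ideal_span_singleton_smul, Submodule.mem_smul_pointwise_iff_exists]
    constructor
    · rintro ⟨y, -, rfl⟩
      exact ⟨y, Algebra.smul_def _ _⟩
    · rintro ⟨y, rfl⟩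
      exact ⟨y, trivial, Algebra.smul_def _ _⟩
  refine ⟨?_, ?_, ?_, ?_, ?_⟩
  · intro k a
    obtain ⟨a0, h0⟩ := Submodule.mkQ_surjective _ (AdicCompletion.eval J R k a)
    have := (key k (a - algebraMap R _ a0)).1 (by
      rw [map_sub, ← h0, AdicCompletion.algebraMap_apply, Algebra.algebraMap_self, RingHom.id_apply]
      erw [AdicCompletion.eval_of]
      simp)
    obtain ⟨b, hb⟩ := this
    exact ⟨a0, b, by rw [← hb]; ring⟩
  · intro a ha
    refine AdicCompletion.ext fun n => ?_
    exact (key n a).2 (ha n)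
  · intro e he
    let s := AdicCompletion.AdicCauchySequence.mk J R e (fun n => by
      rw [SModEq.sub_mem, smul_eq_mul, Ideal.mul_top, hpow, Ideal.mem_span_singleton,
        ← neg_sub, dvd_neg]
      exact he n)
    refine ⟨AdicCompletion.mk J R s, fun k => (key k _).1 ?_⟩
    rw [map_sub, AdicCompletion.algebraMap_apply, Algebra.algebraMap_self, RingHom.id_apply]
    erw [AdicCompletion.eval_of]
    simp [s, AdicCompletion.AdicCauchySequence.mk]
  · intro y
    have := AdicCompletion.isAdicComplete (M := R) hfg
    have : IsAdicComplete (J.map (algebraMap R (AdicCompletion J R))) (AdicCompletion J R) := by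
      rwa [IsAdicComplete.map_algebraMap_iff]
    have h := IsAdicComplete.le_jacobson_bot (J.map (algebraMap R (AdicCompletion J R)))
    have hm : algebraMap R (AdicCompletion J R) π ∈ J.map (algebraMap R (AdicCompletion J R)) :=
      Ideal.mem_map_of_mem _ (by rw [hJ]; exact Ideal.mem_span_singleton_self π)
    have := Ideal.mem_jacobson_bot.1 (h hm) y
    rwa [add_comm]
  · intro x hx
    have := (key 1 (algebraMap R _ x)).2 (by simpa using hx)
    rw [AdicCompletion.algebraMap_apply, Algebra.algebraMap_self, RingHom.id_apply] at this
    erw [AdicCompletion.eval_of] at this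
    rw [Submodule.mkQ_apply, Submodule.Quotient.mk_eq_zero, hpow, smul_eq_mul, Ideal.mul_top,
      Ideal.mem_span_singleton, pow_one] at this
    exact this

theorem struct_facts {R A : Type*} [CommRing R] [IsDomain R] [IsPrincipalIdealRing R] [CommRing A]
    (φ : R →+* A) {ι : Type*} [Fintype ι] [DecidableEq ι] (p : ι → R)
    (hmax : ∀ i, ¬ IsUnit (p i)) (hcop : ∀ i j, i ≠ j → IsCoprime (p i) (p j))
    (hall : ∀ x : R, (∀ i, ¬ p i ∣ x) → IsUnit x) (π : R) (hπ : π = ∏ i, p i)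
    (c1 : ∀ (k : ℕ) (a : A), ∃ (a0 : R) (b : A), a = φ a0 + φ (π ^ k) * b)
    (c2 : ∀ a : A, (∀ k : ℕ, φ (π ^ k) ∣ a) → a = 0)
    (c3 : ∀ e : ℕ → R, (∀ k, π ^ k ∣ e (k + 1) - e k) → ∃ x : A, ∀ k, φ (π ^ k) ∣ x - φ (e k))
    (c4 : ∀ y : A, IsUnit (1 + φ π * y))
    (c5 : ∀ x : R, φ π ∣ φ x → π ∣ x) :
    (∀ r : R, r ≠ 0 → ∀ a : A, ∃ (a0 : R) (b : A), a = φ a0 + φ r * b) ∧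
    (∀ a : A, ∃ (ε u : A) (r : R), ε * ε = ε ∧ IsUnit u ∧ r ≠ 0 ∧ a = ε * u * φ r) := by
  have hdvd : ∀ i, p i ∣ π := fun i => hπ ▸ Finset.dvd_prod_of_mem p (Finset.mem_univ i)
  have hunit : ∀ x : A, (∀ i, ¬ φ (p i) ∣ x) → IsUnit x := by
    intro x hx
    obtain ⟨x0, y, rfl⟩ := c1 1 x
    rw [pow_one] at *
    have h0 : IsUnit x0 := hall x0 fun i hi => hx i
      (dvd_add (map_dvd φ hi) ((map_dvd φ (hdvd i)).mul_right y))
    obtain ⟨v, hv⟩ := h0.exists_right_inv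
    have : φ x0 + φ π * y = φ x0 * (1 + φ π * (φ v * y)) := by
      have : φ x0 * φ v = 1 := by rw [← map_mul, hv, map_one]
      linear_combination (- φ π * y) * this
    rw [this]
    exact (h0.map φ).mul (c4 _)
  have hnu : ∀ i, ¬ IsUnit (φ (p i)) := by
    intro i hi
    obtain ⟨y, hy⟩ := hi.exists_right_inv
    obtain ⟨y0, z, rfl⟩ := c1 1 y
    have h1 : φ π ∣ φ (1 - p i * y0) := ⟨φ (p i) * z, by
      rw [pow_one] at hy
      rw [map_sub, map_one, map_mul]; linear_combination -hy⟩
    have h2 : p i ∣ 1 - p i * y0 := (hdvd i).trans (c5 _ h1)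
    exact hmax i (isUnit_of_dvd_one (by simpa using dvd_add h2 (dvd_mul_right (p i) y0)))
  have hB : ∀ (N : ℕ) (k : ι → ℕ), ∑ i, k i = N → ∀ b : A, (∀ i, ¬ φ (p i) ^ (k i) ∣ b) →
      ∃ (u : A) (r : R), IsUnit u ∧ r ≠ 0 ∧ b = u * φ r := by
    intro N
    induction N with
    | zero =>
      intro k hk b hb
      refine ⟨b, 1, hunit b fun i _ => hb i ?_, one_ne_zero, by simp⟩
      have : k i = 0 := by
        have := Finset.sum_eq_zero_iff.1 hk i (Finset.mem_univ i)
        exact this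
      simp [this]
    | succ N ih =>
      intro k hk b hb
      by_cases h : ∀ i, ¬ φ (p i) ∣ b
      · exact ⟨b, 1, hunit b h, one_ne_zero, by simp⟩
      push Not at h
      obtain ⟨i, b', rfl⟩ := h
      have hki : k i ≠ 0 := fun h => hb i (by simp [h])
      have hpi : p i ≠ 0 := fun h => hb i (by simp [h])
      obtain ⟨u, r, hu, hr, hbr⟩ := ih (Function.update k i (k i - 1)) (by
        have hk2 : k i + ∑ j ∈ Finset.univ.erase i, k j = N + 1 := by
          rw [Finset.add_sum_erase _ _ (Finset.mem_univ i)]; exact hk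
        rw [← Finset.add_sum_erase _ _ (Finset.mem_univ i)]
        rw [Finset.sum_congr rfl (g := fun j => k j) (fun j hj => Function.update_of_ne
          (Finset.ne_of_mem_erase hj) _ _)]
        simp only [Function.update_self]
        omega) b' (by
        intro j hj
        by_cases hji : j = i
        · subst hji
          rw [Function.update_self] at hj
          apply hb j
          obtain ⟨m, hm⟩ := Nat.exists_eq_succ_of_ne_zero hki
          rw [hm] at hj ⊢
          rw [pow_succ']
          exact mul_dvd_mul_left _ hj
        · rw [Function.update_of_ne hji] at hj
          exact hb j (hj.mul_left _))
      exact ⟨u, p i * r, hu, mul_ne_zero hpi hr, by rw [hbr, map_mul]; ring⟩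
  have hid : ∀ i, ∃ ε : A, (∀ k : ℕ, φ (p i) ^ k ∣ 1 - ε) ∧ (∀ j, j ≠ i → ∀ k : ℕ, φ (p j) ^ k ∣ ε)
      ∧ (∀ a, (∀ k : ℕ, φ (p i) ^ k ∣ a) → ε * a = 0) := by
    intro i
    set b := ∏ j ∈ Finset.univ.erase i, p j with hb
    have hcb : π = p i * b := by rw [hπ, Finset.mul_prod_erase _ _ (Finset.mem_univ i)]
    have hco : IsCoprime (p i) b := IsCoprime.prod_right fun j hj =>
      hcop i j (Finset.ne_of_mem_erase hj).symm
    have hk : ∀ k : ℕ, ∃ u v : R, u * p i ^ k + v * b ^ k = 1 := fun k => (hco.pow (m := k) (n := k))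
    choose u v huv using hk
    obtain ⟨x, hx⟩ := c3 (fun k => v k * b ^ k) (by
      intro k
      rw [hcb, mul_pow]
      apply IsCoprime.mul_dvd hco.pow
      · refine ⟨u k - u (k+1) * p i, ?_⟩
        have h1 := huv k
        have h2 := huv (k+1)
        rw [pow_succ (p i)] at h2
        linear_combination h2 - h1
      · exact ⟨v (k+1) * b - v k, by ring⟩)
    have hbx : ∀ k : ℕ, φ b ^ k ∣ x := by
      intro k
      have h1 : φ b ^ k ∣ x - φ (v k * b ^ k) := by
        refine dvd_trans ?_ (hx k)
        rw [hcb, mul_pow, map_mul, map_pow, map_pow]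
        exact dvd_mul_left _ _
      have h2 : φ b ^ k ∣ φ (v k * b ^ k) := by
        rw [map_mul, map_pow]; exact dvd_mul_left _ _
      simpa using dvd_add h1 h2
    have hcx : ∀ k : ℕ, φ (p i) ^ k ∣ 1 - x := by
      intro k
      have h1 : φ (p i) ^ k ∣ x - φ (v k * b ^ k) := by
        refine dvd_trans ?_ (hx k)
        rw [hcb, mul_pow, map_mul, map_pow, map_pow]
        exact dvd_mul_right _ _
      have h2 : φ (p i) ^ k ∣ φ (u k * p i ^ k) := by
        rw [map_mul, map_pow]; exact dvd_mul_left _ _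
      have h3 : φ (u k * p i ^ k) + φ (v k * b ^ k) = 1 := by rw [← map_add, huv, map_one]
      have h4 := dvd_sub h2 h1
      have h5 : φ (u k * p i ^ k) - (x - φ (v k * b ^ k)) = 1 - x := by linear_combination h3
      rwa [h5] at h4
    refine ⟨x, hcx, ?_, ?_⟩
    · intro j hj k
      exact (pow_dvd_pow_of_dvd (map_dvd φ (Finset.dvd_prod_of_mem p
        (Finset.mem_erase.2 ⟨hj, Finset.mem_univ j⟩))) k).trans (hbx k)
    · intro a ha
      apply c2
      intro k
      rw [hcb, mul_pow, map_mul, map_pow, map_pow, mul_comm]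
      exact mul_dvd_mul (hbx k) (ha k)
  choose ε hε1 hε2 hε3 using hid
  have hidem : ∀ i, ε i * ε i = ε i := fun i => by
    have := hε3 i _ (hε1 i)
    linear_combination -this
  have horth : ∀ i j, i ≠ j → ε i * ε j = 0 := fun i j hij => hε3 i _ (hε2 j i hij)
  have hO : OrthogonalIdempotents ε := ⟨hidem, fun i j hij => horth i j hij⟩
  refine ⟨?_, ?_⟩
  · intro r hr
    induction r using UniqueFactorizationMonoid.induction_on_prime with
    | h₁ => exact absurd rfl hr
    | h₂ x hx =>
      intro a
      obtain ⟨v, hv⟩ := hx.exists_right_inv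
      refine ⟨0, φ v * a, ?_⟩
      have : φ x * φ v = 1 := by rw [← map_mul, hv, map_one]
      rw [map_zero]; linear_combination (-a) * this
    | h₃ r q hr0 hq ih =>
      intro a
      have hqi : ∃ i, p i ∣ q := by
        by_contra hcon
        push Not at hcon
        exact hq.not_isUnit (hall q hcon)
      obtain ⟨i, c, hc⟩ := hqi
      have hcu : IsUnit c := (hq.irreducible.isUnit_or_isUnit hc).resolve_left (hmax i)
      obtain ⟨c', hc'⟩ := hcu.exists_right_inv
      have hqπ : q ∣ π := dvd_trans ⟨c', by rw [hc, mul_assoc, hc', mul_one]⟩ (hdvd i)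
      obtain ⟨d, hd⟩ := hqπ
      obtain ⟨a0, b, hab⟩ := c1 1 a
      obtain ⟨b0, b1, hb⟩ := ih hr0 (φ d * b)
      refine ⟨a0 + q * b0, b1, ?_⟩
      rw [hab, pow_one, hd, map_mul, map_add, map_mul, map_mul]
      linear_combination φ q * hb
  · intro a
    classical
    set S : Finset ι := Finset.univ.filter (fun i => ∀ k : ℕ, φ (p i) ^ k ∣ a) with hS
    set η := ∑ i ∈ S, ε i with hη
    have hηη : η * η = η := (hO.isIdempotentElem_sum (s := S))
    have hηa : η * a = 0 := by
      rw [hη, Finset.sum_mul]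
      exact Finset.sum_eq_zero fun i hi => hε3 i a (Finset.mem_filter.1 hi).2
    have hk : ∀ j, ∃ k : ℕ, ¬ φ (p j) ^ k ∣ a + η := by
      intro j
      by_cases hj : j ∈ S
      · refine ⟨1, fun hdj => hnu j (isUnit_of_dvd_one ?_)⟩
        have h1 := (Finset.mem_filter.1 hj).2 1
        have h2 : φ (p j) ^ 1 ∣ ∑ i ∈ S.erase j, ε i := Finset.dvd_sum fun i hi =>
          hε2 i j (Finset.ne_of_mem_erase hi).symm 1
        rw [hη, ← Finset.add_sum_erase _ _ hj] at hdj
        have h3 := dvd_add (dvd_sub (dvd_sub hdj h1) h2) (hε1 j 1)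
        rw [pow_one] at h3
        convert h3 using 1
        ring
      · have : ∃ k : ℕ, ¬ φ (p j) ^ k ∣ a := by
          by_contra hcon
          push Not at hcon
          exact hj (Finset.mem_filter.2 ⟨Finset.mem_univ j, hcon⟩)
        obtain ⟨k, hk⟩ := this
        refine ⟨k, fun hd => hk ?_⟩
        have h2 : φ (p j) ^ k ∣ η := Finset.dvd_sum fun i hi =>
          hε2 i j (fun h => hj (h ▸ hi)) k
        simpa using dvd_sub hd h2
    choose k hk using hk
    obtain ⟨u, r, hu, hr, hur⟩ := hB _ k rfl _ hk
    refine ⟨1 - η, u, r, by linear_combination hηη, hu, hr, ?_⟩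
    linear_combination (1 - η) * hur + hηη + hηa

/-- The reflection matrix; `c` is meant to be the inverse of the norm of `v`. -/
def reflMat {F ι : Type*} [CommRing F] [Fintype ι] [DecidableEq ι] (H : Matrix ι ι F) (c : F)
    (v : ι → F) : Matrix ι ι F := 1 - (2 * c) • vecMulVec v (H *ᵥ v)

section
set_option linter.unusedSectionVars false
variable {F ι : Type*} [CommRing F] [Fintype ι] [DecidableEq ι] (H : Matrix ι ι F)

theorem reflMat_mulVec (c : F) (v x : ι → F) :
    reflMat H c v *ᵥ x = x - (2 * c * ((H *ᵥ v) ⬝ᵥ x)) • v := by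
  rw [reflMat, sub_mulVec, one_mulVec, smul_mulVec, vecMulVec_mulVec]
  ext i
  simp
  ring

theorem bil_symm (hH : Hᵀ = H) (x y : ι → F) : (H *ᵥ x) ⬝ᵥ y = (H *ᵥ y) ⬝ᵥ x := by
  rw [dotProduct_comm, dotProduct_mulVec, ← mulVec_transpose, hH]

theorem mat_ext_bil {M N : Matrix ι ι F} (h : ∀ x, M *ᵥ x = N *ᵥ x) : M = N :=
  Matrix.mulVec_injective (funext h)

/-- orthogonality is equivalent to preservation of the bilinear form -/
theorem orth_iff (M : Matrix ι ι F) :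
    Mᵀ * H * M = H ↔ ∀ x y, (H *ᵥ (M *ᵥ x)) ⬝ᵥ (M *ᵥ y) = (H *ᵥ x) ⬝ᵥ y := by
  have e : ∀ x y : ι → F, (H *ᵥ (M *ᵥ x)) ⬝ᵥ (M *ᵥ y) = ((Mᵀ * H * M) *ᵥ x) ⬝ᵥ y := by
    intro x y
    rw [dotProduct_mulVec, ← mulVec_transpose, mulVec_mulVec, mulVec_mulVec, Matrix.mul_assoc]
  constructor
  · intro h x y
    rw [e, h]
  · intro h
    apply mat_ext_bil
    intro x
    refine dotProduct_eq _ _ fun y => ?_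
    rw [← e, h]

theorem reflMat_orth (hH : Hᵀ = H) (c : F) (v : ι → F) (hc : c * c * ((H *ᵥ v) ⬝ᵥ v) = c) :
    (reflMat H c v)ᵀ * H * reflMat H c v = H := by
  rw [orth_iff]
  intro x y
  simp only [reflMat_mulVec, mulVec_sub, mulVec_smul, sub_dotProduct, dotProduct_sub,
    smul_dotProduct, dotProduct_smul, smul_eq_mul]
  rw [bil_symm H hH x v]
  linear_combination (4 * ((H *ᵥ v) ⬝ᵥ x) * ((H *ᵥ v) ⬝ᵥ y)) * hc

theorem reflMat_sq (c : F) (v : ι → F) (hc : c * ((H *ᵥ v) ⬝ᵥ v) = 1) :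
    reflMat H c v * reflMat H c v = 1 := by
  apply mat_ext_bil
  intro x
  rw [← mulVec_mulVec, one_mulVec]
  simp only [reflMat_mulVec, dotProduct_sub, dotProduct_smul, smul_eq_mul]
  ext i
  simp
  linear_combination (4 * c * ((H *ᵥ v) ⬝ᵥ x) * v i) * hc

theorem orth_mul {M N : Matrix ι ι F} (hM : Mᵀ * H * M = H) (hN : Nᵀ * H * N = H) :
    (M * N)ᵀ * H * (M * N) = H := by
  rw [transpose_mul]
  calc _ = Nᵀ * (Mᵀ * H * M) * N := by simp only [Matrix.mul_assoc]
    _ = H := by rw [hM, hN]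

/-- Elimination. -/
theorem elimination (hH : Hᵀ = H) (T : Submonoid (Matrix ι ι F))
    (hT : ∀ c v, c * ((H *ᵥ v) ⬝ᵥ v) = 1 → reflMat H c v ∈ T)
    (i2 : F) (hi2 : i2 * 2 = 1)
    (hF : ∀ a : F, ∃ ε : F, ε * ε = ε ∧ ε * a = a ∧ ∃ b, b * (a + (1 - ε)) = 1)
    {κ : Type*} [DecidableEq κ] (w : κ → ι → F) (d : κ → F)
    (hw : ∀ k, d k * ((H *ᵥ w k) ⬝ᵥ w k) = 1)
    (hww : ∀ k l, k ≠ l → (H *ᵥ w k) ⬝ᵥ w l = 0)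
    (v0 : ι → F) (d0 : F) (hv0 : d0 * ((H *ᵥ v0) ⬝ᵥ v0) = 1) (hwv : ∀ k, (H *ᵥ w k) ⬝ᵥ v0 = 0)
    (s : Finset κ) (M : Matrix ι ι F) (hM : Mᵀ * H * M = H) :
    ∃ t ∈ T, ∃ M' : Matrix ι ι F, M'ᵀ * H * M' = H ∧ M = t * M' ∧ ∀ k ∈ s, M' *ᵥ w k = w k := by
  induction s using Finset.induction_on with
  | empty => exact ⟨1, T.one_mem, M, hM, by simp, by simp⟩
  | insert k s hks ih =>
    obtain ⟨t, ht, N, hN, hMN, hfix⟩ := ih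
    have hNb := (orth_iff H N).1 hN
    set x := N *ᵥ w k with hx
    set q := (H *ᵥ w k) ⬝ᵥ w k with hq
    have hxx : (H *ᵥ x) ⬝ᵥ x = q := hNb _ _
    set m := (H *ᵥ w k) ⬝ᵥ x with hm
    have hxw : (H *ᵥ x) ⬝ᵥ w k = m := bil_symm H hH _ _
    -- norm of x - w is 2 (q - m)
    obtain ⟨ε, hεε, hεa, b, hb⟩ := hF (2 * (q - m))
    -- first reflection
    let v : ι → F := x + (1 - 2 * ε) • w k
    have hvv : (H *ᵥ v) ⬝ᵥ v = 2 * (q - m) + (1 - ε) * (4 * q) := by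
      simp only [v, mulVec_add, mulVec_smul, add_dotProduct, dotProduct_add, smul_dotProduct,
        dotProduct_smul, smul_eq_mul, hxx, hxw, ← hm, ← hq]
      linear_combination (4 * q) * hεε + 2 * hεa
    have hc : ∃ c, c * ((H *ᵥ v) ⬝ᵥ v) = 1 := by
      refine ⟨ε * b + (1 - ε) * (i2 * i2 * d k), ?_⟩
      rw [hvv]
      have h1 := hw k
      rw [← hq] at h1
      have hD : 4 * (i2 * i2 * d k) * q = 1 := by
        linear_combination (4 * i2 * i2) * h1 + (2 * i2 + 1) * hi2
      linear_combination ε * hb + b * hεε - 4 * q * b * hεε - (i2 * i2 * d k) * hεa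
        + (1 - ε) * hD + (4 * (i2 * i2 * d k) * q) * hεε
    obtain ⟨c, hc⟩ := hc
    let v' : ι → F := ε • v0 + (1 - ε) • w k
    have hvw : (H *ᵥ v0) ⬝ᵥ w k = 0 := by rw [bil_symm H hH]; exact hwv k
    have hc' : ∃ c', c' * ((H *ᵥ v') ⬝ᵥ v') = 1 ∧ c' * ((1 - ε) * q) = 1 - ε := by
      refine ⟨ε * d0 + (1 - ε) * d k, ?_, ?_⟩
      swap
      · have := hw k
        rw [← hq] at this
        linear_combination (q * d k - q * d0) * hεε + (1 - ε) * this
      have : (H *ᵥ v') ⬝ᵥ v' = ε * ((H *ᵥ v0) ⬝ᵥ v0) + (1 - ε) * q := by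
        simp only [v', mulVec_add, mulVec_smul, add_dotProduct, dotProduct_add, smul_dotProduct,
          dotProduct_smul, smul_eq_mul, hvw, hwv, ← hq]
        linear_combination ((H *ᵥ v0) ⬝ᵥ v0 + q) * hεε
      rw [this]
      have := hw k
      rw [← hq] at this
      linear_combination (d0 * ((H *ᵥ v0) ⬝ᵥ v0) + d k * q - d0 * q - d k * ((H *ᵥ v0) ⬝ᵥ v0)) * hεε
        + ε * hv0 + (1 - ε) * this
    obtain ⟨c', hc', hE⟩ := hc'
    refine ⟨t * (reflMat H c v * reflMat H c' v'), T.mul_mem ht (T.mul_mem (hT _ _ hc) (hT _ _ hc')),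
      reflMat H c' v' * (reflMat H c v * N), orth_mul H (reflMat_orth H hH _ _ (by rw [mul_assoc, hc', mul_one]))
        (orth_mul H (reflMat_orth H hH _ _ (by rw [mul_assoc, hc, mul_one])) hN), ?_, ?_⟩
    · have h1 := reflMat_sq H c v hc
      have h2 := reflMat_sq H c' v' hc'
      calc M = t * (reflMat H c v * (reflMat H c' v' * reflMat H c' v') * reflMat H c v) * N := by
            rw [h2, mul_one, h1, mul_one, hMN]
        _ = _ := by simp only [mul_assoc]
    · intro l hl
      rw [← mulVec_mulVec, ← mulVec_mulVec]
      rcases Finset.mem_insert.1 hl with rfl | hl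
      · rw [← hx]
        have h1 : reflMat H c v *ᵥ x = (2 * ε - 1) • w l := by
          rw [reflMat_mulVec]
          have e1 : (H *ᵥ v) ⬝ᵥ x = q + (1 - 2 * ε) * m := by
            simp only [v, mulVec_add, mulVec_smul, add_dotProduct, smul_dotProduct, smul_eq_mul,
              hxx, ← hm]
          have e2 : 2 * ((H *ᵥ v) ⬝ᵥ x) = (H *ᵥ v) ⬝ᵥ v := by
            rw [e1, hvv]
            linear_combination 2 * hεa
          have e3 : 2 * c * ((H *ᵥ v) ⬝ᵥ x) = 1 := by
            linear_combination hc + c * e2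
          rw [e3]
          ext i
          simp [v]
          ring
        rw [h1, reflMat_mulVec]
        have e1 : (H *ᵥ v') ⬝ᵥ w l = (1 - ε) * q := by
          simp only [v', mulVec_add, mulVec_smul, add_dotProduct, smul_dotProduct, smul_eq_mul,
              hvw, ← hq]
          ring
        rw [dotProduct_smul, e1]
        ext i
        simp [v']
        linear_combination (-2 * (2 * ε - 1) * (ε * v0 i + (1 - ε) * w l i)) * hE
          + (2 * (2 * ε - 1) * v0 i + 2 * (3 - 2 * ε) * w l i) * hεε
      · have hkl : l ≠ k := fun h => hks (h ▸ hl)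
        rw [hfix l hl]
        have e1 : (H *ᵥ x) ⬝ᵥ w l = 0 := by
          have := hNb (w k) (w l)
          rwa [hfix l hl, hww k l hkl.symm] at this
        have e2 : (H *ᵥ v0) ⬝ᵥ w l = 0 := by rw [bil_symm H hH]; exact hwv l
        have e3 : reflMat H c v *ᵥ w l = w l := by
          rw [reflMat_mulVec]
          simp [v, mulVec_add, mulVec_smul, e1, hww k l hkl.symm]
        rw [e3, reflMat_mulVec]
        simp [v', mulVec_add, mulVec_smul, e2, hww k l hkl.symm]
end

theorem reflMat_map {K F ι : Type*} [CommRing K] [CommRing F] [Fintype ι] [DecidableEq ι]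
    (j : K →+* F) (H : Matrix ι ι K) (c : K) (v : ι → K) :
    (reflMat H c v).map j = reflMat (H.map j) (j c) (fun i => j (v i)) := by
  ext a b
  simp [reflMat, vecMulVec_apply, Matrix.one_apply, mulVec, dotProduct, apply_ite j, map_ofNat]

theorem bil_map {K F ι : Type*} [CommRing K] [CommRing F] [Fintype ι]
    (j : K →+* F) (H : Matrix ι ι K) (v w : ι → K) :
    (H.map j *ᵥ (fun i => j (v i))) ⬝ᵥ (fun i => j (w i)) = j ((H *ᵥ v) ⬝ᵥ w) := by
  simp [mulVec, dotProduct]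

set_option maxHeartbeats 1000000 in
theorem topo_part {R K A F ι : Type*} [CommRing R] [IsDomain R] [Field K] [Algebra R K]
    [IsFractionRing R K] [CommRing A] [CommRing F] [Nontrivial F] [Fintype ι] [DecidableEq ι]
    (φ : R →+* A) (ψ : A →+* F) (j : K →+* F)
    (hj : ∀ r, j (algebraMap R K r) = ψ (φ r))
    (h1 : ∀ x : F, ∃ r : R, r ≠ 0 ∧ ∃ a : A, ψ (φ r) * x = ψ a)
    (h2 : ∀ r : R, r ≠ 0 → ∀ a : A, ∃ (a0 : R) (b : A), a = φ a0 + φ r * b)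
    (h4 : ∃ r : R, r ≠ 0 ∧ ∀ y : A, IsUnit (1 + φ r * y))
    (h5 : ∀ r : R, r ≠ 0 → IsUnit (ψ (φ r)))
    (H : Matrix ι ι K) (hH : Hᵀ = H) (hdet : H.det ≠ 0) :
    ∃ T : Submonoid (Matrix ι ι F),
      (∀ c v, c * ((H.map j *ᵥ v) ⬝ᵥ v) = 1 → reflMat (H.map j) c v ∈ T) ∧
      ∀ M ∈ T, Mᵀ * H.map j * M = H.map j → ∃ (M₁ : Matrix ι ι K) (U : Matrix ι ι A),
        M₁ᵀ * H * M₁ = H ∧ M = M₁.map j * U.map ψ := by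
  classical
  let B : {r : R // r ≠ 0} → AddSubgroup F := fun r =>
    ((AddMonoidHom.mulLeft (ψ (φ r.1))).comp ψ.toAddMonoidHom).range
  have hBmem : ∀ r x, x ∈ B r ↔ ∃ a, ψ (φ r.1) * ψ a = x := fun r x => Iff.rfl
  have hB : RingSubgroupsBasis B := by
    apply RingSubgroupsBasis.of_comm
    · rintro ⟨r, hr⟩ ⟨s, hs⟩
      refine ⟨⟨r * s, mul_ne_zero hr hs⟩, ?_⟩
      rintro x ⟨a, rfl⟩
      refine ⟨(hBmem _ _).2 ⟨φ s * a, ?_⟩, (hBmem _ _).2 ⟨φ r * a, ?_⟩⟩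
      · simp [mul_assoc]
      · simp [mul_assoc, mul_left_comm]
    · rintro ⟨r, hr⟩
      refine ⟨⟨r, hr⟩, ?_⟩
      rintro _ ⟨x, ⟨a, rfl⟩, y, ⟨b, rfl⟩, rfl⟩
      refine (hBmem _ _).2 ⟨a * φ r * b, ?_⟩
      simp [mul_assoc]
    · rintro x ⟨r, hr⟩
      obtain ⟨s, hs, a, ha⟩ := h1 x
      refine ⟨⟨r * s, mul_ne_zero hr hs⟩, ?_⟩
      rintro _ ⟨b, rfl⟩
      refine (hBmem _ _).2 ⟨a * b, ?_⟩
      simp only [map_mul, ← ha, AddMonoidHom.coe_comp, AddMonoidHom.coe_mulLeft,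
        Function.comp_apply, RingHom.toAddMonoidHom_eq_coe, AddMonoidHom.coe_coe]
      ring
  obtain ⟨r4, hr4, h4⟩ := h4
  have : Nonempty {r : R // r ≠ 0} := ⟨⟨r4, hr4⟩⟩
  let : TopologicalSpace F := hB.topology
  have : IsTopologicalRing F := hB.toRingFilterBasis.isTopologicalRing
  have hbas : ∀ a : F, (nhds a).HasBasis (fun _ => True) fun i => {b | b - a ∈ B i} :=
    fun a => hB.hasBasis_nhds a
  -- density
  have hdense : DenseRange j := by
    intro x
    rw [mem_closure_iff_nhds_basis (hbas x)]
    rintro ⟨r, hr⟩ -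
    obtain ⟨s, hs, a, ha⟩ := h1 x
    obtain ⟨a0, b, hab⟩ := h2 (s * r) (mul_ne_zero hs hr) a
    refine ⟨_, ⟨algebraMap R K a0 / algebraMap R K s, rfl⟩, (hBmem _ _).2 ⟨-b, ?_⟩⟩
    apply (h5 s hs).mul_left_cancel
    have hs' : algebraMap R K s ≠ 0 := by
      simpa using hs
    have : ψ (φ s) * j (algebraMap R K a0 / algebraMap R K s) = ψ (φ a0) := by
      rw [← hj, ← hj, ← map_mul, mul_div_cancel₀ _ hs']
    rw [mul_sub, this, ha, hab]
    simp
    ring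
  -- inversion near one
  have hunit1 : ∀ᶠ x in nhds (1 : F), IsUnit x := by
    rw [(hbas 1).eventually_iff]
    refine ⟨⟨r4, hr4⟩, trivial, ?_⟩
    rintro x ⟨a, ha⟩
    have hx : x = ψ (1 + φ r4 * a) := by
      have : ψ (φ r4) * ψ a = x - 1 := ha
      simp [this]
    rw [hx]
    exact (h4 a).map ψ
  have hinv1 : Filter.Tendsto (Ring.inverse : F → F) (nhds 1) (nhds 1) := by
    rw [(hbas 1).tendsto_iff (hbas 1)]
    rintro ⟨r, hr⟩ -
    refine ⟨⟨r * r4, mul_ne_zero hr hr4⟩, trivial, ?_⟩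
    rintro x ⟨a, ha⟩
    have ha' : ψ (φ (r * r4)) * ψ a = x - 1 := ha
    obtain ⟨y, hy⟩ := (h4 (φ r * a)).exists_right_inv
    have hx : x = ψ (1 + φ r4 * (φ r * a)) := by
      have : x = 1 + ψ (φ (r * r4)) * ψ a := by rw [ha']; ring
      rw [this]; simp; ring
    have hxy : x * ψ y = 1 := by rw [hx, ← map_mul, hy, map_one]
    have hxi : Ring.inverse x = ψ y := by
      have hu : IsUnit x := IsUnit.of_mul_eq_one _ hxy
      apply hu.mul_left_cancel
      rw [Ring.mul_inverse_cancel _ hu, hxy]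
    refine (hBmem _ _).2 ⟨-(φ r4 * a * y), ?_⟩
    rw [hxi]
    have h3 : ψ (φ (r * r4)) = ψ (φ r) * ψ (φ r4) := by simp
    simp only [map_neg, map_mul]
    rw [h3] at ha'
    linear_combination (-ψ y) * ha' - hxy
  have hinv : ∀ c q : F, c * q = 1 → Filter.Tendsto (Ring.inverse : F → F) (nhds q) (nhds c) := by
    intro c q hcq
    have e : (Ring.inverse : F → F) = fun x => c * Ring.inverse (c * x) := by
      funext x
      rw [Ring.mul_inverse_rev]
      have hu : IsUnit c := IsUnit.of_mul_eq_one _ hcq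
      rw [mul_left_comm, Ring.mul_inverse_cancel _ hu, mul_one]
    rw [e]
    have t1 : Filter.Tendsto (fun x => c * x) (nhds q) (nhds 1) := by
      rw [← hcq]; exact (continuous_const.mul continuous_id).tendsto q
    simpa using (hinv1.comp t1).const_mul c
  let T0 : Submonoid (Matrix ι ι F) :=
    { carrier := {X | ∃ M0 : Matrix ι ι K, M0ᵀ * H * M0 = H ∧ X = M0.map j}
      one_mem' := ⟨1, by simp, by simp⟩
      mul_mem' := by
        rintro _ _ ⟨a, ha, rfl⟩ ⟨b, hb, rfl⟩
        exact ⟨a * b, orth_mul H ha hb, by rw [Matrix.map_mul]⟩ }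
  refine ⟨T0.topologicalClosure, ?_, ?_⟩
  · intro c v hc
    let N : (ι → F) → F := fun v => (H.map j *ᵥ v) ⬝ᵥ v
    have hN : Continuous N := by
      simp only [N]; fun_prop
    let f : (ι → F) → Matrix ι ι F := fun v => reflMat (H.map j) (Ring.inverse (N v)) v
    have hu : IsUnit (N v) := IsUnit.of_mul_eq_one c (by rw [mul_comm]; exact hc)
    have hci : Ring.inverse (N v) = c := by
      apply hu.mul_left_cancel
      rw [Ring.mul_inverse_cancel _ hu, mul_comm]; exact hc.symm
    have hf : Filter.Tendsto f (nhds v) (nhds (reflMat (H.map j) c v)) := by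
      have t1 : Filter.Tendsto (fun v => Ring.inverse (N v)) (nhds v) (nhds c) :=
        (hinv c (N v) hc).comp (hN.tendsto v)
      have t2 : Filter.Tendsto (fun v : ι → F => vecMulVec v (H.map j *ᵥ v)) (nhds v)
          (nhds (vecMulVec v (H.map j *ᵥ v))) :=
        Continuous.tendsto (by fun_prop) v
      exact tendsto_const_nhds.sub ((tendsto_const_nhds.mul t1).smul t2)
    have hev : ∀ᶠ x in nhds v, IsUnit (N x) := by
      have t1 : Filter.Tendsto (fun x => c * N x) (nhds v) (nhds 1) := by
        rw [← hc]; exact (continuous_const.mul hN).tendsto v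
      filter_upwards [t1.eventually hunit1] with x hx
      exact isUnit_of_mul_isUnit_right hx
    have hd : DenseRange (fun (y : ι → K) i => j (y i)) := DenseRange.piMap (fun _ => hdense)
    change _ ∈ closure (T0 : Set (Matrix ι ι F))
    rw [mem_closure_iff_nhds]
    intro t ht
    obtain ⟨_, ⟨hy1, hy2⟩, y, rfl⟩ := mem_closure_iff_nhds.1 (hd v) _
      (Filter.inter_mem (hf ht) hev)
    refine ⟨_, hy1, reflMat H (((H *ᵥ y) ⬝ᵥ y)⁻¹) y, ?_, ?_⟩
    all_goals
      have hy3 : N (fun i => j (y i)) = j ((H *ᵥ y) ⬝ᵥ y) := bil_map j H y y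
      have hne : (H *ᵥ y) ⬝ᵥ y ≠ 0 := by
        intro h0
        have : IsUnit (N (fun i => j (y i))) := hy2
        rw [hy3, h0, map_zero] at this
        exact not_isUnit_zero this
    · exact reflMat_orth H hH _ _ (by rw [mul_assoc, inv_mul_cancel₀ hne, mul_one])
    · rw [reflMat_map]
      simp only [f]
      rw [hy3]
      congr 1
      have hu' : IsUnit (j ((H *ᵥ y) ⬝ᵥ y)) := (IsUnit.mk0 _ hne).map j
      apply hu'.mul_left_cancel
      rw [Ring.mul_inverse_cancel _ hu', ← map_mul, mul_inv_cancel₀ hne, map_one]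
  · intro M hMT hM
    let Hi : Matrix ι ι F := (H⁻¹).map j
    have hHi : Hi * H.map j = 1 := by
      rw [← Matrix.map_mul, Matrix.nonsing_inv_mul _ (IsUnit.mk0 _ hdet)]
      simp
    let g : Matrix ι ι F → Matrix ι ι F := fun X => Hi * (Xᵀ * H.map j * M)
    have hg : Continuous g := by
      simp only [g]; fun_prop
    have hgM : g M = 1 := by simp only [g]; rw [hM, hHi]
    have hV : {Y : Matrix ι ι F | ∀ a b, Y a b - (1 : Matrix ι ι F) a b ∈ B ⟨1, one_ne_zero⟩} ∈
        nhds (1 : Matrix ι ι F) := by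
      have : ∀ a b, ∀ᶠ Y in nhds (1 : Matrix ι ι F),
          Y a b - (1 : Matrix ι ι F) a b ∈ B ⟨1, one_ne_zero⟩ := by
        intro a b
        have t : Filter.Tendsto (fun Y : Matrix ι ι F => Y a b) (nhds 1)
            (nhds ((1 : Matrix ι ι F) a b)) :=
          Continuous.tendsto (by fun_prop) _
        have hm := (hbas ((1 : Matrix ι ι F) a b)).mem_of_mem (i := ⟨1, one_ne_zero⟩) trivial
        exact t hm
      have h2 : ∀ᶠ Y in nhds (1 : Matrix ι ι F), ∀ a b,
          Y a b - (1 : Matrix ι ι F) a b ∈ B ⟨1, one_ne_zero⟩ := by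
        rw [Filter.eventually_all]
        intro a
        rw [Filter.eventually_all]
        intro b
        exact this a b
      exact h2
    have hpre : g ⁻¹' _ ∈ nhds M := hg.continuousAt (hgM.symm ▸ hV)
    obtain ⟨X, hX, M0, hM0, rfl⟩ := mem_closure_iff_nhds.1 hMT _ hpre
    have hX' : ∀ a b, ∃ y : A, g (M0.map j) a b = ψ y := by
      intro a b
      obtain ⟨y, hy⟩ := (hBmem _ _).1 (hX a b)
      refine ⟨(1 : Matrix ι ι A) a b + y, ?_⟩
      have : g (M0.map j) a b = (1 : Matrix ι ι F) a b + ψ (φ 1) * ψ y := by rw [hy, hgM]; ring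
      rw [this, map_add]
      simp [Matrix.one_apply, apply_ite ψ]
    choose U hU using hX'
    refine ⟨M0, Matrix.of U, hM0, ?_⟩
    have e1 : (Matrix.of U).map ψ = g (M0.map j) := by
      ext a b
      simp [hU]
    rw [e1]
    have e2 : (Hi * (M0.map j)ᵀ * H.map j) * M0.map j = 1 := by
      have : (M0.map j)ᵀ * H.map j * M0.map j = H.map j := by
        rw [← transpose_map, ← Matrix.map_mul, ← Matrix.map_mul, hM0]
      rw [Matrix.mul_assoc, Matrix.mul_assoc, ← Matrix.mul_assoc _ (H.map j), this, hHi]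
    have e3 := mul_eq_one_comm.1 e2
    simp only [g]
    calc M = (M0.map j * (Hi * (M0.map j)ᵀ * H.map j)) * M := by rw [e3, one_mul]
      _ = _ := by simp only [Matrix.mul_assoc]

theorem exists_diag {K : Type*} [Field K] (h2 : (2 : K) ≠ 0) (n : ℕ) (G : Matrix (Fin n) (Fin n) K)
    (hG : Gᵀ = G) (hdet : G.det ≠ 0) :
    ∃ (P : Matrix (Fin n ⊕ Fin 2) (Fin n ⊕ Fin 2) K) (D : Fin n ⊕ Fin 2 → K),
      Pᵀ * (Matrix.fromBlocks G 0 0 ((2 : K)⁻¹ • !![0, 1; 1, 0])) * P = Matrix.diagonal D ∧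
      (∀ i, D i ≠ 0) ∧ P.det ≠ 0 ∧ D (Sum.inr 1) = -1 ∧
      ∀ i, P i (Sum.inr 1) = Sum.elim (fun _ => 0) ![1, -1] i := by
  have : Invertible (2 : K) := invertibleOfNonzero h2
  have hs : LinearMap.BilinForm.IsSymm (Matrix.toBilin' G) := by
    constructor
    intro x y
    rw [Matrix.toBilin'_apply', Matrix.toBilin'_apply', dotProduct_mulVec, ← mulVec_transpose, hG,
      dotProduct_comm]
  obtain ⟨b0, hb0⟩ := LinearMap.BilinForm.exists_orthogonal_basis
    (LinearMap.BilinForm.isSymm_iff.1 hs)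
  let b := b0.reindex (finCongr (Module.finrank_fin_fun K))
  have hb : ∀ i j, i ≠ j → Matrix.toBilin' G (b i) (b j) = 0 := by
    intro i j hij
    simp only [b, Module.Basis.reindex_apply]
    exact hb0 (fun h => hij ((finCongr _).symm.injective h))
  let P0 := (Pi.basisFun K (Fin n)).toMatrix b
  have hP0 : P0.det ≠ 0 := by
    have := (Pi.basisFun K (Fin n)).toMatrix_mul_toMatrix_flip b
    intro h0
    have h1 := congrArg Matrix.det this
    rw [Matrix.det_mul, h0, zero_mul, Matrix.det_one] at h1
    exact zero_ne_one h1
  have hPG : P0ᵀ * G * P0 = Matrix.diagonal (fun i => Matrix.toBilin' G (b i) (b i)) := by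
    have e : ∀ i j, (P0ᵀ * G * P0) i j = Matrix.toBilin' G (b i) (b j) := by
      intro i j
      rw [Matrix.toBilin'_apply', Matrix.mul_assoc]
      rfl
    ext i j
    rw [e]
    by_cases hij : i = j
    · subst hij; simp
    · rw [hb i j hij, Matrix.diagonal_apply_ne _ hij]
  have hd : ∀ i, Matrix.toBilin' G (b i) (b i) ≠ 0 := by
    have h1 := congrArg Matrix.det hPG
    rw [Matrix.det_mul, Matrix.det_mul, Matrix.det_transpose, Matrix.det_diagonal] at h1
    have h3 : ∏ i, Matrix.toBilin' G (b i) (b i) ≠ 0 := by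
      rw [← h1]; exact mul_ne_zero (mul_ne_zero hP0 hdet) hP0
    intro i
    exact Finset.prod_ne_zero_iff.1 h3 i (Finset.mem_univ i)
  refine ⟨Matrix.fromBlocks P0 0 0 !![1, 1; 1, -1],
    Sum.elim (fun i => Matrix.toBilin' G (b i) (b i)) ![1, -1], ?_, ?_, ?_, ?_, ?_⟩
  · rw [Matrix.fromBlocks_transpose, Matrix.fromBlocks_multiply, Matrix.fromBlocks_multiply]
    simp only [Matrix.transpose_zero, Matrix.mul_zero, Matrix.zero_mul, add_zero, zero_add, hPG]
    rw [← Matrix.fromBlocks_diagonal]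
    congr 1
    have h22 : (2 : K)⁻¹ + 2⁻¹ = 1 := by rw [← two_mul]; exact mul_inv_cancel₀ h2
    ext i j
    fin_cases i <;> fin_cases j <;>
      simp [Matrix.mul_apply, Fin.sum_univ_two, Matrix.transpose_apply] <;>
      first | exact h22 | linear_combination -h22
  · rintro (i | i)
    · exact hd i
    · fin_cases i <;> simp
  · rw [Matrix.det_fromBlocks_zero₂₁]
    refine mul_ne_zero hP0 ?_
    rw [Matrix.det_fin_two_of]
    intro h
    apply h2
    linear_combination -h
  · simp
  · rintro (i | i)
    · simp
    · fin_cases i <;> simp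

theorem bil_col {F ι : Type*} [CommRing F] [Fintype ι] [DecidableEq ι] (H P : Matrix ι ι F) (hH : Hᵀ = H) (k l : ι) :
    (H *ᵥ (fun i => P i k)) ⬝ᵥ (fun i => P i l) = (Pᵀ * H * P) k l := by
  rw [bil_symm H hH, Matrix.mul_assoc, dotProduct_comm]
  rfl

set_option maxHeartbeats 1000000 in
theorem main_abs {R K A F : Type*} [CommRing R] [IsDomain R] [Field K] [Algebra R K]
    [IsFractionRing R K] [CommRing A] [CommRing F] 
    (φ : R →+* A) (ψ : A →+* F) (j : K →+* F) (hψ : Function.Injective ψ)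
    (hj : ∀ r, j (algebraMap R K r) = ψ (φ r))
    (h1 : ∀ x : F, ∃ r : R, r ≠ 0 ∧ ∃ a : A, ψ (φ r) * x = ψ a)
    (h2 : ∀ r : R, r ≠ 0 → ∀ a : A, ∃ (a0 : R) (b : A), a = φ a0 + φ r * b)
    (h3 : ∀ a : F, ∃ ε : A, ε * ε = ε ∧ ψ ε * a = a ∧ ∃ b, b * (a + (1 - ψ ε)) = 1)
    (h4 : (∃ r : R, r ≠ 0 ∧ ∀ y : A, IsUnit (1 + φ r * y)) ∨ ∀ r : R, r ≠ 0 → IsUnit r)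
    (h5 : ∀ r : R, r ≠ 0 → IsUnit (ψ (φ r)))
    (i2 : R) (hi2 : i2 * 2 = 1)
    (n : ℕ) (G : Matrix (Fin n) (Fin n) R) (hsymm : Gᵀ = G) (hnondeg : G.det ≠ 0)
    (G' : Matrix (Fin n ⊕ Fin 2) (Fin n ⊕ Fin 2) R)
    (hG' : G' = Matrix.fromBlocks G 0 0 (i2 • !![0, 1; 1, 0]))
    (M : Matrix (Fin n ⊕ Fin 2) (Fin n ⊕ Fin 2) F)
    (hM : Mᵀ * G'.map (fun r => ψ (φ r)) * M = G'.map (fun r => ψ (φ r))) :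
    ∃ (M₁ : Matrix (Fin n ⊕ Fin 2) (Fin n ⊕ Fin 2) K)
      (M₂ : Matrix (Fin n ⊕ Fin 2) (Fin n ⊕ Fin 2) A),
      M₁ᵀ * G'.map (algebraMap R K) * M₁ = G'.map (algebraMap R K) ∧
      M₂ᵀ * G'.map φ * M₂ = G'.map φ ∧ M = M₁.map j * M₂.map ψ := by
  have hHA : (G'.map φ).map ψ = G'.map (fun r => ψ (φ r)) := by ext; simp
  have hinj : Function.Injective (fun X : Matrix (Fin n ⊕ Fin 2) (Fin n ⊕ Fin 2) A => X.map ψ) :=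
    Matrix.map_injective hψ
  have hpull : ∀ U : Matrix (Fin n ⊕ Fin 2) (Fin n ⊕ Fin 2) A,
      (U.map ψ)ᵀ * G'.map (fun r => ψ (φ r)) * U.map ψ = G'.map (fun r => ψ (φ r)) →
      Uᵀ * G'.map φ * U = G'.map φ := by
    intro U hU
    apply hinj
    simp only
    rw [Matrix.map_mul, Matrix.map_mul, hHA, transpose_map, hU]
  rcases subsingleton_or_nontrivial F with hF | hF
  · exact ⟨1, 1, by simp, by simp, Subsingleton.elim _ _⟩
  rcases h4 with h4 | h4
  swap
  · have hsurj : ∀ x : F, ∃ a, ψ a = x := by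
      intro x
      obtain ⟨r, hr, a, ha⟩ := h1 x
      obtain ⟨s, hs⟩ := (h4 r hr).exists_right_inv
      refine ⟨φ s * a, ?_⟩
      rw [map_mul, ← ha]
      have : ψ (φ r) * ψ (φ s) = 1 := by rw [← map_mul, ← map_mul, hs, map_one, map_one]
      linear_combination x * this
    choose U hU using fun a b => hsurj (M a b)
    have hUM : (Matrix.of U).map ψ = M := by ext a b; simp [hU]
    exact ⟨1, Matrix.of U, by simp, hpull _ (by rw [hUM, hM]), by simp [hUM]⟩
  set HK := G'.map (algebraMap R K) with hHK
  have hHF : HK.map j = G'.map (fun r => ψ (φ r)) := by ext; simp [hHK, hj]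
  have hG's : G'ᵀ = G' := by
    rw [hG', Matrix.fromBlocks_transpose, hsymm]
    congr 1
    ext a b
    fin_cases a <;> fin_cases b <;> simp
  have hHKs : HKᵀ = HK := by rw [hHK, ← transpose_map, hG's]
  have hi2K : algebraMap R K i2 * 2 = 1 := by
    have := congrArg (algebraMap R K) hi2
    rwa [map_mul, map_ofNat, map_one] at this
  have h2K : (2 : K) ≠ 0 := fun h => by rw [h, mul_zero] at hi2K; exact zero_ne_one hi2K
  obtain ⟨P, D, hPD, hD, hPdet, hD1, hPv⟩ := exists_diag h2K n (G.map (algebraMap R K))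
    (by rw [← transpose_map, hsymm]) (by
      have : (G.map (algebraMap R K)).det = algebraMap R K G.det :=
        ((algebraMap R K).map_det G).symm
      rw [this]
      simpa using hnondeg)
  have hHKb : Matrix.fromBlocks (G.map (algebraMap R K)) 0 0 ((2 : K)⁻¹ • !![0, 1; 1, 0]) = HK := by
    have hi : algebraMap R K i2 = 2⁻¹ := eq_inv_of_mul_eq_one_left hi2K
    rw [hHK, hG', Matrix.fromBlocks_map]
    congr 1
    · ext; simp
    · ext; simp
    · ext a b
      fin_cases a <;> fin_cases b <;> simp [hi]
  rw [hHKb] at hPD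
  have hHKdet : HK.det ≠ 0 := by
    intro h0
    have := congrArg Matrix.det hPD
    rw [Matrix.det_mul, Matrix.det_mul, h0, mul_zero, zero_mul, Matrix.det_diagonal] at this
    exact Finset.prod_ne_zero_iff.2 (fun i _ => hD i) this.symm
  obtain ⟨T, hTr, hTf⟩ := topo_part φ ψ j hj h1 h2 h4 h5 HK hHKs hHKdet
  set H := HK.map j with hH
  have hHs : Hᵀ = H := by rw [hH, ← transpose_map, hHKs]
  have hi2F : ψ (φ i2) * 2 = 1 := by
    have := congrArg (fun r => ψ (φ r)) hi2
    simpa [map_ofNat] using this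
  let O : Submonoid (Matrix (Fin n ⊕ Fin 2) (Fin n ⊕ Fin 2) F) :=
    { carrier := {X | Xᵀ * H * X = H}
      one_mem' := by simp
      mul_mem' := fun ha hb => orth_mul H ha hb }
  set PF := P.map j with hPF
  have hPDF : PFᵀ * H * PF = Matrix.diagonal (fun i => j (D i)) := by
    rw [hPF, hH, ← transpose_map, ← Matrix.map_mul, ← Matrix.map_mul, hPD,
      Matrix.diagonal_map (map_zero j)]
  have hPFu : IsUnit PF.det := by
    have : PF.det = j P.det := (j.map_det P).symm
    rw [this]; exact (IsUnit.mk0 _ hPdet).map j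
  have hHu : IsUnit H.det := by
    have : H.det = j HK.det := (j.map_det HK).symm
    rw [this]; exact (IsUnit.mk0 _ hHKdet).map j
  let o : Fin n ⊕ Fin 2 := Sum.inr 1
  let col : Fin n ⊕ Fin 2 → (Fin n ⊕ Fin 2 → F) := fun k i => PF i k
  have hcol : ∀ k l, (H *ᵥ col k) ⬝ᵥ col l = if k = l then j (D k) else 0 := by
    intro k l
    simp only [col]
    rw [bil_col H PF hHs, hPDF, Matrix.diagonal_apply]
  have hq0 : (H *ᵥ col o) ⬝ᵥ col o = -1 := by rw [hcol]; simp [o, hD1]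
  rw [← hHF] at hM hpull
  obtain ⟨t, ht, M', hM'o, hMt, hfix⟩ := elimination H hHs (T ⊓ O)
    (fun c v hc => ⟨hTr c v hc, reflMat_orth H hHs c v (by rw [mul_assoc, hc, mul_one])⟩)
    (ψ (φ i2)) hi2F (fun a => by
      obtain ⟨ε, e1, e2, e3⟩ := h3 a
      exact ⟨ψ ε, by rw [← map_mul, e1], e2, e3⟩)
    (κ := {k : Fin n ⊕ Fin 2 // k ≠ o}) (fun k => col k.1) (fun k => j (D k.1)⁻¹)
    (fun k => by
      rw [hcol, if_pos rfl, ← map_mul, inv_mul_cancel₀ (hD _), map_one])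
    (fun k l hkl => by
      rw [hcol, if_neg (fun h => hkl (Subtype.ext h))])
    (col o) (-1) (by rw [hq0]; ring) (fun k => by rw [hcol, if_neg k.2])
    Finset.univ M hM
  have hM'b := (orth_iff H M').1 hM'o
  set x := M' *ᵥ col o with hx
  set lam := - ((H *ᵥ col o) ⬝ᵥ x) with hlam
  have hxl : x = lam • col o := by
    have hy : (PFᵀ * H) *ᵥ (x - lam • col o) = 0 := by
      ext k
      have e : ((PFᵀ * H) *ᵥ (x - lam • col o)) k = (H *ᵥ col k) ⬝ᵥ (x - lam • col o) := by
        rw [bil_symm H hHs, ← mulVec_mulVec, dotProduct_comm]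
        rfl
      rw [e, dotProduct_sub, dotProduct_smul, smul_eq_mul]
      by_cases hk : k = o
      · subst hk
        rw [hq0, hlam]; simp
      · have e2 := hM'b (col k) (col o)
        rw [hfix ⟨k, hk⟩ (Finset.mem_univ _), ← hx] at e2
        rw [e2, hcol, if_neg hk]; simp
    have hu : IsUnit (PFᵀ * H).det := by
      rw [Matrix.det_mul, Matrix.det_transpose]; exact hPFu.mul hHu
    have : x - lam • col o = 0 := by
      have h := congrArg (fun z => (PFᵀ * H)⁻¹ *ᵥ z) hy
      simpa [Matrix.mulVec_mulVec, Matrix.nonsing_inv_mul _ hu] using h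
    exact sub_eq_zero.1 this
  have hlam2 : lam * lam = 1 := by
    have e := hM'b (col o) (col o)
    rw [← hx, hxl, mulVec_smul, smul_dotProduct, dotProduct_smul, hq0] at e
    simp only [smul_eq_mul] at e
    linear_combination -e
  set δ := ψ (φ i2) * (1 - lam) with hδ
  have hδδ : δ * δ = δ := by
    rw [hδ]
    linear_combination (ψ (φ i2) * ψ (φ i2)) * hlam2 + (ψ (φ i2) * (1 - lam)) * hi2F
  have h2δ : 2 * δ = 1 - lam := by
    rw [hδ]; linear_combination (1 - lam) * hi2F
  obtain ⟨ε, hεε, hεδ, b, hb⟩ := h3 δ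
  have hεF : ψ ε * ψ ε = ψ ε := by rw [← map_mul, hεε]
  have hεe : ψ ε = δ := by
    have : (δ + (1 - ψ ε)) * (δ - ψ ε) = 0 := by
      linear_combination hδδ + hεF - 2 * hεδ
    linear_combination (-b) * this + (δ - ψ ε) * hb
  -- the integral partial reflection
  let vA : Fin n ⊕ Fin 2 → A := Sum.elim (fun _ => 0) ![1, -1]
  have hvA : (fun i => ψ (vA i)) = col o := by
    funext i
    simp only [col, hPF, Matrix.map_apply, o, hPv, vA]
    rcases i with i | i
    · simp
    · fin_cases i <;> simp
  let U2 := reflMat (G'.map φ) (-ε) vA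
  have hU2 : U2.map ψ = reflMat H (-δ) (col o) := by
    simp only [U2]
    rw [reflMat_map, hvA, hHA, ← hHF, map_neg, hεe]
  have hM'U : M' = U2.map ψ := by
    have e : M' * PF = U2.map ψ * PF := by
      have e1 : ∀ k, M' *ᵥ col k = U2.map ψ *ᵥ col k := by
        intro k
        rw [hU2, reflMat_mulVec]
        by_cases hk : k = o
        · subst hk
          rw [← hx, hxl, hq0]
          ext i
          simp
          linear_combination (col o i) * h2δ
        · rw [hfix ⟨k, hk⟩ (Finset.mem_univ _), hcol, if_neg (fun h => hk h.symm)]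
          simp
      ext i k
      exact congrFun (e1 k) i
    have := congrArg (fun Z => Z * PF⁻¹) e
    simpa [Matrix.mul_assoc, Matrix.mul_nonsing_inv _ hPFu] using this
  obtain ⟨M₁, U, hM₁, htU⟩ := hTf t ht.1 ht.2
  have hUo : Uᵀ * G'.map φ * U = G'.map φ := by
    apply hpull
    have h := ht.2
    change tᵀ * H * t = H at h
    have hM₁F : (M₁.map j)ᵀ * H * M₁.map j = H := by
      rw [hH, ← transpose_map, ← Matrix.map_mul, ← Matrix.map_mul, hM₁]
    rw [htU, transpose_mul] at h
    calc _ = (U.map ψ)ᵀ * ((M₁.map j)ᵀ * H * M₁.map j) * U.map ψ := by rw [hM₁F]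
      _ = (U.map ψ)ᵀ * (M₁.map j)ᵀ * H * (M₁.map j * U.map ψ) := by simp only [Matrix.mul_assoc]
      _ = H := h
  have hU2o : U2ᵀ * G'.map φ * U2 = G'.map φ := by
    apply hpull
    rw [← hM'U]; exact hM'o
  refine ⟨M₁, U * U2, hM₁, orth_mul _ hUo hU2o, ?_⟩
  rw [hMt, htU, hM'U, Matrix.map_mul, Matrix.mul_assoc]

/-- Generators of the maximal ideals of a semilocal principal ideal domain. -/
theorem semilocal_gens {R : Type*} [CommRing R] [IsDomain R] [IsPrincipalIdealRing R]
    {ι : Type*} [Fintype ι] [DecidableEq ι] (m : ι → Ideal R) (hm : ∀ i, (m i).IsMaximal)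
    (hinj : Function.Injective m) (hsurj : ∀ I : Ideal R, I.IsMaximal → ∃ i, m i = I) :
    ∃ p : ι → R, (∀ i, ¬ IsUnit (p i)) ∧ (∀ i j, i ≠ j → IsCoprime (p i) (p j)) ∧
      (∀ x : R, (∀ i, ¬ p i ∣ x) → IsUnit x) ∧
      (⊥ : Ideal R).jacobson = Ideal.span {∏ i, p i} ∧
      ((∏ i, p i) = 0 → ∀ r : R, r ≠ 0 → IsUnit r) := by
  choose p hp using fun i => (IsPrincipalIdealRing.principal (m i)).principal
  have hp' : ∀ i, m i = Ideal.span {p i} := hp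
  have hmem : ∀ i x, x ∈ m i ↔ p i ∣ x := fun i x => by
    rw [hp' i, Ideal.mem_span_singleton]
  have hcop : ∀ i j, i ≠ j → IsCoprime (p i) (p j) := by
    intro i j hij
    rw [← Ideal.isCoprime_span_singleton_iff, ← hp', ← hp', Ideal.isCoprime_iff_sup_eq]
    exact (hm i).coprime_of_ne (hm j) (fun h => hij (hinj h))
  have hall : ∀ x : R, (∀ i, ¬ p i ∣ x) → IsUnit x := by
    intro x hx
    by_contra hxu
    obtain ⟨I, hI, hxI⟩ := exists_max_ideal_of_mem_nonunits hxu
    obtain ⟨i, rfl⟩ := hsurj I hI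
    exact hx i ((hmem i x).1 hxI)
  refine ⟨p, ?_, hcop, hall, ?_, ?_⟩
  · intro i hi
    exact (hm i).ne_top (by rw [hp' i]; exact Ideal.span_singleton_eq_top.2 hi)
  · ext x
    rw [Ideal.mem_span_singleton, Ideal.jacobson, Ideal.mem_sInf]
    constructor
    · intro h
      refine Finset.prod_dvd_of_coprime (fun i _ j _ hij => hcop i j hij) fun i _ => ?_
      exact (hmem i x).1 (h ⟨bot_le, hm i⟩)
    · rintro h I ⟨-, hI⟩
      obtain ⟨i, rfl⟩ := hsurj I hI
      exact (hmem i x).2 ((Finset.dvd_prod_of_mem p (Finset.mem_univ i)).trans h)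
  · intro h0 r hr
    obtain ⟨i, -, hi⟩ := Finset.prod_eq_zero_iff.1 h0
    refine hall r fun k hk => ?_
    by_cases hki : k = i
    · rw [hki, hi] at hk
      exact hr (zero_dvd_iff.1 hk)
    · have h1 := hcop i k (Ne.symm hki)
      rw [hi, isCoprime_zero_left] at h1
      exact (hm k).ne_top (by rw [hp' k]; exact Ideal.span_singleton_eq_top.2 h1)

theorem frac_facts {R A F : Type*} [CommRing R] [CommRing A] [CommRing F] [Algebra A F]
    [IsFractionRing A F] (φ : R →+* A)
    (h5 : ∀ r : R, r ≠ 0 → IsUnit (algebraMap A F (φ r)))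
    (hs : ∀ a : A, ∃ (ε u : A) (r : R), ε * ε = ε ∧ IsUnit u ∧ r ≠ 0 ∧ a = ε * u * φ r) :
    (∀ x : F, ∃ r : R, r ≠ 0 ∧ ∃ a : A, algebraMap A F (φ r) * x = algebraMap A F a) ∧
    (∀ a : F, ∃ ε : A, ε * ε = ε ∧ algebraMap A F ε * a = a ∧
      ∃ b, b * (a + (1 - algebraMap A F ε)) = 1) := by
  have h1 : ∀ x : F, ∃ r : R, r ≠ 0 ∧ ∃ a : A, algebraMap A F (φ r) * x = algebraMap A F a := by
    intro x
    obtain ⟨⟨a, s⟩, h⟩ := IsLocalization.surj (nonZeroDivisors A) x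
    obtain ⟨δ, u, r, hδ, hu, hr, e⟩ := hs s
    have hd : 1 - δ = 0 := by
      refine (mem_nonZeroDivisors_iff.1 s.2).2 _ ?_
      rw [e]; linear_combination (-u * φ r) * hδ
    have hd1 : δ = 1 := (sub_eq_zero.1 hd).symm
    obtain ⟨v, hv⟩ := hu.exists_right_inv
    refine ⟨r, hr, v * a, ?_⟩
    simp only at h
    rw [map_mul, ← h, e, hd1, one_mul, map_mul]
    have : algebraMap A F u * algebraMap A F v = 1 := by rw [← map_mul, hv, map_one]
    linear_combination (- algebraMap A F (φ r) * x) * this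
  refine ⟨h1, ?_⟩
  intro x
  obtain ⟨s, hs0, a, ha⟩ := h1 x
  obtain ⟨ε, u, r, hε, hu, hr, rfl⟩ := hs a
  obtain ⟨s', hs'⟩ := (h5 s hs0).exists_right_inv
  obtain ⟨r', hr'⟩ := (h5 r hr).exists_right_inv
  obtain ⟨u', hu'⟩ := (hu.map (algebraMap A F)).exists_right_inv
  have hεF : algebraMap A F ε * algebraMap A F ε = algebraMap A F ε := by rw [← map_mul, hε]
  rw [map_mul, map_mul] at ha
  generalize algebraMap A F (φ s) = S at *
  generalize algebraMap A F (φ r) = Q at *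
  generalize algebraMap A F u = W at *
  have hx : x = algebraMap A F ε * (W * Q * s') := by
    linear_combination s' * ha - x * hs'
  refine ⟨ε, hε, ?_, algebraMap A F ε * (u' * r' * S) + (1 - algebraMap A F ε), ?_⟩
  · rw [hx]; linear_combination (W * Q * s') * hεF
  · rw [hx]
    generalize algebraMap A F ε = E at *
    have hw : (u' * r' * S) * (W * Q * s') = 1 := by
      linear_combination (r' * S * Q * s') * hu' + (S * s') * hr' + hs'
    linear_combination (E * E) * hw +
      (2 - (u' * r' * S) - (W * Q * s')) * hεF

set_option maxHeartbeats 1000000 in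
theorem orthogonal_group_factorization_completion
    {R : Type*} [CommRing R] [IsDomain R] [IsPrincipalIdealRing R]
    (hsemilocal : {I : Ideal R | I.IsMaximal}.Finite) [Invertible (2 : R)]
    (n : ℕ) (G : Matrix (Fin n) (Fin n) R) (hsymm : Gᵀ = G)
    (hnondeg : G.det ≠ 0)
    (hu : ∀ y : nonZeroDivisors R,
      IsUnit (algebraMap R (jacobsonCompletionFractions R) y))
    (G' : Matrix (Fin n ⊕ Fin 2) (Fin n ⊕ Fin 2) R)
    (hG' : G' = Matrix.fromBlocks G 0 0 ((⅟(2 : R)) • !![0, 1; 1, 0]))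
    (M : Matrix (Fin n ⊕ Fin 2) (Fin n ⊕ Fin 2) (jacobsonCompletionFractions R))
    (hM : IsOrthogonalFor (G'.map (algebraMap R (jacobsonCompletionFractions R))) M) :
    ∃ (M₁ : Matrix (Fin n ⊕ Fin 2) (Fin n ⊕ Fin 2) (FractionRing R))
      (M₂ : Matrix (Fin n ⊕ Fin 2) (Fin n ⊕ Fin 2) (jacobsonCompletion R)),
      IsOrthogonalFor (G'.map (algebraMap R (FractionRing R))) M₁ ∧
      IsOrthogonalFor (G'.map (algebraMap R (jacobsonCompletion R))) M₂ ∧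
      M = (M₁.map (IsLocalization.lift (M := nonZeroDivisors R)
            (S := FractionRing R) hu)) *
          (M₂.map (algebraMap (jacobsonCompletion R) (jacobsonCompletionFractions R))) := by
  classical
  let _ : Fintype {I : Ideal R | I.IsMaximal} := hsemilocal.fintype
  obtain ⟨p, hp1, hp2, hp3, hJ, hp0⟩ := semilocal_gens
    (fun I : {I : Ideal R | I.IsMaximal} => I.1) (fun I => I.2) Subtype.val_injective
    (fun I hI => ⟨⟨I, hI⟩, rfl⟩)
  obtain ⟨c1, c2, c3, c4, c5⟩ := adic_facts (⊥ : Ideal R).jacobson (∏ i, p i) hJ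
  obtain ⟨h2, hs⟩ := struct_facts (algebraMap R (jacobsonCompletion R)) p hp1 hp2 hp3 _ rfl
    c1 c2 c3 c4 c5
  have h5 : ∀ r : R, r ≠ 0 → IsUnit (algebraMap (jacobsonCompletion R)
      (jacobsonCompletionFractions R) (algebraMap R (jacobsonCompletion R) r)) :=
    fun r hr => hu ⟨r, mem_nonZeroDivisors_of_ne_zero hr⟩
  obtain ⟨h1, h3⟩ := frac_facts (F := jacobsonCompletionFractions R)
    (algebraMap R (jacobsonCompletion R)) h5 hs
  exact main_abs (K := FractionRing R) (algebraMap R (jacobsonCompletion R))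
    (algebraMap (jacobsonCompletion R) (jacobsonCompletionFractions R))
    (IsLocalization.lift (M := nonZeroDivisors R) (S := FractionRing R) hu)
    (IsFractionRing.injective _ _) (fun r => IsLocalization.lift_eq hu r) h1 h2 h3
    (by
      by_cases h0 : ∏ i, p i = 0
      · exact Or.inr (hp0 h0)
      · exact Or.inl ⟨_, h0, c4⟩)
    h5 (⅟(2 : R)) (invOf_mul_self _) n G hsymm hnondeg G' hG' M hM
end

section
/- Let R be a semilocal principal ideal domain with 2 invertible and K its fraction field. If q and q′ are quadratic forms over R with simple degeneration and multiplicity one that become isometric over K, then q and q′ are isometric over R. -/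
/-!
STATEMENT 13: Let R be a semilocal principal ideal domain with 2 invertible and K its
fraction field. If q and q′ are quadratic forms over R with simple degeneration and
multiplicity one that become isometric over K, then q and q′ are isometric over R.

Simple degeneration with multiplicity one: over each discrete valuation overring of R
(the localization at each nonzero maximal ideal) the form is isometric to a diagonal form
⟨u₁,…,u_{r−1}, u_r π⟩ with the u_j units and π a uniformizer.
-/

/-- A quadratic form over `A` has a diagonalization with simple degeneration of
multiplicity one: all diagonal entries are units except one, which is a unit times an
irreducible element (a uniformizer when `A` is a DVR). -/
def HasSimpleDegenerationMultOneDiag {A M : Type*} [CommRing A] [AddCommGroup M]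
    [Module A M] (r : ℕ) (Q : QuadraticForm A M) : Prop :=
  ∃ (w : Fin r → A) (j : Fin r),
    (∀ i, i ≠ j → IsUnit (w i)) ∧
    (∃ u π : A, IsUnit u ∧ Irreducible π ∧ w j = u * π) ∧
    Nonempty (Q.IsometryEquiv (QuadraticMap.weightedSumSquares A w))

open QuadraticMap in
lemma sd_qlin {R M : Type*} [CommRing R] [AddCommGroup M] [Module R M]
    (q : QuadraticForm R M) (a b : R) (x y : M) :
    q (a • x + b • y) = a * a * q x + a * b * polar q x y + b * b * q y := by
  have h : polar q (a • x) (b • y) = a * b * polar q x y := by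
    rw [polar_smul_left, polar_smul_right, smul_eq_mul, smul_eq_mul, mul_assoc]
  rw [polar, QuadraticMap.map_smul, QuadraticMap.map_smul] at h
  simp only [smul_eq_mul] at h
  linear_combination h

/-- Elementwise reformulation of simple degeneration of multiplicity one. -/
def SDGood {R M : Type*} [CommRing R] [AddCommGroup M] [Module R M]
    (q : QuadraticForm R M) : Prop :=
  ∀ p : R, Prime p → ∃ e : M, (∀ y, p ∣ QuadraticMap.polar q e y) ∧ ¬ p ^ 2 ∣ q e ∧
    ∀ z, (∀ y, p ∣ QuadraticMap.polar q z y) → ∃ (a : R) (m : M), z = a • e + p • m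

lemma sd_radical {R M : Type*} [CommRing R] [IsDomain R] [AddCommGroup M] [Module R M]
    {q : QuadraticForm R M} (hq : SDGood q) {p : R} (hp : Prime p) {z : M}
    (h2 : p ^ 2 ∣ q z) (h : ∀ y, p ∣ QuadraticMap.polar q z y) : ∃ m, z = p • m := by
  obtain ⟨e, he1, he2, he3⟩ := hq p hp
  obtain ⟨a, m, rfl⟩ := he3 z h
  by_cases ha : p ∣ a
  · obtain ⟨b, rfl⟩ := ha
    exact ⟨b • e + m, by rw [smul_add, smul_smul]⟩
  · exfalso
    rw [sd_qlin] at h2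
    obtain ⟨c, hc⟩ := he1 m
    have h3 : p ^ 2 ∣ (a * a) * q e := by
      obtain ⟨k, hk⟩ := h2
      exact ⟨k - a * c - q m, by rw [hc] at hk; linear_combination hk⟩
    have h4 : ¬ p ∣ a * a := fun h => (hp.dvd_or_dvd h).elim ha ha
    exact he2 (hp.pow_dvd_of_dvd_mul_left 2 h4 h3)

lemma sd_exists_vec {R M : Type*} [CommRing R] [IsDomain R] [IsPrincipalIdealRing R]
    [AddCommGroup M] [Module R M] [Module.Free R M] [Module.Finite R M]
    {q : QuadraticForm R M} (hq : SDGood q) (hn : 2 ≤ Module.finrank R M)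
    {p : R} (hp : Prime p) : ∃ v, ¬ p ∣ q v := by
  by_contra! hv
  obtain ⟨e, he1, he2, he3⟩ := hq p hp
  have h : ∀ z, ∃ (a : R) (m : M), z = a • e + p • m := fun z => he3 z fun y =>
    dvd_sub (dvd_sub (hv _) (hv _)) (hv _)
  let b := Module.finBasis R M
  let i : Fin (Module.finrank R M) := ⟨0, by omega⟩
  let j : Fin (Module.finrank R M) := ⟨1, by omega⟩
  have hij : i ≠ j := by simp [i, j]
  obtain ⟨a, m, ham⟩ := h (b i)
  obtain ⟨a', m', ham'⟩ := h (b j)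
  have e1 := congrArg (fun x => b.repr x i) ham
  have e2 := congrArg (fun x => b.repr x j) ham
  have e3 := congrArg (fun x => b.repr x j) ham'
  simp [hij] at e1 e2 e3
  have hpa : ¬ p ∣ a := fun ⟨c, hc⟩ => hp.not_dvd_one
    ⟨c * b.repr e i + b.repr m i, by rw [e1, hc]; ring⟩
  have h5 : p ∣ a * b.repr e j := ⟨- b.repr m j, by linear_combination -e2⟩
  obtain ⟨c, hc⟩ := (hp.dvd_or_dvd h5).resolve_left hpa
  exact hp.not_dvd_one ⟨a' * c + b.repr m' j, by rw [e3, hc]; ring⟩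

lemma sd_crt {R M : Type*} [CommRing R] [IsDomain R] [IsPrincipalIdealRing R]
    (hs : {I : Ideal R | I.IsMaximal}.Finite) (hR : ∃ p : R, Prime p)
    [AddCommGroup M] [Module R M] (N : M → R)
    (hN : ∀ p y m, p ∣ N (y + p • m) - N y) (h : ∀ p, Prime p → ∃ y, ¬ p ∣ N y) :
    ∃ y, IsUnit (N y) := by
  classical
  obtain ⟨p0, hp0⟩ := hR
  have : Finite {I : Ideal R // I.IsMaximal} := hs
  have := Fintype.ofFinite {I : Ideal R // I.IsMaximal}
  have hnf : ¬ IsField R := fun hf => hp0.not_isUnit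
    (isUnit_iff_exists_inv.mpr (hf.mul_inv_cancel hp0.ne_zero))
  have hgen : ∀ I : {I : Ideal R // I.IsMaximal}, ∃ p : R, Prime p ∧ I.1 = Ideal.span {p} := by
    intro ⟨I, hI⟩
    obtain ⟨p, hp⟩ := (IsPrincipalIdealRing.principal I).principal
    refine ⟨p, ?_, hp⟩
    have hne : I ≠ ⊥ := Ring.ne_bot_of_isMaximal_of_not_isField hI hnf
    have hp' : I = Ideal.span {p} := hp
    have hpne : p ≠ 0 := by
      rintro rfl
      exact hne (by simpa using hp')
    rw [← Ideal.span_singleton_prime hpne, ← hp']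
    exact hI.isPrime
  choose g hg hgI using hgen
  choose Y hY using fun I => h (g I) (hg I)
  have hcop : Pairwise (Function.onFun IsCoprime
      (fun I : {I : Ideal R // I.IsMaximal} => I.1)) := by
    intro I J hIJ
    exact Ideal.isCoprime_iff_sup_eq.mpr
      (Ideal.IsMaximal.coprime_of_ne I.2 J.2 (fun h => hIJ (Subtype.ext h)))
  have hE : ∀ J : {I : Ideal R // I.IsMaximal}, ∃ r : R,
      ∀ I : {I : Ideal R // I.IsMaximal}, r - (if I = J then 1 else 0) ∈ I.1 := fun J =>
    Ideal.exists_forall_sub_mem_ideal hcop _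
  choose E hE using hE
  refine ⟨∑ J, E J • Y J, ?_⟩
  have key : ∀ I, ¬ g I ∣ N (∑ J, E J • Y J) := by
    intro I hI
    have hd : ∀ J, ∃ c, E J - (if I = J then 1 else 0) = g I * c := fun J => by
      have := hE J I
      rw [hgI I, Ideal.mem_span_singleton] at this
      exact this
    choose c hc using hd
    have hsum : ∑ J, E J • Y J = Y I + g I • ∑ J, c J • Y J := by
      have : Y I = ∑ J, (if I = J then (1 : R) else 0) • Y J := by simp
      rw [this, Finset.smul_sum, ← Finset.sum_add_distrib]
      refine Finset.sum_congr rfl fun J _ => ?_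
      rw [smul_smul, ← hc, ← add_smul]
      congr 1
      ring
    rw [hsum] at hI
    have h1 := dvd_sub hI (hN (g I) (Y I) (∑ J, c J • Y J))
    rw [sub_sub_cancel] at h1
    exact hY I h1
  by_contra hu
  obtain ⟨I, hI, hmem⟩ := exists_max_ideal_of_mem_nonunits hu
  apply key ⟨I, hI⟩
  rw [← Ideal.mem_span_singleton, ← hgI]
  exact hmem

/-- A unit represented up to a square denominator is represented. -/
lemma sd_represent {R M : Type*} [CommRing R] [IsDomain R] [IsPrincipalIdealRing R]
    (hs : {I : Ideal R | I.IsMaximal}.Finite) (hR : ∃ p : R, Prime p)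
    [AddCommGroup M] [Module R M]
    {q : QuadraticForm R M} (hq : SDGood q) {u : R} (hu : IsUnit u) (t : R) :
    t ≠ 0 → ∀ z : M, q z = u * (t * t) → ∃ y, q y = u := by
  refine (wellFounded_dvdNotUnit (α := R)).induction
    (C := fun t => t ≠ 0 → ∀ z : M, q z = u * (t * t) → ∃ y, q y = u) t ?_
  intro t ih ht z hz
  by_cases hc : ∃ p, Prime p ∧ p ∣ t ∧ ∃ m, z = p • m
  · obtain ⟨p, hp, ⟨s, rfl⟩, m, rfl⟩ := hc
    have hs0 : s ≠ 0 := right_ne_zero_of_mul ht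
    refine ih s ⟨hs0, p, hp.not_isUnit, mul_comm _ _⟩ hs0 m ?_
    rw [QuadraticMap.map_smul, smul_eq_mul] at hz
    have hpp : p * p ≠ 0 := mul_ne_zero hp.ne_zero hp.ne_zero
    apply mul_left_cancel₀ hpp
    rw [hz]; ring
  · push Not at hc
    obtain ⟨y, hy⟩ := sd_crt hs hR (fun y => t * (u + q y) - QuadraticMap.polar q z y) (by
      intro p y m
      have h1 : q (y + p • m) = q y + p * QuadraticMap.polar q y m + p * p * q m := by
        have := sd_qlin q 1 p y m
        simpa using this
      simp only [h1, QuadraticMap.polar_add_right, QuadraticMap.polar_smul_right, smul_eq_mul]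
      exact ⟨t * (QuadraticMap.polar q y m + p * q m) - QuadraticMap.polar q z m, by ring⟩) (by
      intro p hp
      by_cases hpt : p ∣ t
      · by_contra! hall
        have h2 : p ^ 2 ∣ q z := by
          obtain ⟨s, rfl⟩ := hpt
          exact ⟨u * (s * s), by rw [hz]; ring⟩
        obtain ⟨m, hm⟩ := sd_radical hq hp h2 (fun y => by
          have := dvd_sub (hpt.mul_right (u + q y)) (hall y)
          rwa [sub_sub_cancel] at this)
        exact hc p hp hpt m hm
      · refine ⟨0, ?_⟩
        simp only [QuadraticMap.map_zero, QuadraticMap.polar_zero_right, add_zero, sub_zero]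
        rwa [hu.dvd_mul_right])
    obtain ⟨w, hw⟩ := hy.exists_left_inv
    refine ⟨(1 - (q y - u) * w * t) • y + ((q y - u) * w) • z, ?_⟩
    rw [sd_qlin, hz, QuadraticMap.polar_comm]
    generalize QuadraticMap.polar q z y = B at *
    generalize q y = Q at *
    linear_combination ((Q - u) * (Q - u) * w * t - (Q - u)) * hw

lemma sd_witt_aux {R M M' : Type*} [CommRing R] [IsDomain R]
    [AddCommGroup M] [Module R M] [AddCommGroup M'] [Module R M']
    (q : QuadraticForm R M) (q' : QuadraticForm R M') (f : M →ₗ[R] M') (d : R) (hd : d ≠ 0)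
    (hf : ∀ x, q' (f x) = d * d * q x) (v : M) (v' : M') (hv : q v = q' v')
    (hw : q' (f v - d • v') ≠ 0) :
    ∃ (f : M →ₗ[R] M') (d : R), d ≠ 0 ∧ (∀ x, q' (f x) = d * d * q x) ∧ f v = d • v' := by
  set w := f v - d • v' with hwdef
  let g : M' →ₗ[R] M' := q' w • LinearMap.id -
    ((LinearMap.toSpanSingleton R M' w).comp (QuadraticMap.polarBilin q' w))
  have hg : ∀ y, g y = q' w • y + (-QuadraticMap.polar q' w y) • w := by
    intro y
    simp [g, sub_eq_add_neg]
  refine ⟨g.comp f, q' w * d, mul_ne_zero hw hd, ?_, ?_⟩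
  · intro x
    rw [LinearMap.comp_apply, hg, sd_qlin, hf, QuadraticMap.polar_comm q' (f x) w]
    ring
  · rw [LinearMap.comp_apply, hg]
    have h1 : QuadraticMap.polar q' w (f v) = q' w := by
      have e1 : w = (1 : R) • f v + (-d) • v' := by rw [hwdef]; module
      have e2 : q' w = _ := (congrArg q' e1).trans (sd_qlin q' _ _ _ _)
      rw [e2, e1, QuadraticMap.polar_add_left, QuadraticMap.polar_smul_left,
        QuadraticMap.polar_smul_left, QuadraticMap.polar_self, QuadraticMap.polar_comm q' v']
      simp only [smul_eq_mul, hf, nsmul_eq_mul, hv]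
      push_cast
      ring
    rw [h1, hwdef]
    module

lemma sd_witt {R M M' : Type*} [CommRing R] [IsDomain R] [Invertible (2 : R)]
    [AddCommGroup M] [Module R M] [AddCommGroup M'] [Module R M']
    (q : QuadraticForm R M) (q' : QuadraticForm R M') (f : M →ₗ[R] M') (d : R) (hd : d ≠ 0)
    (hf : ∀ x, q' (f x) = d * d * q x) (v : M) (v' : M') (hv : q v = q' v') (hu : IsUnit (q v)) :
    ∃ (f : M →ₗ[R] M') (d : R), d ≠ 0 ∧ (∀ x, q' (f x) = d * d * q x) ∧ f v = d • v' := by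
  by_cases hw : q' (f v - d • v') = 0
  · refine sd_witt_aux q q' f (-d) (neg_ne_zero.mpr hd) (fun x => by rw [hf]; ring) v v' hv ?_
    intro hw'
    have h1 : f v - d • v' = (1 : R) • f v + (-d) • v' := by module
    have h2 : f v - (-d) • v' = (1 : R) • f v + d • v' := by module
    rw [h1, sd_qlin, hf, ← hv] at hw
    rw [h2, sd_qlin, hf, ← hv] at hw'
    have h20 : (2 : R) ≠ 0 := (isUnit_of_invertible (2 : R)).ne_zero
    have : (2 * 2) * (d * d) * q v = 0 := by linear_combination hw + hw'
    exact (mul_ne_zero (mul_ne_zero (mul_ne_zero h20 h20) (mul_ne_zero hd hd)) hu.ne_zero) this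
  · exact sd_witt_aux q q' f d hd hf v v' hv hw

/-- Orthogonal complement of a vector. -/
def sdPerp {R M : Type*} [CommRing R] [AddCommGroup M] [Module R M]
    (q : QuadraticForm R M) (v : M) : Submodule R M := LinearMap.ker (QuadraticMap.polarBilin q v)

lemma sd_mem_perp {R M : Type*} [CommRing R] [AddCommGroup M] [Module R M]
    (q : QuadraticForm R M) (v x : M) : x ∈ sdPerp q v ↔ QuadraticMap.polar q v x = 0 := by
  simp [sdPerp]

lemma sd_split {R M : Type*} [CommRing R] [Invertible (2 : R)]
    [AddCommGroup M] [Module R M] (q : QuadraticForm R M) (v : M) (hu : IsUnit (q v)) :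
    ∃ e : M ≃ₗ[R] R × sdPerp q v, (∀ a y, e.symm (a, y) = a • v + (y : M)) ∧
      ∀ a y, q (e.symm (a, y)) = a * a * q v + q y := by
  obtain ⟨k, hk⟩ := ((isUnit_of_invertible (2 : R)).mul hu).exists_left_inv
  have hvv : QuadraticMap.polar q v v = 2 * q v := by
    rw [QuadraticMap.polar_self, nsmul_eq_mul]; norm_num
  have hmem : ∀ x, x - (k * QuadraticMap.polar q v x) • v ∈ sdPerp q v := by
    intro x
    rw [sd_mem_perp, QuadraticMap.polar_sub_right, QuadraticMap.polar_smul_right, hvv, smul_eq_mul]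
    linear_combination (-QuadraticMap.polar q v x) * hk
  let g : R × sdPerp q v →ₗ[R] M :=
    LinearMap.coprod (LinearMap.toSpanSingleton R M v) (sdPerp q v).subtype
  have hg : ∀ a y, g (a, y) = a • v + (y : M) := by intro a y; simp [g]
  have hbij : Function.Bijective g := by
    constructor
    · rw [injective_iff_map_eq_zero]
      rintro ⟨a, y, hy⟩ h
      rw [hg] at h
      have hy' := (sd_mem_perp q v y).1 hy
      have h1 := congrArg (QuadraticMap.polar q v) h
      rw [QuadraticMap.polar_add_right, QuadraticMap.polar_smul_right, hvv, hy',
        QuadraticMap.polar_zero_right, smul_eq_mul, add_zero] at h1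
      have ha : a = 0 := by linear_combination k * h1 - a * hk
      subst ha
      simp at h
      simp [h]
    · intro x
      exact ⟨(k * QuadraticMap.polar q v x, ⟨_, hmem x⟩), by rw [hg]; simp⟩
  refine ⟨(LinearEquiv.ofBijective g hbij).symm, ?_, ?_⟩
  · intro a y
    rw [← hg]; rfl
  · intro a y
    have h1 := sd_qlin q a 1 v (y : M)
    rw [(sd_mem_perp q v y).1 y.2] at h1
    rw [LinearEquiv.symm_symm, LinearEquiv.ofBijective_apply, hg]
    simpa using h1

lemma sd_good_perp {R M : Type*} [CommRing R] [IsDomain R] [Invertible (2 : R)]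
    [AddCommGroup M] [Module R M] {q : QuadraticForm R M} (hq : SDGood q) (v : M)
    (hu : IsUnit (q v)) : SDGood (q.comp (sdPerp q v).subtype) := by
  obtain ⟨E, hE1, hE2⟩ := sd_split q v hu
  have hdec : ∀ x : M, ∃ (a : R) (y : sdPerp q v), x = a • v + (y : M) := fun x =>
    ⟨(E x).1, (E x).2, by rw [← hE1]; simp⟩
  have huniq : ∀ (a : R) (y y' : sdPerp q v), (y : M) = a • v + (y' : M) → y = y' := by
    intro a y y' h
    have h1 : E.symm (0, y) = E.symm (a, y') := by rw [hE1, hE1, h]; simp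
    have h2 := E.symm.injective h1
    exact (Prod.ext_iff.1 h2).2
  have hpol : ∀ y y' : sdPerp q v, QuadraticMap.polar (q.comp (sdPerp q v).subtype) y y' =
      QuadraticMap.polar q (y : M) (y' : M) := by
    intro y y'
    simp [QuadraticMap.polar]
  have hvv : QuadraticMap.polar q v v = 2 * q v := by
    rw [QuadraticMap.polar_self, nsmul_eq_mul]; norm_num
  intro p hp
  obtain ⟨e, he1, he2, he3⟩ := hq p hp
  obtain ⟨α, e1, rfl⟩ := hdec e
  have hα : p ∣ α := by
    have h := he1 v
    rw [QuadraticMap.polar_add_left, QuadraticMap.polar_smul_left, hvv, QuadraticMap.polar_comm q _ v,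
      (sd_mem_perp q v e1).1 e1.2, add_zero, smul_eq_mul] at h
    rwa [((isUnit_of_invertible (2 : R)).mul hu).dvd_mul_right] at h
  obtain ⟨β, rfl⟩ := hα
  refine ⟨e1, ?_, ?_, ?_⟩
  · intro y
    rw [hpol]
    have h := he1 (y : M)
    rwa [QuadraticMap.polar_add_left, QuadraticMap.polar_smul_left, (sd_mem_perp q v y).1 y.2,
      smul_zero, zero_add] at h
  · intro h
    apply he2
    rw [← hE1, hE2]
    refine dvd_add ⟨β * β * q v, by ring⟩ ?_
    simpa using h
  · intro z hz
    obtain ⟨a, m, h⟩ := he3 z (by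
      intro y
      obtain ⟨b, y1, rfl⟩ := hdec y
      rw [QuadraticMap.polar_add_right, QuadraticMap.polar_smul_right, QuadraticMap.polar_comm q _ v,
        (sd_mem_perp q v z).1 z.2, smul_zero, zero_add, ← hpol]
      exact hz y1)
    obtain ⟨b, m1, rfl⟩ := hdec m
    refine ⟨a, m1, huniq (a * (p * β) + p * b) _ _ ?_⟩
    rw [h]
    simp only [Submodule.coe_add, Submodule.coe_smul]
    module

lemma sd_dvd {R : Type*} [CommRing R] [IsDomain R] [IsPrincipalIdealRing R] (a a' : R)
    (ha' : ∀ p, Prime p → ¬ p ^ 2 ∣ a') (d : R) :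
    d ≠ 0 → ∀ c, c * c * a' = d * d * a → d ∣ c := by
  refine (wellFounded_dvdNotUnit (α := R)).induction
    (C := fun d => d ≠ 0 → ∀ c, c * c * a' = d * d * a → d ∣ c) d ?_
  intro d ih hd c h
  by_cases hdu : IsUnit d
  · exact hdu.dvd
  obtain ⟨p, hp, s, rfl⟩ := WfDvdMonoid.exists_irreducible_factor hdu hd
  have hp := hp.prime
  have hpc : p ∣ c := by
    by_contra hpc
    have h4 : ¬ p ∣ c * c := fun h => (hp.dvd_or_dvd h).elim hpc hpc
    exact ha' p hp (hp.pow_dvd_of_dvd_mul_left 2 h4 ⟨s * s * a, by rw [h]; ring⟩)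
  obtain ⟨b, rfl⟩ := hpc
  have hs0 : s ≠ 0 := right_ne_zero_of_mul hd
  refine mul_dvd_mul_left p (ih s ⟨hs0, p, hp.not_isUnit, mul_comm _ _⟩ hs0 b ?_)
  apply mul_left_cancel₀ (mul_ne_zero hp.ne_zero hp.ne_zero)
  linear_combination h

lemma sd_rank_one {R M M' : Type*} [CommRing R] [IsDomain R] [IsPrincipalIdealRing R]
    [AddCommGroup M] [Module R M] [Module.Free R M] [Module.Finite R M]
    [AddCommGroup M'] [Module R M'] [Module.Free R M'] [Module.Finite R M']
    (hM : Module.finrank R M = 1) (hM' : Module.finrank R M' = 1) (hR : ∃ p : R, Prime p)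
    (q : QuadraticForm R M) (q' : QuadraticForm R M') (hq : SDGood q) (hq' : SDGood q')
    (f : M →ₗ[R] M') (d : R) (hd : d ≠ 0) (hf : ∀ x, q' (f x) = d * d * q x) :
    Nonempty (q.IsometryEquiv q') := by
  let φ : M ≃ₗ[R] M' := LinearEquiv.ofFinrankEq M M' (hM.trans hM'.symm)
  let b := Module.basisUnique Unit hM
  have hb : ∀ x, ∃ a : R, x = a • b () := fun x => ⟨b.repr x (), by
    simpa using (b.sum_repr x).symm⟩
  have hb' : ∀ x, ∃ a : R, x = a • φ (b ()) := fun x => by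
    obtain ⟨a, ha⟩ := hb (φ.symm x)
    exact ⟨a, by rw [← map_smul, ← ha]; simp⟩
  have h1 : ∀ p, Prime p → ¬ p ^ 2 ∣ q (b ()) := by
    intro p hp h
    obtain ⟨e, -, he, -⟩ := hq p hp
    obtain ⟨a, rfl⟩ := hb e
    rw [QuadraticMap.map_smul] at he
    exact he (h.mul_left _)
  have h1' : ∀ p, Prime p → ¬ p ^ 2 ∣ q' (φ (b ())) := by
    intro p hp h
    obtain ⟨e, -, he, -⟩ := hq' p hp
    obtain ⟨a, rfl⟩ := hb' e
    rw [QuadraticMap.map_smul] at he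
    exact he (h.mul_left _)
  obtain ⟨c, hc⟩ := hb' (f (b ()))
  have h2 := hf (b ())
  rw [hc, QuadraticMap.map_smul, smul_eq_mul] at h2
  obtain ⟨k, rfl⟩ := sd_dvd _ _ h1' d hd c h2
  have h3 : k * k * q' (φ (b ())) = q (b ()) := by
    apply mul_left_cancel₀ (mul_ne_zero hd hd)
    linear_combination h2
  have hk : IsUnit k := by
    by_contra hk
    have hk0 : k ≠ 0 := by
      rintro rfl
      obtain ⟨p, hp⟩ := hR
      exact h1 p hp (by rw [← h3]; simp)
    obtain ⟨p, hp, s, rfl⟩ := WfDvdMonoid.exists_irreducible_factor hk hk0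
    exact h1 p hp.prime ⟨s * s * q' (φ (b ())), by rw [← h3]; ring⟩
  obtain ⟨k, rfl⟩ := hk
  refine ⟨⟨φ.trans (LinearEquiv.smulOfUnit k), ?_⟩⟩
  intro x
  obtain ⟨a, rfl⟩ := hb x
  change q' ((k : R) • φ (a • b ())) = _
  rw [map_smul φ, QuadraticMap.map_smul, QuadraticMap.map_smul, QuadraticMap.map_smul, ← h3]
  simp only [smul_eq_mul]
  ring

theorem sd_main {R : Type*} [CommRing R] [IsDomain R] [IsPrincipalIdealRing R]
    (hs : {I : Ideal R | I.IsMaximal}.Finite) [Invertible (2 : R)] (hR : ∃ p : R, Prime p)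
    (n : ℕ) : ∀ {M M' : Type*}
    [AddCommGroup M] [Module R M] [Module.Free R M] [Module.Finite R M]
    [AddCommGroup M'] [Module R M'] [Module.Free R M'] [Module.Finite R M']
    (_ : Module.finrank R M = n) (_ : Module.finrank R M' = n)
    (q : QuadraticForm R M) (q' : QuadraticForm R M') (_ : SDGood q) (_ : SDGood q')
    (f : M →ₗ[R] M') (d : R) (_ : d ≠ 0) (_ : ∀ x, q' (f x) = d * d * q x),
    Nonempty (q.IsometryEquiv q') := by
  induction n with
  | zero =>
    intro M M' _ _ _ _ _ _ _ _ hM hM' q q' hq hq' f d hd hf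
    obtain ⟨p, hp⟩ := hR
    obtain ⟨e, -, he, -⟩ := hq p hp
    have : Subsingleton M := Module.finrank_zero_iff.mp hM
    exact absurd (by rw [Subsingleton.elim e 0]; simp) he
  | succ n ih =>
    intro M M' _ _ _ _ _ _ _ _ hM hM' q q' hq hq' f d hd hf
    rcases Nat.eq_zero_or_pos n with rfl | hn
    · exact sd_rank_one hM hM' hR q q' hq hq' f d hd hf
    obtain ⟨v, hv⟩ := sd_crt hs hR (fun x => q x) (by
      intro p y m
      have := sd_qlin q 1 p y m
      simp only [one_smul, one_mul] at this
      exact ⟨QuadraticMap.polar q y m + p * q m, by rw [this]; ring⟩)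
      (fun p hp => sd_exists_vec hq (by omega) hp)
    obtain ⟨v', hv'⟩ := sd_represent hs hR hq' hv d hd (f v) (by rw [hf]; ring)
    have hu' : IsUnit (q' v') := hv' ▸ hv
    obtain ⟨f, d, hd, hf, hfv⟩ := sd_witt q q' f d hd hf v v' hv'.symm hv
    obtain ⟨E, hE1, hE2⟩ := sd_split q v hv
    obtain ⟨E', hE1', hE2'⟩ := sd_split q' v' hu'
    have hmap : ∀ x ∈ sdPerp q v, f x ∈ sdPerp q' v' := by
      intro x hx
      rw [sd_mem_perp] at hx ⊢
      have h1 : QuadraticMap.polar q' (f v) (f x) = d * d * QuadraticMap.polar q v x := by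
        simp only [QuadraticMap.polar, ← map_add, hf]
        ring
      rw [hfv, QuadraticMap.polar_smul_left, hx, mul_zero, smul_eq_mul] at h1
      exact (mul_eq_zero.mp h1).resolve_left hd
    have hr : Module.finrank R (sdPerp q v) = n := by
      have := E.finrank_eq
      rw [Module.finrank_prod, Module.finrank_self] at this
      omega
    have hr' : Module.finrank R (sdPerp q' v') = n := by
      have := E'.finrank_eq
      rw [Module.finrank_prod, Module.finrank_self] at this
      omega
    obtain ⟨φ⟩ := ih hr hr' (q.comp (sdPerp q v).subtype) (q'.comp (sdPerp q' v').subtype)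
      (sd_good_perp hq v hv) (sd_good_perp hq' v' hu') (f.restrict hmap) d hd (by
        intro x
        simpa using hf x)
    refine ⟨⟨(E.trans ((LinearEquiv.refl R R).prodCongr φ.toLinearEquiv)).trans E'.symm, ?_⟩⟩
    intro x
    obtain ⟨⟨a, y⟩, rfl⟩ := E.symm.surjective x
    change q' (E'.symm ((LinearEquiv.refl R R).prodCongr φ.toLinearEquiv (E (E.symm (a, y))))) = _
    rw [E.apply_symm_apply]
    change q' (E'.symm (a, φ y)) = _
    rw [hE2, hE2', hv']
    have := φ.map_app y
    simp only [QuadraticMap.comp_apply, Submodule.subtype_apply] at this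
    rw [this]

open TensorProduct in
lemma sd_bc_polar {R A M : Type*} [CommRing R] [CommRing A] [Algebra R A] [Invertible (2 : R)]
    [AddCommGroup M] [Module R M] (q : QuadraticForm R M) (x y : M) :
    QuadraticMap.polar (q.baseChange A) ((1 : A) ⊗ₜ[R] x) ((1 : A) ⊗ₜ[R] y) =
      algebraMap R A (QuadraticMap.polar q x y) := by
  simp only [QuadraticMap.polar, ← TensorProduct.tmul_add, QuadraticForm.baseChange_tmul]
  simp [Algebra.smul_def]

open TensorProduct in
lemma sd_clear {R A M : Type*} [CommRing R] [CommRing A] [Algebra R A] (S : Submonoid R)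
    [IsLocalization S A] [AddCommGroup M] [Module R M] (X : A ⊗[R] M) :
    ∃ s ∈ S, ∃ x : M, algebraMap R A s • X = (1 : A) ⊗ₜ[R] x := by
  obtain ⟨⟨x, s⟩, h⟩ := IsLocalizedModule.surj S (TensorProduct.mk R A M 1) X
  exact ⟨s, s.2, x, by rw [algebraMap_smul]; exact h⟩

open TensorProduct in
lemma sd_inj {R A M : Type*} [CommRing R] [IsDomain R] [CommRing A] [Algebra R A] (S : Submonoid R)
    [IsLocalization S A] (hS : (0 : R) ∉ S) [AddCommGroup M] [Module R M] [Module.IsTorsionFree R M]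
    {x y : M} (h : (1 : A) ⊗ₜ[R] x = (1 : A) ⊗ₜ[R] y) : x = y := by
  obtain ⟨c, hc⟩ := IsLocalizedModule.exists_of_eq (S := S) (f := TensorProduct.mk R A M 1) h
  have hc0 : (c : R) ≠ 0 := fun h0 => hS (h0 ▸ c.2)
  exact smul_right_injective M hc0 hc

lemma sd_wss_polar {A : Type*} [CommRing A] {n : ℕ} (w : Fin n → A) (x : Fin n → A) (i : Fin n) :
    QuadraticMap.polar (QuadraticMap.weightedSumSquares A w) (Pi.single i 1) x = 2 * w i * x i := by
  simp only [QuadraticMap.polar, QuadraticMap.weightedSumSquares_apply, ← Finset.sum_sub_distrib,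
    Pi.add_apply, smul_eq_mul]
  rw [Finset.sum_eq_single i]
  · simp; ring
  · intro j _ hj
    simp [Pi.single_eq_of_ne hj]
  · simp

open TensorProduct in
lemma sd_good_of_local {R : Type*} [CommRing R] [IsDomain R] [IsPrincipalIdealRing R]
    [Invertible (2 : R)] (n : ℕ) (q : QuadraticForm R (Fin n → R))
    (hq : ∀ P : Ideal R, (hP : P.IsMaximal) → P ≠ ⊥ →
      haveI := hP.isPrime
      HasSimpleDegenerationMultOneDiag n (q.baseChange (Localization.AtPrime P))) :
    SDGood q := by
  intro p hp
  set P : Ideal R := Ideal.span {p} with hPdef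
  have hPmax : P.IsMaximal := PrincipalIdealRing.isMaximal_of_irreducible hp.irreducible
  have hPbot : P ≠ ⊥ := by simpa [hPdef] using hp.ne_zero
  haveI := hPmax.isPrime
  have hPm : ∀ x, x ∈ P ↔ p ∣ x := fun x => Ideal.mem_span_singleton
  obtain ⟨w, j, hw, ⟨u, ϖ, hu, hϖ, hwj⟩, ⟨F⟩⟩ := hq P hPmax hPbot
  let A := Localization.AtPrime P
  change q.baseChange A |>.IsometryEquiv (QuadraticMap.weightedSumSquares A w) at F
  let ι : R →+* A := algebraMap R A
  have hunit : ∀ s ∈ P.primeCompl, IsUnit (ι s) := fun s hs =>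
    IsLocalization.map_units A (⟨s, hs⟩ : P.primeCompl)
  have hιp : ∀ x, ¬ IsUnit (ι x) → p ∣ x := by
    intro x hx
    by_contra hpx
    exact hx (hunit x (fun h => hpx ((hPm x).1 h)))
  have hpnu : ¬ IsUnit (ι p) := by
    rw [IsLocalization.AtPrime.isUnit_to_map_iff A P]
    intro h
    exact h ((hPm p).2 dvd_rfl)
  have h0S : (0 : R) ∉ P.primeCompl := fun h => h P.zero_mem
  have h2 : IsUnit (2 : A) := by
    have := (isUnit_of_invertible (2 : R)).map ι
    rwa [map_ofNat] at this
  have hFpol : ∀ X Y, QuadraticMap.polar (QuadraticMap.weightedSumSquares A w) (F X) (F Y) =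
      QuadraticMap.polar (q.baseChange A) X Y := by
    intro X Y
    simp only [QuadraticMap.polar, ← map_add, F.map_app]
  have hcoord : ∀ i Y, QuadraticMap.polar (q.baseChange A) (F.symm (Pi.single i 1)) Y =
      2 * w i * F Y i := by
    intro i Y
    rw [← hFpol, F.apply_symm_apply, sd_wss_polar]
  have hqE : q.baseChange A (F.symm (Pi.single j 1)) = w j := by
    rw [F.symm.map_app, QuadraticMap.weightedSumSquares_apply, Finset.sum_eq_single j]
    · simp
    · intro i _ hi
      simp [Pi.single_eq_of_ne hi]
    · simp
  obtain ⟨s, hs, e, he⟩ := sd_clear (A := A) P.primeCompl (F.symm (Pi.single j 1))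
  refine ⟨e, ?_, ?_, ?_⟩
  · intro y
    apply hιp
    have h1 : ι (QuadraticMap.polar q e y) = _ := (sd_bc_polar (A := A) q e y).symm
    rw [h1, ← he, QuadraticMap.polar_smul_left, hcoord, hwj]
    intro hun
    apply hϖ.not_isUnit
    refine isUnit_of_dvd_unit ?_ hun
    exact ⟨algebraMap R A s * 2 * u * F (1 ⊗ₜ y) j, by rw [smul_eq_mul]; ring⟩
  · rintro ⟨c, hc⟩
    have h1 : q.baseChange A ((1 : A) ⊗ₜ[R] e) = ι (q e) := by
      simp [QuadraticForm.baseChange_tmul, Algebra.smul_def, ι]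
    rw [← he, QuadraticMap.map_smul, hqE, hwj, hc, map_mul, map_pow, smul_eq_mul] at h1
    have h3 : ι p ^ 2 ∣ (ι s * ι s * u) * ϖ := ⟨ι c, by rw [← h1]; ring⟩
    rw [(((hunit s hs).mul (hunit s hs)).mul hu).dvd_mul_left, pow_two] at h3
    exact hpnu (hϖ.squarefree _ h3)
  · intro z hz
    have h1 : ∀ i, ∃ c, i ≠ j → F ((1 : A) ⊗ₜ[R] z) i = ι p * c := by
      intro i
      by_cases hij : i = j
      · exact ⟨0, fun h => absurd hij h⟩
      obtain ⟨si, hsi, m, hm⟩ := sd_clear (A := A) P.primeCompl (F.symm (Pi.single i 1))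
      have h3 : ι (QuadraticMap.polar q m z) = _ := (sd_bc_polar (A := A) q m z).symm
      rw [← hm, QuadraticMap.polar_smul_left, hcoord, smul_eq_mul] at h3
      obtain ⟨c, hc⟩ := hz m
      have h4 : ι p ∣ (ι si * (2 * w i)) * F ((1 : A) ⊗ₜ[R] z) i := by
        refine ⟨ι c, ?_⟩
        rw [← map_mul, ← hc, QuadraticMap.polar_comm, h3]
        ring
      rw [((hunit si hsi).mul (h2.mul (hw i hij))).dvd_mul_left] at h4
      obtain ⟨c, hc⟩ := h4
      exact ⟨c, fun _ => hc⟩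
    choose c hc using h1
    set α := F ((1 : A) ⊗ₜ[R] z) j with hα
    have h5 : F ((1 : A) ⊗ₜ[R] z) = α • (Pi.single j 1 : Fin n → A) +
        ι p • (fun i => if i = j then 0 else c i) := by
      funext i
      by_cases hij : i = j
      · subst hij; simp [hα]
      · simp [hij, hc i hij]
    obtain ⟨s', hs', m, hm⟩ := sd_clear (A := A) P.primeCompl
      (F.symm (fun i => if i = j then 0 else c i))
    obtain ⟨⟨a, s''⟩, ha⟩ := IsLocalization.surj P.primeCompl α
    have h6 : (1 : A) ⊗ₜ[R] z = α • F.symm (Pi.single j 1 : Fin n → A) +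
        ι p • F.symm (fun i => if i = j then 0 else c i) := by
      rw [← F.symm_apply_apply ((1 : A) ⊗ₜ[R] z), h5]
      change F.toLinearEquiv.symm _ = _ • F.toLinearEquiv.symm _ + _ • F.toLinearEquiv.symm _
      rw [map_add, map_smul, map_smul]
    have h7 : (s * s' * s'' : R) • z = (s' * a) • e + p • ((s * s'' : R) • m) := by
      apply sd_inj (A := A) P.primeCompl h0S
      rw [TensorProduct.tmul_add]
      simp only [TensorProduct.tmul_smul]
      have hsm : ∀ (r : R) (X : A ⊗[R] (Fin n → R)), r • X = algebraMap R A r • X :=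
        fun r X => (algebraMap_smul A r X).symm
      rw [← he, ← hm, h6]
      simp only [hsm]
      simp only [map_mul]
      simp only at ha
      rw [← ha]
      simp only [ι, smul_add, smul_smul]
      congr 2 <;> ring
    have hσ : ¬ p ∣ (s * s' * s'' : R) := by
      rw [← hPm]
      exact P.primeCompl.mul_mem (P.primeCompl.mul_mem hs hs') s''.2
    obtain ⟨x, y, hxy⟩ := (hp.irreducible.coprime_iff_not_dvd.mpr hσ)
    refine ⟨y * (s' * a), x • z + y • ((s * s'' : R) • m), ?_⟩
    calc z = (x * p + y * (s * s' * s'' : R)) • z := by rw [hxy, one_smul]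
      _ = (x * p) • z + y • ((s * s' * s'' : R) • z) := by rw [add_smul, mul_smul y]
      _ = _ := by rw [h7]; module

open TensorProduct in
lemma sd_descend {R : Type*} [CommRing R] [IsDomain R] [Invertible (2 : R)] (n : ℕ)
    (q q' : QuadraticForm R (Fin n → R))
    (F : (q.baseChange (FractionRing R)).IsometryEquiv (q'.baseChange (FractionRing R))) :
    ∃ (f : (Fin n → R) →ₗ[R] (Fin n → R)) (d : R), d ≠ 0 ∧ (∀ x, q' (f x) = d * d * q x) ∧
      ∀ x, (1 : FractionRing R) ⊗ₜ[R] f x = algebraMap R (FractionRing R) d • F (1 ⊗ₜ x) := by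
  let K := FractionRing R
  choose s hs m hm using fun i => sd_clear (A := K) (nonZeroDivisors R)
    (F ((1 : K) ⊗ₜ[R] (Pi.single i 1 : Fin n → R)))
  let d := ∏ i, s i
  have hd : d ≠ 0 := Finset.prod_ne_zero_iff.mpr fun i _ => nonZeroDivisors.ne_zero (hs i)
  let f : (Fin n → R) →ₗ[R] (Fin n → R) :=
    (Pi.basisFun R (Fin n)).constr R fun i => (∏ k ∈ Finset.univ.erase i, s k) • m i
  let g1 : (Fin n → R) →ₗ[R] K ⊗[R] (Fin n → R) := (TensorProduct.mk R K (Fin n → R) 1) ∘ₗ f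
  let g2 : (Fin n → R) →ₗ[R] K ⊗[R] (Fin n → R) :=
    d • ((F.toLinearEquiv.toLinearMap.restrictScalars R) ∘ₗ (TensorProduct.mk R K (Fin n → R) 1))
  have hg : g1 = g2 := by
    refine (Pi.basisFun R (Fin n)).ext fun i => ?_
    have h1 : g1 (Pi.basisFun R (Fin n) i) =
        (1 : K) ⊗ₜ[R] ((∏ k ∈ Finset.univ.erase i, s k) • m i) := by
      simp only [g1, f, LinearMap.comp_apply, Module.Basis.constr_basis, TensorProduct.mk_apply]
    have h2 : g2 (Pi.basisFun R (Fin n) i) = d • F ((1 : K) ⊗ₜ[R] (Pi.single i 1)) := by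
      simp only [g2, Pi.basisFun_apply]; rfl
    rw [h1, h2, TensorProduct.tmul_smul, ← hm, algebraMap_smul, smul_smul,
      Finset.prod_erase_mul _ _ (Finset.mem_univ i)]
  have hfx : ∀ x, (1 : K) ⊗ₜ[R] f x = algebraMap R K d • F (1 ⊗ₜ x) := by
    intro x
    have := LinearMap.congr_fun hg x
    rw [algebraMap_smul]
    exact this
  refine ⟨f, d, hd, ?_, hfx⟩
  intro x
  apply IsFractionRing.injective R K
  have h1 : ∀ (Q : QuadraticForm R (Fin n → R)) y,
      Q.baseChange K ((1 : K) ⊗ₜ[R] y) = algebraMap R K (Q y) := by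
    intro Q y
    simp [QuadraticForm.baseChange_tmul, Algebra.smul_def]
  rw [← h1, hfx, QuadraticMap.map_smul, F.map_app, h1, map_mul, map_mul, smul_eq_mul]

open TensorProduct in
lemma sd_field {R : Type*} [CommRing R] [IsDomain R] [Invertible (2 : R)] (n : ℕ)
    (hR : ∀ x : R, x ≠ 0 → IsUnit x)
    (q q' : QuadraticForm R (Fin n → R))
    (F : (q.baseChange (FractionRing R)).IsometryEquiv (q'.baseChange (FractionRing R))) :
    Nonempty (q.IsometryEquiv q') := by
  obtain ⟨f, d, hd, hf, hfF⟩ := sd_descend n q q' F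
  obtain ⟨g, c, hc, hg, hgF⟩ := sd_descend n q' q F.symm
  obtain ⟨d', hd'⟩ := (hR d hd).exists_left_inv
  obtain ⟨c', hc'⟩ := (hR c hc).exists_left_inv
  have h0 : (0 : R) ∉ nonZeroDivisors R := zero_notMem_nonZeroDivisors
  have hgf : ∀ x, g (f x) = (c * d) • x := by
    intro x
    apply sd_inj (A := FractionRing R) (nonZeroDivisors R) h0
    rw [hgF, hfF]
    change _ • F.toLinearEquiv.symm (_ • F.toLinearEquiv _) = _
    rw [map_smul, LinearEquiv.symm_apply_apply, smul_smul, ← map_mul, algebraMap_smul,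
      TensorProduct.tmul_smul]
  have hfg : ∀ x, f (g x) = (c * d) • x := by
    intro x
    apply sd_inj (A := FractionRing R) (nonZeroDivisors R) h0
    rw [hfF, hgF]
    change _ • F.toLinearEquiv (_ • F.toLinearEquiv.symm _) = _
    rw [map_smul, LinearEquiv.apply_symm_apply, smul_smul, ← map_mul, algebraMap_smul,
      TensorProduct.tmul_smul, mul_comm]
  have hone : c' * d' * (c * d) = 1 := by linear_combination c' * c * hd' + hc'
  refine ⟨⟨LinearEquiv.ofLinearMap (d' • f) (c' • g) ?_ ?_, ?_⟩⟩
  · ext1 x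
    ext1
    simp only [LinearMap.comp_apply, LinearMap.smul_apply, map_smul, hfg, smul_smul]
    rw [show c' * (d' * (c * d)) = 1 by linear_combination hone]
    simp
  · ext1 x
    ext1
    simp only [LinearMap.comp_apply, LinearMap.smul_apply, map_smul, hgf, smul_smul]
    rw [show d' * (c' * (c * d)) = 1 by linear_combination hone]
    simp
  · intro x
    change q' (d' • f x) = q x
    rw [QuadraticMap.map_smul, hf, smul_eq_mul]
    linear_combination (q x) * (d' * d + 1) * hd'

theorem isometric_of_isometric_over_fractions
    {R : Type*} [CommRing R] [IsDomain R] [IsPrincipalIdealRing R]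
    (hsemilocal : {I : Ideal R | I.IsMaximal}.Finite) [Invertible (2 : R)]
    (n : ℕ) (q q' : QuadraticForm R (Fin n → R))
    (hq : ∀ P : Ideal R, (hP : P.IsMaximal) → P ≠ ⊥ →
      haveI := hP.isPrime
      HasSimpleDegenerationMultOneDiag n (q.baseChange (Localization.AtPrime P)))
    (hq' : ∀ P : Ideal R, (hP : P.IsMaximal) → P ≠ ⊥ →
      haveI := hP.isPrime
      HasSimpleDegenerationMultOneDiag n (q'.baseChange (Localization.AtPrime P)))
    (hK : Nonempty ((q.baseChange (FractionRing R)).IsometryEquiv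
      (q'.baseChange (FractionRing R)))) :
    Nonempty (q.IsometryEquiv q') := by
  obtain ⟨F⟩ := hK
  by_cases hR : ∃ p : R, Prime p
  · obtain ⟨f, d, hd, hf, -⟩ := sd_descend n q q' F
    exact sd_main hsemilocal hR n (by simp) (by simp) q q' (sd_good_of_local n q hq)
      (sd_good_of_local n q' hq') f d hd hf
  · refine sd_field n (fun x hx => ?_) q q' F
    by_contra hu
    obtain ⟨p, hp, -⟩ := WfDvdMonoid.exists_irreducible_factor hu hx
    exact hR ⟨p, hp.prime⟩
end

section
/- Let q be a quadratic form of rank 4 over a field K of characteristic ≠ 2 with nontrivial (nonsquare) discriminant d, and let L = K(√d) be the discriminant extension. Then q is isotropic over K if and only if the even Clifford algebra C₀(q), a quaternion algebra over L, is split over L. -/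
open Polynomial Matrix

set_option linter.unusedSimpArgs false

section Cliff
variable {K : Type*} [Field K] {V : Type*} [AddCommGroup V] [Module K V]

lemma omega_anti {A : Type*} [Ring A] [Algebra K A] (x : Fin 4 → A) (a : Fin 4 → K)
    (hsq : ∀ i, x i * x i = a i • (1 : A)) (hanti : ∀ i j, j < i → x i * x j = -(x j * x i)) :
    (∀ i, x 0 * (x 1 * (x 2 * x 3)) * x i = -(x i * (x 0 * (x 1 * (x 2 * x 3))))) ∧
    x 0 * (x 1 * (x 2 * x 3)) * (x 0 * (x 1 * (x 2 * x 3))) =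
      (a 0 * a 1 * a 2 * a 3) • (1 : A) := by
  have hsq' : ∀ i z, x i * (x i * z) = a i • z := by
    intro i z; rw [← mul_assoc, hsq, smul_mul_assoc, one_mul]
  have hanti' : ∀ i j, j < i → ∀ z, x i * (x j * z) = -(x j * (x i * z)) := by
    intro i j h z; rw [← mul_assoc, hanti i j h, neg_mul, mul_assoc]
  have r10 := hanti 1 0 (by decide)
  have r20 := hanti 2 0 (by decide)
  have r30 := hanti 3 0 (by decide)
  have r21 := hanti 2 1 (by decide)
  have r31 := hanti 3 1 (by decide)
  have r32 := hanti 3 2 (by decide)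
  have s10 := hanti' 1 0 (by decide)
  have s20 := hanti' 2 0 (by decide)
  have s30 := hanti' 3 0 (by decide)
  have s21 := hanti' 2 1 (by decide)
  have s31 := hanti' 3 1 (by decide)
  have s32 := hanti' 3 2 (by decide)
  constructor
  · intro i
    fin_cases i <;>
    simp [mul_assoc, hsq, hsq', r10, r20, r30, r21, r31, r32, s10, s20, s30, s21, s31, s32]
  · simp [mul_assoc, hsq, hsq', r10, r20, r30, r21, r31, r32, s10, s20, s30, s21, s31, s32,
      smul_smul]
    congr 1; ring

lemma triple_mem {A : Type*} [Ring A] [Algebra K A] (x : Fin 4 → A) (a : Fin 4 → K)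
    (ha : ∀ i, a i ≠ 0)
    (hsq : ∀ i, x i * x i = a i • (1 : A)) (hanti : ∀ i j, j < i → x i * x j = -(x j * x i))
    (T : Submodule K A) (h1 : ∀ i, x i ∈ T) (h2 : ∀ i, x i * (x 0 * (x 1 * (x 2 * x 3))) ∈ T)
    (i j k : Fin 4) : x i * (x j * x k) ∈ T := by
  have hsq' : ∀ i z, x i * (x i * z) = a i • z := by
    intro i z; rw [← mul_assoc, hsq, smul_mul_assoc, one_mul]
  have hanti' : ∀ i j, j < i → ∀ z, x i * (x j * z) = -(x j * (x i * z)) := by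
    intro i j h z; rw [← mul_assoc, hanti i j h, neg_mul, mul_assoc]
  have r10 := hanti 1 0 (by decide)
  have r20 := hanti 2 0 (by decide)
  have r30 := hanti 3 0 (by decide)
  have r21 := hanti 2 1 (by decide)
  have r31 := hanti 3 1 (by decide)
  have r32 := hanti 3 2 (by decide)
  have s10 := hanti' 1 0 (by decide)
  have s20 := hanti' 2 0 (by decide)
  have s30 := hanti' 3 0 (by decide)
  have s21 := hanti' 2 1 (by decide)
  have s31 := hanti' 3 1 (by decide)
  have s32 := hanti' 3 2 (by decide)
  have t0 := h2 0
  have t1 := h2 1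
  have t2 := h2 2
  have t3 := h2 3
  simp only [mul_assoc, hsq, hsq', r10, r20, r30, r21, r31, r32, s10, s20, s30, s21, s31, s32,
    mul_neg, mul_smul_comm, smul_neg, neg_neg, mul_one, neg_mem_iff,
    Submodule.smul_mem_iff _ (ha _)] at t0 t1 t2 t3
  fin_cases i <;> fin_cases j <;> fin_cases k <;>
    simp [hsq, hsq', r10, r20, r30, r21, r31, r32, s10, s20, s30, s21, s31, s32,
      Submodule.smul_mem_iff _ (ha _), t0, t1, t2, t3, h1]

open CliffordAlgebra

/-- The parametrisation of the even Clifford algebra by pairs of vectors. -/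
noncomputable def par (Q : QuadraticForm K V) (ω : CliffordAlgebra Q) :
    (V × V) →ₗ[K] CliffordAlgebra Q :=
  (ι Q).coprod ((LinearMap.mulRight K ω).comp (ι Q))

lemma par_apply (Q : QuadraticForm K V) (ω : CliffordAlgebra Q) (v w : V) :
    par Q ω (v, w) = ι Q v + ι Q w * ω := by simp [par]

/-- The pseudoscalar. -/
noncomputable def psc (Q : QuadraticForm K V) (e : Fin 4 → V) : CliffordAlgebra Q :=
  ι Q (e 0) * (ι Q (e 1) * (ι Q (e 2) * ι Q (e 3)))

lemma psc_facts (Q : QuadraticForm K V) (e : Module.Basis (Fin 4) K V)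
    (ho : ∀ i j, i ≠ j → Q.IsOrtho (e i) (e j)) :
    (∀ v, psc Q e * ι Q v = -(ι Q v * psc Q e)) ∧
    psc Q e * psc Q e = (Q (e 0) * Q (e 1) * Q (e 2) * Q (e 3)) • (1 : CliffordAlgebra Q) := by
  have h := omega_anti (fun i => ι Q (e i)) (fun i => Q (e i))
    (fun i => by rw [ι_sq_scalar, Algebra.algebraMap_eq_smul_one])
    (fun i j hij => ι_mul_ι_comm_of_isOrtho (ho i j hij.ne'))
  refine ⟨fun v => ?_, h.2⟩
  have : (LinearMap.mulLeft K (psc Q e)).comp (ι Q) =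
      -((LinearMap.mulRight K (psc Q e)).comp (ι Q)) :=
    e.ext fun i => by exact h.1 i
  exact LinearMap.congr_fun this v

lemma triple_mem_par (Q : QuadraticForm K V) (e : Module.Basis (Fin 4) K V)
    (ho : ∀ i j, i ≠ j → Q.IsOrtho (e i) (e j)) (ha : ∀ i, Q (e i) ≠ 0) (u v w : V) :
    ι Q u * (ι Q v * ι Q w) ∈ LinearMap.range (par Q (psc Q e)) := by
  have h := triple_mem (fun i => ι Q (e i)) (fun i => Q (e i)) ha
    (fun i => by rw [ι_sq_scalar, Algebra.algebraMap_eq_smul_one])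
    (fun i j hij => ι_mul_ι_comm_of_isOrtho (ho i j hij.ne'))
    (LinearMap.range (par Q (psc Q e)))
    (fun i => ⟨(e i, 0), by simp [par_apply]⟩)
    (fun i => ⟨(0, e i), by simp [par_apply, psc]⟩)
  rw [← e.sum_repr u, ← e.sum_repr v, ← e.sum_repr w]
  simp only [map_sum, map_smul, Finset.sum_mul, Finset.mul_sum, smul_mul_assoc, mul_smul_comm]
  refine Submodule.sum_mem _ fun i _ => ?_
  refine Submodule.smul_mem _ _ (Submodule.sum_mem _ fun j _ => ?_)
  refine Submodule.smul_mem _ _ (Submodule.sum_mem _ fun k _ => ?_)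
  exact Submodule.smul_mem _ _ (h _ _ _)

lemma even_span (Q : QuadraticForm K V) (e : Module.Basis (Fin 4) K V)
    (ho : ∀ i j, i ≠ j → Q.IsOrtho (e i) (e j)) (ha : ∀ i, Q (e i) ≠ 0)
    (z : CliffordAlgebra Q) (hz : z ∈ evenOdd Q 0) :
    ∃ v w, z = (ι Q v + ι Q w * psc Q e) * ι Q (e 0) := by
  suffices h : ∃ p, z = par Q (psc Q e) p * ι Q (e 0) by
    obtain ⟨⟨v, w⟩, h⟩ := h
    exact ⟨v, w, by rw [h, par_apply]⟩
  induction z, hz using even_induction with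
  | algebraMap r =>
    refine ⟨((r / Q (e 0)) • e 0, 0), ?_⟩
    rw [par_apply]
    simp only [map_smul, map_zero, zero_mul, add_zero, smul_mul_assoc, ι_sq_scalar]
    rw [Algebra.smul_def, ← map_mul, div_mul_cancel₀ _ (ha 0)]
  | add x y hx hy ihx ihy =>
    obtain ⟨p, rfl⟩ := ihx
    obtain ⟨p', rfl⟩ := ihy
    exact ⟨p + p', by rw [map_add, add_mul]⟩
  | ι_mul_ι_mul m₁ m₂ x hx ih =>
    obtain ⟨⟨v, w⟩, rfl⟩ := ih
    obtain ⟨⟨p1, p2⟩, hp⟩ := triple_mem_par Q e ho ha m₁ m₂ v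
    obtain ⟨⟨r1, r2⟩, hr⟩ := triple_mem_par Q e ho ha m₁ m₂ w
    set D := Q (e 0) * Q (e 1) * Q (e 2) * Q (e 3) with hD
    refine ⟨(p1 + D • r2, p2 + r1), ?_⟩
    have hsq := (psc_facts Q e ho).2
    rw [← hD] at hsq
    rw [par_apply] at hp hr ⊢
    rw [par_apply]
    rw [← mul_assoc, mul_add]
    congr 1
    have e1 : ι Q m₁ * ι Q m₂ * ι Q v = ι Q p1 + ι Q p2 * psc Q e := by rw [hp, mul_assoc]
    have e2 : ι Q m₁ * ι Q m₂ * (ι Q w * psc Q e) = (ι Q r1 + ι Q r2 * psc Q e) * psc Q e := by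
      rw [hr]; simp only [mul_assoc]
    rw [e1, e2, add_mul, mul_assoc (ι Q r2), hsq]
    simp only [map_add, map_smul, add_mul, mul_smul_comm, mul_one]
    abel

end Cliff

section Cliff2
variable {K : Type*} [Field K] {V : Type*} [AddCommGroup V] [Module K V]
open CliffordAlgebra

lemma norm_calc (Q : QuadraticForm K V) (e : Module.Basis (Fin 4) K V)
    (ho : ∀ i j, i ≠ j → Q.IsOrtho (e i) (e j)) (v w : V) :
    (ι Q v - ι Q w * psc Q e) * (ι Q v + ι Q w * psc Q e) =
      (Q v + (Q (e 0) * Q (e 1) * Q (e 2) * Q (e 3)) * Q w) • (1 : CliffordAlgebra Q) +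
        (QuadraticMap.polar Q v w) • psc Q e := by
  obtain ⟨h1, h2⟩ := psc_facts Q e ho
  set D := Q (e 0) * Q (e 1) * Q (e 2) * Q (e 3)
  set ω := psc Q e
  have hp := ι_mul_ι_add_swap (Q := Q) v w
  have hv := ι_sq_scalar Q v
  have hw := ι_sq_scalar Q w
  rw [Algebra.algebraMap_eq_smul_one] at hp hv hw
  calc _ = ι Q v * ι Q v + ι Q v * ι Q w * ω - ι Q w * (ω * ι Q v)
        - ι Q w * (ω * ι Q w) * ω := by noncomm_ring
    _ = ι Q v * ι Q v + (ι Q v * ι Q w + ι Q w * ι Q v) * ω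
        + (ι Q w * ι Q w) * (ω * ω) := by rw [h1, h1]; noncomm_ring
    _ = _ := by
      rw [hp, hv, hw, h2]
      simp only [smul_mul_assoc, one_mul, smul_smul, add_smul, mul_comm D]
      abel

lemma exists_of_zero_div (Q : QuadraticForm K V) (e : Module.Basis (Fin 4) K V)
    (ho : ∀ i j, i ≠ j → Q.IsOrtho (e i) (e j)) (ha : ∀ i, Q (e i) ≠ 0)
    (hD : ¬ IsSquare (Q (e 0) * Q (e 1) * Q (e 2) * Q (e 3)))
    (z z' : CliffordAlgebra Q) (hz : z ∈ evenOdd Q 0) (hz0 : z ≠ 0) (hz0' : z' ≠ 0)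
    (hzz : z * z' = 0) :
    ∃ v w, (v ≠ 0 ∨ w ≠ 0) ∧ Q v + (Q (e 0) * Q (e 1) * Q (e 2) * Q (e 3)) * Q w = 0 ∧
      QuadraticMap.polar Q v w = 0 := by
  obtain ⟨v, w, rfl⟩ := even_span Q e ho ha z hz
  refine ⟨v, w, ?_, ?_⟩
  · by_contra! h
    simp [h.1, h.2] at hz0
  have hn := norm_calc Q e ho v w
  obtain ⟨h1, h2⟩ := psc_facts Q e ho
  set D := Q (e 0) * Q (e 1) * Q (e 2) * Q (e 3)
  set ω := psc Q e
  set s := Q v + D * Q w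
  set t := QuadraticMap.polar Q v w
  have key : s * s - D * (t * t) = 0 := by
    by_contra hne
    apply hz0'
    have h3 : (s • (1 : CliffordAlgebra Q) - t • ω) * (s • 1 + t • ω) =
        (s * s - D * (t * t)) • (1 : CliffordAlgebra Q) := by
      have : (s • (1 : CliffordAlgebra Q) - t • ω) * (s • 1 + t • ω) =
        (s * s) • (1 : CliffordAlgebra Q) - (t * t) • (ω * ω) := by
        simp only [sub_mul, mul_add, smul_mul_assoc, mul_smul_comm, one_mul, mul_one, smul_add,
          smul_sub, smul_smul, mul_comm t s]
        abel
      rw [this, h2, smul_smul, sub_smul, mul_comm D]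
    have h4 : ι Q (e 0) * (s • (1 : CliffordAlgebra Q) - t • ω) * (ι Q v - ι Q w * ω) *
        ((ι Q v + ι Q w * ω) * ι Q (e 0) * z') = 0 := by rw [hzz, mul_zero]
    have h5 : ι Q (e 0) * (s • (1 : CliffordAlgebra Q) - t • ω) * (ι Q v - ι Q w * ω) *
        ((ι Q v + ι Q w * ω) * ι Q (e 0) * z') =
        ι Q (e 0) * ((s • (1 : CliffordAlgebra Q) - t • ω) *
          ((ι Q v - ι Q w * ω) * (ι Q v + ι Q w * ω))) * ι Q (e 0) * z' := by
      simp only [mul_assoc]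
    rw [h5, hn, h3, mul_smul_comm, mul_one, smul_mul_assoc, ι_sq_scalar, smul_mul_assoc,
      ← Algebra.smul_def, smul_smul] at h4
    exact (smul_eq_zero.mp h4).resolve_left (mul_ne_zero hne (ha 0))
  have ht : t = 0 := by
    by_contra ht
    apply hD
    refine ⟨s / t, ?_⟩
    field_simp
    linear_combination -key
  refine ⟨?_, ht⟩
  simpa [ht] using key

lemma exists_of_split (Q : QuadraticForm K V) (e : Module.Basis (Fin 4) K V)
    (ho : ∀ i j, i ≠ j → Q.IsOrtho (e i) (e j)) (ha : ∀ i, Q (e i) ≠ 0)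
    (hD : ¬ IsSquare (Q (e 0) * Q (e 1) * Q (e 2) * Q (e 3)))
    {R : Type*} [CommRing R] [Algebra K R] [Nontrivial R]
    (f : ↥(CliffordAlgebra.even Q) ≃ₐ[K] Matrix (Fin 2) (Fin 2) R) :
    ∃ v w, (v ≠ 0 ∨ w ≠ 0) ∧ Q v + (Q (e 0) * Q (e 1) * Q (e 2) * Q (e 3)) * Q w = 0 ∧
      QuadraticMap.polar Q v w = 0 := by
  have hne : ∀ i : Fin 2, Matrix.single i i (1 : R) ≠ 0 := fun i h => by
    simpa using congrFun (congrFun h i) i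
  refine exists_of_zero_div Q e ho ha hD (f.symm (Matrix.single 0 0 1) : CliffordAlgebra Q)
    (f.symm (Matrix.single 1 1 1) : CliffordAlgebra Q) (f.symm (Matrix.single 0 0 1)).2 ?_ ?_ ?_
  · simpa using! hne 0
  · simpa using! hne 1
  · have : f.symm (Matrix.single 0 0 1) * f.symm (Matrix.single 1 1 1) = 0 := by
      rw [← map_mul]; simp
    exact congrArg Subtype.val this

/-- The half-spin map gives an even hom. -/
noncomputable def evHom {R : Type*} [CommRing R] [Algebra K R] (Q : QuadraticForm K V)
    (φ : V →ₗ[K] Matrix (Fin 2) (Fin 2) R) (hφ : ∀ v, (φ v).det = algebraMap K R (Q v)) :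
    EvenHom Q (Matrix (Fin 2) (Fin 2) R) where
  bilin := LinearMap.mk₂ K (fun v w => φ v * (φ w).adjugate)
    (fun _ _ _ => by rw [map_add, add_mul])
    (fun _ _ _ => by rw [map_smul, smul_mul_assoc])
    (fun _ _ _ => by
      rw [map_add, ← mul_add]; congr 1
      ext i j; fin_cases i <;> fin_cases j <;> simp [Matrix.adjugate_fin_two, add_comm])
    (fun _ _ _ => by
      rw [map_smul, ← mul_smul_comm]; congr 1
      ext i j; fin_cases i <;> fin_cases j <;> simp [Matrix.adjugate_fin_two])
  contract m := by
    simp only [LinearMap.mk₂_apply]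
    rw [Matrix.mul_adjugate, hφ, algebraMap_smul, Algebra.algebraMap_eq_smul_one]
  contract_mid u v w := by
    simp only [LinearMap.mk₂_apply]
    rw [mul_assoc, ← mul_assoc (φ v).adjugate, Matrix.adjugate_mul, hφ, algebraMap_smul]
    simp

lemma split_of_surj {R : Type*} [CommRing R] [Algebra K R] [FiniteDimensional K R]
    (hR : Module.finrank K R = 2)
    (Q : QuadraticForm K V) (e : Module.Basis (Fin 4) K V)
    (ho : ∀ i j, i ≠ j → Q.IsOrtho (e i) (e j)) (ha : ∀ i, Q (e i) ≠ 0)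
    (f : ↥(CliffordAlgebra.even Q) →ₐ[K] Matrix (Fin 2) (Fin 2) R)
    (hf : Function.Surjective f) :
    Nonempty (↥(CliffordAlgebra.even Q) ≃ₐ[K] Matrix (Fin 2) (Fin 2) R) := by
  have hmem : ∀ p : V × V, par Q (psc Q e) p * ι Q (e 0) ∈ CliffordAlgebra.even Q := by
    rintro ⟨v, w⟩
    rw [par_apply, add_mul]
    refine add_mem (ι_mul_ι_mem_evenOdd_zero Q _ _) ?_
    have : ι Q w * psc Q e * ι Q (e 0) = (ι Q w * ι Q (e 0)) * (ι Q (e 1) * ι Q (e 2)) *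
      (ι Q (e 3) * ι Q (e 0)) := by simp only [psc, mul_assoc]
    rw [this]
    exact mul_mem (mul_mem (ι_mul_ι_mem_evenOdd_zero Q _ _) (ι_mul_ι_mem_evenOdd_zero Q _ _))
      (ι_mul_ι_mem_evenOdd_zero Q _ _)
  let g : (V × V) →ₗ[K] ↥(CliffordAlgebra.even Q) :=
    LinearMap.codRestrict (Subalgebra.toSubmodule (CliffordAlgebra.even Q))
      ((LinearMap.mulRight K (ι Q (e 0))).comp (par Q (psc Q e))) hmem
  have hg : Function.Surjective g := by
    rintro ⟨z, hz⟩
    obtain ⟨v, w, h⟩ := even_span Q e ho ha z hz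
    refine ⟨(v, w), Subtype.ext ?_⟩
    refine Eq.trans ?_ h.symm
    rw [← par_apply]; rfl
  have : FiniteDimensional K V := e.finiteDimensional_of_finite
  have hV : Module.finrank K V = 4 := by simpa using Module.finrank_eq_card_basis e
  have hinj : Function.Injective (f.toLinearMap.comp g) := by
    rw [LinearMap.injective_iff_surjective_of_finrank_eq_finrank]
    · exact hf.comp hg
    · rw [Module.finrank_prod, hV, Module.finrank_matrix, hR]; simp
  refine ⟨AlgEquiv.ofBijective f ⟨?_, hf⟩⟩
  intro x y hxy
  obtain ⟨p, rfl⟩ := hg x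
  obtain ⟨r, rfl⟩ := hg y
  exact congrArg g (hinj hxy)

end Cliff2

section Lin
variable {K : Type*} [Field K] {V : Type*} [AddCommGroup V] [Module K V]

lemma complete_basis [Invertible (2 : K)] [FiniteDimensional K V] (hV : Module.finrank K V = 4)
    (B : LinearMap.BilinForm K V) (hB : ∀ x y, B x y = B y x) (p m : V) (hpm : B p m = 0)
    (hp : B p p ≠ 0) (hm : B m m ≠ 0) :
    ∃ e : Module.Basis (Fin 4) K V, e 0 = p ∧ e 1 = m ∧ ∀ i j, i ≠ j → B (e i) (e j) = 0 := by
  let g : V →ₗ[K] K × K := (B p).prod (B m)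
  have hg : Function.Surjective g := by
    rintro ⟨a, b⟩
    refine ⟨(a / B p p) • p + (b / B m m) • m, ?_⟩
    simp [g, hpm, hB m p, hp, hm]
  have hr := g.finrank_range_add_finrank_ker
  rw [LinearMap.range_eq_top.mpr hg, finrank_top, Module.finrank_prod, Module.finrank_self, hV] at hr
  have hW : Module.finrank K (LinearMap.ker g) = 2 := by omega
  obtain ⟨b0, hb0⟩ := LinearMap.BilinForm.exists_orthogonal_basis
    (B := B.restrict (LinearMap.ker g)) ⟨fun x y => by simpa using! hB x y⟩
  let b := b0.reindex (finCongr hW)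
  have hb : B (b 0) (b 1) = 0 := by
    have : (finCongr hW).symm 0 ≠ (finCongr hW).symm 1 := by simp
    have := hb0 this
    simpa [b] using! this
  have hk : ∀ i, B p (b i) = 0 ∧ B m (b i) = 0 := fun i => by
    have := (b i).2
    rw [LinearMap.mem_ker] at this
    exact Prod.ext_iff.mp this
  let e : Fin 4 → V := ![p, m, b 0, b 1]
  have he : LinearIndependent K e := by
    rw [Fintype.linearIndependent_iff]
    intro c hc
    simp only [Fin.sum_univ_four, e, Matrix.cons_val] at hc
    have c0 : c 0 = 0 := by
      have := congrArg (B p) hc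
      simpa [hpm, (hk 0).1, (hk 1).1, hp] using this
    have c1 : c 1 = 0 := by
      have := congrArg (B m) hc
      simpa [hB m p, hpm, (hk 0).2, (hk 1).2, hm] using this
    have hli := b.linearIndependent
    rw [Fintype.linearIndependent_iff] at hli
    have := hli ![c 2, c 3] (by
      apply Subtype.ext
      simpa [Fin.sum_univ_two, c0, c1] using hc)
    have c2 := this 0
    have c3 := this 1
    simp at c2 c3
    intro i
    fin_cases i <;> assumption
  refine ⟨basisOfLinearIndependentOfCardEqFinrank he (by simp [hV]), by simp [e], by simp [e], ?_⟩
  intro i j hij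
  simp only [coe_basisOfLinearIndependentOfCardEqFinrank]
  have k0 := hk 0
  have k1 := hk 1
  fin_cases i <;> fin_cases j <;>
    first
    | exact absurd rfl hij
    | (simp [e, hpm, hb, k0, k1]; done)
    | (rw [hB]; simp [e, hpm, hb, k0, k1]; done)

lemma exists_orth4 [Invertible (2 : K)] [FiniteDimensional K V] (hV : Module.finrank K V = 4)
    (B : LinearMap.BilinForm K V) (hB : ∀ x y, B x y = B y x) :
    ∃ e : Module.Basis (Fin 4) K V, ∀ i j, i ≠ j → B (e i) (e j) = 0 := by
  obtain ⟨b0, hb0⟩ := LinearMap.BilinForm.exists_orthogonal_basis (B := B) ⟨fun x y => hB x y⟩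
  refine ⟨b0.reindex (finCongr hV), fun i j hij => ?_⟩
  have : (finCongr hV).symm i ≠ (finCongr hV).symm j := by simpa using hij
  simpa using! hb0 this

lemma gram_det (G : Matrix (Fin 4) (Fin 4) K) (e : Module.Basis (Fin 4) K (Fin 4 → K))
    (ho : ∀ i j, i ≠ j → Matrix.toBilin' G (e i) (e j) = 0) :
    ∃ s : K, s ≠ 0 ∧ Matrix.toBilin' G (e 0) (e 0) * Matrix.toBilin' G (e 1) (e 1) *
      Matrix.toBilin' G (e 2) (e 2) * Matrix.toBilin' G (e 3) (e 3) = s ^ 2 * G.det := by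
  let P : Matrix (Fin 4) (Fin 4) K := Matrix.of fun i => e i
  have hP : IsUnit P := by
    rw [← Matrix.linearIndependent_rows_iff_isUnit]
    exact e.linearIndependent
  refine ⟨P.det, ((Matrix.isUnit_iff_isUnit_det _).mp hP).ne_zero, ?_⟩
  have h : P * G * Pᵀ = Matrix.diagonal fun i => Matrix.toBilin' G (e i) (e i) := by
    ext i j
    have h1 : (P * G * Pᵀ) i j = Matrix.toBilin' G (e i) (e j) := by
      rw [Matrix.toBilin'_apply', Matrix.dotProduct_mulVec]
      simp [P, Matrix.mul_apply, dotProduct, Matrix.vecMul]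
    rw [h1]
    by_cases hij : i = j
    · subst hij; simp
    · rw [ho i j hij, Matrix.diagonal_apply_ne _ hij]
  have h2 := congrArg Matrix.det h
  rw [Matrix.det_mul, Matrix.det_mul, Matrix.det_transpose, Matrix.det_diagonal,
    Fin.prod_univ_four] at h2
  rw [← h2]; ring

open CliffordAlgebra

lemma split_of_special {R : Type*} [CommRing R] [Algebra K R] [FiniteDimensional K R]
    [Invertible (2 : K)]
    (hR : Module.finrank K R = 2) (θ : R) (hθ : Algebra.adjoin K {θ} = ⊤)
    (B : LinearMap.BilinForm K V)
    (Q : QuadraticForm K V) (hQ : ∀ v, Q v = B v v) (e : Module.Basis (Fin 4) K V)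
    (hoB : ∀ i j, i ≠ j → B (e i) (e j) = 0)
    (ho : ∀ i j, i ≠ j → Q.IsOrtho (e i) (e j)) (ha : ∀ i, Q (e i) ≠ 0)
    (h0 : Q (e 0) = 1) (h1 : Q (e 1) = -1)
    (hθ2 : algebraMap K R (Q (e 2)) * θ ^ 2 = - algebraMap K R (Q (e 3))) :
    Nonempty (↥(CliffordAlgebra.even Q) ≃ₐ[K] Matrix (Fin 2) (Fin 2) R) := by
  let φ : V →ₗ[K] Matrix (Fin 2) (Fin 2) R := e.constr K
    ![1, !![1, 0; 0, -1], !![0, -algebraMap K R (Q (e 2)); 1, 0],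
      !![0, -algebraMap K R (Q (e 2)) * θ; -θ, 0]]
  have p0 : φ (e 0) = 1 := by simp [φ]
  have p1 : φ (e 1) = !![1, 0; 0, -1] := by simp [φ]
  have p2 : φ (e 2) = !![0, -algebraMap K R (Q (e 2)); 1, 0] := by simp [φ]
  have p3 : φ (e 3) = !![0, -algebraMap K R (Q (e 2)) * θ; -θ, 0] := by simp [φ]
  have hφ : ∀ v, (φ v).det = algebraMap K R (Q v) := by
    intro v
    obtain ⟨c, rfl⟩ : ∃ c : Fin 4 → K, v = c 0 • e 0 + c 1 • e 1 + c 2 • e 2 + c 3 • e 3 :=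
      ⟨e.repr v, by rw [← Fin.sum_univ_four (fun i => e.repr v i • e i), e.sum_repr]⟩
    have hQv : Q (c 0 • e 0 + c 1 • e 1 + c 2 • e 2 + c 3 • e 3) =
        c 0 ^ 2 - c 1 ^ 2 + c 2 ^ 2 * Q (e 2) + c 3 ^ 2 * Q (e 3) := by
      rw [hQ] at h0 h1
      rw [hQ, hQ, hQ]
      simp [hoB, h0, h1]
      ring
    rw [hQv]
    simp only [map_add, map_smul, p0, p1, p2, p3, Matrix.det_fin_two]
    simp
    simp only [Algebra.smul_def]
    linear_combination (-(algebraMap K R (c 3)) ^ 2) * hθ2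
  refine split_of_surj hR Q e ho ha (even.lift Q (evHom Q φ hφ)) ?_
  set F := even.lift Q (evHom Q φ hφ) with hF
  have hFι : ∀ v w, φ v * (φ w).adjugate ∈ F.range := fun v w =>
    ⟨(even.ι Q).bilin v w, by
      change F _ = _
      rw [hF, even.lift_ι]; rfl⟩
  have hmem : ∀ v, φ v ∈ F.range := fun v => by
    have := hFι v (e 0)
    rwa [p0, Matrix.adjugate_one, mul_one] at this
  have m1 := hmem (e 1)
  have m2 := hmem (e 2)
  have m3 := hmem (e 3)
  rw [p1] at m1
  rw [p2] at m2
  rw [p3] at m3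
  have ha2 := ha 2
  have h22 : algebraMap K R (⅟(2 : K)) * 2 = 1 := by
    rw [← map_ofNat (algebraMap K R) 2, ← map_mul, invOf_mul_self, map_one]
  have h22' : 2 * algebraMap K R (⅟(2 : K)) = 1 := by rw [mul_comm]; exact h22
  have haa : algebraMap K R (Q (e 2))⁻¹ * algebraMap K R (Q (e 2)) = 1 := by
    rw [← map_mul, inv_mul_cancel₀ ha2, map_one]
  have E11 : !![(1 : R), 0; 0, 0] ∈ F.range := by
    have := F.range.smul_mem (F.range.add_mem F.range.one_mem m1) (⅟(2 : K))
    convert this using 1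
    ext i j; fin_cases i <;> fin_cases j <;> simp
    rw [Algebra.smul_def, ← invOf_eq_inv]
    linear_combination -h22
  have E22 : !![(0 : R), 0; 0, 1] ∈ F.range := by
    have := F.range.sub_mem F.range.one_mem E11
    convert this using 1
    ext i j; fin_cases i <;> fin_cases j <;> simp
  have E21 : !![(0 : R), 0; 1, 0] ∈ F.range := by
    have := F.range.mul_mem E22 m2
    convert this using 1
    ext i j; fin_cases i <;> fin_cases j <;> simp
  have E12 : !![(0 : R), 1; 0, 0] ∈ F.range := by
    have := F.range.smul_mem (F.range.mul_mem E11 m2) (-(Q (e 2))⁻¹ : K)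
    convert this using 1
    ext i j; fin_cases i <;> fin_cases j <;> simp
    rw [Algebra.smul_def, haa]
  have T22 : !![(0 : R), 0; 0, -θ] ∈ F.range := by
    have := F.range.mul_mem (F.range.mul_mem E22 m3) E12
    convert this using 1
    ext i j; fin_cases i <;> fin_cases j <;> simp
  have T11 : !![-θ, 0; 0, 0] ∈ F.range := by
    have := F.range.mul_mem (F.range.mul_mem E12 T22) E21
    convert this using 1
    ext i j; fin_cases i <;> fin_cases j <;> simp
  have hsc : ∀ l : R, algebraMap R (Matrix (Fin 2) (Fin 2) R) l ∈ F.range := by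
    intro l
    have hle : Algebra.adjoin K {θ} ≤
        F.range.comap (IsScalarTower.toAlgHom K R (Matrix (Fin 2) (Fin 2) R)) := by
      rw [Algebra.adjoin_le_iff, Set.singleton_subset_iff]
      change algebraMap R (Matrix (Fin 2) (Fin 2) R) θ ∈ F.range
      have := F.range.neg_mem (F.range.add_mem T11 T22)
      convert this using 1
      ext i j; fin_cases i <;> fin_cases j <;> simp [Matrix.algebraMap_matrix_apply]
    rw [hθ] at hle
    exact hle (Algebra.mem_top (x := l))
  intro M
  have : M = algebraMap R _ (M 0 0) * !![(1 : R), 0; 0, 0] +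
      algebraMap R _ (M 0 1) * !![(0 : R), 1; 0, 0] +
      algebraMap R _ (M 1 0) * !![(0 : R), 0; 1, 0] +
      algebraMap R _ (M 1 1) * !![(0 : R), 0; 0, 1] := by
    simp only [← Algebra.smul_def]
    ext i j; fin_cases i <;> fin_cases j <;> simp
  have hM : M ∈ F.range := by
    rw [this]
    exact add_mem (add_mem (add_mem (mul_mem (hsc _) E11) (mul_mem (hsc _) E12))
      (mul_mem (hsc _) E21)) (mul_mem (hsc _) E22)
  exact hM

end Lin

theorem isotropic_iff_evenClifford_split
    {K : Type*} [Field K] [Invertible (2 : K)]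
    (G : Matrix (Fin 4) (Fin 4) K) (hsymm : Gᵀ = G)
    (hnonsquare : ¬ IsSquare G.det) :
    (∃ v : Fin 4 → K, v ≠ 0 ∧ G.toQuadraticMap' v = 0) ↔
      Nonempty (↥(CliffordAlgebra.even G.toQuadraticMap') ≃ₐ[K]
        Matrix (Fin 2) (Fin 2) (AdjoinRoot (X ^ 2 - C G.det))) := by
  have two : (2 : K) ≠ 0 := Invertible.ne_zero 2
  set B := Matrix.toBilin' G with hBdef
  set Q : QuadraticForm K (Fin 4 → K) := G.toQuadraticMap' with hQdef
  have hQ : ∀ v, Q v = B v v := fun v => rfl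
  have hB : ∀ x y, B x y = B y x := fun x y => by
    rw [hBdef, Matrix.toBilin'_apply', Matrix.toBilin'_apply', Matrix.dotProduct_mulVec,
      ← Matrix.mulVec_transpose, hsymm, dotProduct_comm]
  have hpol : ∀ x y, QuadraticMap.polar Q x y = 2 * B x y := fun x y => by
    simp only [QuadraticMap.polar, hQ, map_add, LinearMap.add_apply, hB y x]
    ring
  have hiso : ∀ x y, B x y = 0 → Q.IsOrtho x y := fun x y h => by
    rw [QuadraticMap.isOrtho_def]
    simp only [hQ, map_add, LinearMap.add_apply, hB y x, h]
    ring
  have hd : G.det ≠ 0 := fun h => hnonsquare (h ▸ IsSquare.zero)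
  have hV : Module.finrank K (Fin 4 → K) = 4 := by simp
  have hane : ∀ e : Module.Basis (Fin 4) K (Fin 4 → K),
      (∀ i j, i ≠ j → B (e i) (e j) = 0) → ∀ i, Q (e i) ≠ 0 := by
    intro e he i
    obtain ⟨s, hs, h⟩ := gram_det G e he
    have : s ^ 2 * G.det ≠ 0 := mul_ne_zero (pow_ne_zero 2 hs) hd
    rw [← h] at this
    simp only [mul_ne_zero_iff] at this
    obtain ⟨⟨⟨h0, h1⟩, h2⟩, h3⟩ := this
    fin_cases i <;> assumption
  have hirr : Irreducible (X ^ 2 - C G.det : K[X]) := by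
    refine X_pow_sub_C_irreducible_of_prime Nat.prime_two fun b hb => hnonsquare ⟨b, ?_⟩
    rw [← hb, sq]
  have hne : (X ^ 2 - C G.det : K[X]) ≠ 0 := hirr.ne_zero
  constructor
  · rintro ⟨u, hu, hQu⟩
    obtain ⟨w, hw⟩ : ∃ w, B u w ≠ 0 := by
      by_contra! h
      have h1 : G *ᵥ u = 0 := by
        apply dotProduct_eq_zero
        intro w
        have := h w
        rw [hB, hBdef, Matrix.toBilin'_apply', dotProduct_comm] at this
        exact this
      exact hu (Matrix.eq_zero_of_mulVec_eq_zero hd h1)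
    rw [hQ] at hQu
    obtain ⟨w1, hw1⟩ : ∃ w1, 2 * B u w1 = 1 := ⟨(2 * B u w)⁻¹ • w, by
      simp only [map_smul, smul_eq_mul]; field_simp⟩
    obtain ⟨w2, hw2, hw3⟩ : ∃ w2, 2 * B u w2 = 1 ∧ B w2 w2 = 0 := ⟨w1 - (B w1 w1) • u, by
        simp [hQu, hw1], by
        simp [hQu, hB w1 u]; linear_combination (-B w1 w1) * hw1⟩
    obtain ⟨e, e0, e1, he⟩ := complete_basis hV B hB (u + w2) (u - w2)
      (by simp [hQu, hw3, hB w2 u])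
      (by simp [hQu, hw3, hB w2 u, ← two_mul, hw2])
      (by
        have : B (u - w2) (u - w2) = -1 := by
          simp [hQu, hw3, hB w2 u]; linear_combination -hw2
        rw [this]; simp)
    have ha := hane e he
    have q0 : Q (e 0) = 1 := by
      rw [e0, hQ]; simp [hQu, hw3, hB w2 u, ← two_mul, hw2]
    have q1 : Q (e 1) = -1 := by
      rw [e1, hQ]; simp [hQu, hw3, hB w2 u]; linear_combination -hw2
    obtain ⟨s, hs, hdet⟩ := gram_det G e he
    simp only [← hBdef, ← hQ, q0, q1] at hdet
    have a2 := ha 2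
    let L := AdjoinRoot (X ^ 2 - C G.det : K[X])
    let pb : PowerBasis K L := AdjoinRoot.powerBasis hne
    have : FiniteDimensional K L := pb.finite
    have hroot : (AdjoinRoot.root (X ^ 2 - C G.det : K[X])) ^ 2 = algebraMap K L G.det := by
      have := AdjoinRoot.eval₂_root (X ^ 2 - C G.det : K[X])
      simp only [eval₂_sub, eval₂_pow, eval₂_X, eval₂_C] at this
      exact sub_eq_zero.mp this
    refine split_of_special (R := L) ?_ ((s / Q (e 2)) • AdjoinRoot.root (X ^ 2 - C G.det : K[X]))
      ?_ B Q hQ e he (fun i j hij => hiso _ _ (he i j hij)) ha q0 q1 ?_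
    · rw [pb.finrank, AdjoinRoot.powerBasis_dim, natDegree_X_pow_sub_C]
    · rw [eq_top_iff, ← AdjoinRoot.adjoinRoot_eq_top, Algebra.adjoin_le_iff,
        Set.singleton_subset_iff]
      have h := Subalgebra.smul_mem _ (Algebra.self_mem_adjoin_singleton K
        ((s / Q (e 2)) • AdjoinRoot.root (X ^ 2 - C G.det : K[X]))) (s / Q (e 2))⁻¹
      rwa [smul_smul, inv_mul_cancel₀ (div_ne_zero hs a2), one_smul] at h
    · rw [Algebra.smul_def, mul_pow, hroot, ← map_pow, ← map_mul, ← map_mul, ← map_neg]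
      congr 1
      field_simp
      linear_combination -hdet
  · rintro ⟨f⟩
    obtain ⟨e, he⟩ := exists_orth4 hV B hB
    have ha := hane e he
    obtain ⟨s, hs, hdet⟩ := gram_det G e he
    simp only [← hBdef, ← hQ] at hdet
    have : Fact (Irreducible (X ^ 2 - C G.det : K[X])) := ⟨hirr⟩
    obtain ⟨v, w, hvw, h1, h2⟩ := exists_of_split Q e
      (fun i j hij => hiso _ _ (he i j hij)) ha (by
        rw [hdet]
        rintro ⟨r, hr⟩
        exact hnonsquare ⟨r / s, by field_simp; linear_combination hr⟩) f
    rw [hdet] at h1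
    rw [hpol] at h2
    have h2' : B v w = 0 := (mul_eq_zero.mp h2).resolve_left two
    by_cases hw : Q w = 0
    · rw [hw, mul_zero, add_zero] at h1
      rcases hvw with h | h
      · exact ⟨v, h, h1⟩
      · exact ⟨w, h, hw⟩
    have hv : Q v = -(s ^ 2 * G.det * Q w) := by linear_combination h1
    have hv0 : Q v ≠ 0 := by
      rw [hv]; exact neg_ne_zero.mpr (mul_ne_zero (mul_ne_zero (pow_ne_zero 2 hs) hd) hw)
    obtain ⟨b, b0, b1, hb⟩ := complete_basis hV B hB v w h2' hv0 hw
    have hba := hane b hb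
    obtain ⟨t, ht, hdet'⟩ := gram_det G b hb
    simp only [← hBdef, ← hQ, b0, b1, hv] at hdet'
    have hsw : s * Q w ≠ 0 := mul_ne_zero hs hw
    have hr : Q (b 2) * Q (b 3) = -(t / (s * Q w)) ^ 2 := by
      have : Q (b 2) * Q (b 3) * (s * Q w) ^ 2 = - t ^ 2 := by
        apply mul_right_cancel₀ hd
        linear_combination -hdet'
      rw [div_pow, ← neg_div, eq_div_iff (pow_ne_zero 2 hsw), this]
    set r := t / (s * Q w)
    refine ⟨r • b 2 + Q (b 2) • b 3, ?_, ?_⟩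
    · intro h
      have := congrArg (B (b 3)) h
      simp only [map_add, map_smul, map_zero, hb 3 2 (by decide), smul_eq_mul, mul_zero,
        zero_add, ← hQ, mul_eq_zero] at this
      exact this.elim (hba 2) (hba 3)
    · rw [hQ]
      simp only [map_add, map_smul, LinearMap.add_apply, LinearMap.smul_apply, smul_eq_mul,
        hb 3 2 (by decide), hb 2 3 (by decide), ← hQ]
      linear_combination Q (b 2) * hr
end
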